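/- arXiv:2605.22173 — 2 statements merged into one kernel-verified Lean document; each statement's English description precedes it below -/
import Mathlib

section
/- Let d ≥ 3 be an integer, q a prime power, F a finite field with q elements, Γ any group, I = {i₀ < i₁ < i₂} ⊆ {1,…,d−1}, and let s be a (possibly empty) chain of F-linear subspaces of F^d whose dimensions are pairwise distinct and lie in {1,…,d−1}∖I. Assume: (1) 2·i₀ ≤ i₁, or some V ∈ s has i₀ < dim(V) < i₁; and (2) 2·i₁ − i₀ ≤ i₂, or some V ∈ s has i₀ < dim(V) < i₁ and 2·i₁ − dim(V) ≤ i₂, or some W ∈ s has i₁ < dim(W) < i₂. Let L be the two-dimensional simplicial complex whose vertices are the subspaces U of F^d with dim(U) ∈ I and s ∪ {U} a chain, and whose faces are the sets t of such subspaces with s ∪ t a chain; its maximal faces are the triangles {U₀,U₁,U₂} with dim(U_j) = i_j. Let π₂ be the uniform distribution on these triangles and let π₁ sample a triangle from π₂ and then a uniformly random 2-element subset of it. Then for every Γ-valued 1-cochain f on L there exists g from the vertices of L to Γ such that (1/13)·Pr_{{u,v}∼π₁}[f(u,v) ≠ g(u)·g(v)⁻¹] ≤ Pr_{{u,v,w}∼π₂}[δf(u,v,w)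 ≠ 1]. -/
open Finset
open scoped Classical

noncomputable instance (F : Type) [Field F] [Fintype F] (n : ℕ) :
    Fintype (Submodule F (Fin n → F)) :=
  Fintype.ofInjective (fun W => (W : Set (Fin n → F)))
    fun _ _ h => SetLike.coe_injective h

/-- The triangles of the projection `L` of the link of `s` to the three dimensions
`i₀ < i₁ < i₂`, listed as triples ordered by dimension: triples `(U₀,U₁,U₂)` of subspaces
of dimensions `i₀, i₁, i₂` such that `s ∪ {U₀,U₁,U₂}` is a chain. -/
noncomputable def linkTriangles (F : Type) [Field F] [Fintype F] (n i₀ i₁ i₂ : ℕ)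
    (s : Finset (Submodule F (Fin n → F))) :
    Finset (Submodule F (Fin n → F) × Submodule F (Fin n → F) × Submodule F (Fin n → F)) :=
  Finset.univ.filter fun p =>
    Module.finrank F p.1 = i₀ ∧ Module.finrank F p.2.1 = i₁ ∧
      Module.finrank F p.2.2 = i₂ ∧
      IsChain (· ≤ ·)
        ((insert p.1 (insert p.2.1 (insert p.2.2 s)) : Finset (Submodule F (Fin n → F))) :
          Set (Submodule F (Fin n → F)))

/-- `Pr_{{u,v,w} ∼ π₂}[δf(u,v,w) ≠ 1]`, where `π₂` is the uniform distribution on the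
triangles of `L`. -/
noncomputable def triWt (F : Type) [Field F] [Fintype F] (n i₀ i₁ i₂ : ℕ)
    (s : Finset (Submodule F (Fin n → F))) (Γ : Type) [Group Γ]
    (f : Submodule F (Fin n → F) → Submodule F (Fin n → F) → Γ) : ℝ :=
  (∑ p ∈ linkTriangles F n i₀ i₁ i₂ s,
      if f p.1 p.2.1 * f p.2.1 p.2.2 * f p.2.2 p.1 = 1 then (0 : ℝ) else 1) /
    ((linkTriangles F n i₀ i₁ i₂ s).card : ℝ)

/-- `Pr_{{u,v} ∼ π₁}[f(u,v) ≠ g(u)·g(v)⁻¹]`, where `π₁` samples a uniform triangle of `L`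
and then a uniformly random 2-element subset of it. -/
noncomputable def triDist (F : Type) [Field F] [Fintype F] (n i₀ i₁ i₂ : ℕ)
    (s : Finset (Submodule F (Fin n → F))) (Γ : Type) [Group Γ]
    (f : Submodule F (Fin n → F) → Submodule F (Fin n → F) → Γ)
    (g : Submodule F (Fin n → F) → Γ) : ℝ :=
  (∑ p ∈ linkTriangles F n i₀ i₁ i₂ s,
      ((if f p.1 p.2.1 = g p.1 * (g p.2.1)⁻¹ then (0 : ℝ) else 1) +
        (if f p.1 p.2.2 = g p.1 * (g p.2.2)⁻¹ then (0 : ℝ) else 1) +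
        (if f p.2.1 p.2.2 = g p.2.1 * (g p.2.2)⁻¹ then (0 : ℝ) else 1)) / 3) /
    ((linkTriangles F n i₀ i₁ i₂ s).card : ℝ)


lemma s8_flag_step {F : Type} [Field F] {d : ℕ} (M : Flag (Submodule F (Fin d → F))) (k : ℕ)
    (hk : k ≤ d) : ∃ P ∈ M, Module.finrank F P = k := by
  induction k with
  | zero => exact ⟨⊥, M.bot_mem, finrank_bot F _⟩
  | succ k ih =>
    obtain ⟨P, hPM, hP⟩ := ih (by omega)
    have hex : ∃ n, ∃ Q ∈ M, k < Module.finrank F Q ∧ Module.finrank F Q = n :=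
      ⟨_, ⊤, M.top_mem, by simp [finrank_top]; omega, rfl⟩
    obtain ⟨Q, hQM, hQk, hQn⟩ := Nat.find_spec hex
    have hmin : ∀ V ∈ M, k < Module.finrank F V → Q ≤ V := by
      intro V hV hkV
      have h1 : Nat.find hex ≤ Module.finrank F V := Nat.find_min' hex ⟨V, hV, hkV, rfl⟩
      rcases M.le_or_le hQM hV with h | h
      · exact h
      · exact (Submodule.eq_of_le_of_finrank_le h (by omega)).ge
    have hlow : ∀ V ∈ M, Module.finrank F V ≤ k → V ≤ P := by
      intro V hV hkV
      rcases M.le_or_le hV hPM with h | h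
      · exact h
      · exact (Submodule.eq_of_le_of_finrank_le h (by omega)).ge
    have hPQ : P ≤ Q := by
      rcases M.le_or_le hPM hQM with h | h
      · exact h
      · have := Submodule.finrank_mono h
        omega
    have hne : ¬ Q ≤ P := by
      intro h
      have := Submodule.finrank_mono h
      omega
    obtain ⟨x, hxQ, hxP⟩ := SetLike.not_le_iff_exists.1 hne
    have hR1 : Module.finrank F ↥(P ⊔ F ∙ x) ≤ k + 1 := by
      have h1 := Submodule.finrank_sup_add_finrank_inf_eq P (F ∙ x)
      have h2 := finrank_span_le_card (R := F) ({x} : Set (Fin d → F))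
      simp at h2
      omega
    have hR2 : k < Module.finrank F ↥(P ⊔ F ∙ x) := by
      rw [← hP]
      apply Submodule.finrank_lt_finrank_of_lt
      refine lt_of_le_of_ne le_sup_left ?_
      intro h
      apply hxP
      rw [h]
      exact Submodule.mem_sup_right (Submodule.mem_span_singleton_self x)
    have hRQ : P ⊔ F ∙ x ≤ Q := sup_le hPQ (by simpa using hxQ)
    refine ⟨P ⊔ F ∙ x, ?_, by omega⟩
    rw [Flag.mem_iff_forall_le_or_ge]
    intro V hV
    by_cases h : Module.finrank F V ≤ k
    · exact Or.inr ((hlow V hV h).trans le_sup_left)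
    · exact Or.inl (hRQ.trans (hmin V hV (by omega)))

lemma s8_fullflag {F : Type} [Field F] {d : ℕ} (c : Set (Submodule F (Fin d → F)))
    (hc : IsChain (· ≤ ·) c) :
    ∃ X : ℕ → Submodule F (Fin d → F), Monotone X ∧ (∀ k ≤ d, Module.finrank F (X k) = k) ∧
      ∀ V ∈ c, X (Module.finrank F V) = V := by
  obtain ⟨M, hM⟩ := hc.exists_subset_flag
  have h : ∀ k, ∃ P ∈ M, Module.finrank F P = min k d := fun k => s8_flag_step M _ (min_le_right _ _)
  choose X hX hXk using h
  refine ⟨X, ?_, ?_, ?_⟩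
  · intro j k hjk
    rcases M.le_or_le (hX j) (hX k) with h | h
    · exact h
    · refine (Submodule.eq_of_le_of_finrank_le h ?_).ge
      rw [hXk, hXk]; omega
  · intro k hk
    rw [hXk]; omega
  · intro V hV
    have hd : Module.finrank F V ≤ d := by
      have := Submodule.finrank_le V
      simpa using this
    have h1 := hXk (Module.finrank F V)
    rcases M.le_or_le (hX (Module.finrank F V)) (hM hV) with h | h
    · exact (Submodule.eq_of_le_of_finrank_le h (by omega))
    · exact (Submodule.eq_of_le_of_finrank_le h (by omega)).symm

lemma s8_basis {F : Type} [Field F] {d : ℕ} (X : ℕ → Submodule F (Fin d → F)) (hX : Monotone X)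
    (hXk : ∀ k ≤ d, Module.finrank F (X k) = k) :
    ∃ b : Module.Basis (Fin d) F (Fin d → F),
      ∀ k ≤ d, X k = Submodule.span F (Set.image b {j | j.val < k}) := by
  have h : ∀ j : Fin d, ∃ x ∈ X (j.val + 1), x ∉ X j.val := by
    intro j
    apply SetLike.not_le_iff_exists.1
    intro h
    have := Submodule.finrank_mono h
    rw [hXk _ (by omega), hXk _ (by omega)] at this
    omega
  choose x hx hx' using h
  have hspan : ∀ k ≤ d, X k = Submodule.span F (Set.image x {j | j.val < k}) := by
    intro k
    induction k with
    | zero =>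
      intro _
      have := hXk 0 (by omega)
      simpa using Submodule.finrank_eq_zero.1 this
    | succ k ih =>
      intro hk
      have e : ({j : Fin d | j.val < k + 1}) = insert ⟨k, by omega⟩ {j : Fin d | j.val < k} := by
        ext j
        simp [Fin.ext_iff]
        omega
      rw [e, Set.image_insert_eq, Submodule.span_insert, ← ih (by omega)]
      symm
      apply Submodule.eq_of_le_of_finrank_le
      · refine sup_le ?_ (hX (by omega))
        simpa using hx ⟨k, by omega⟩
      · rw [hXk _ hk]
        have : X k < (F ∙ x ⟨k, by omega⟩) ⊔ X k := by
          refine lt_of_le_of_ne le_sup_right ?_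
          intro h
          apply hx' ⟨k, by omega⟩
          show _ ∈ X k
          rw [h]
          exact Submodule.mem_sup_left (Submodule.mem_span_singleton_self _)
        have := Submodule.finrank_lt_finrank_of_lt this
        rw [hXk k (by omega)] at this
        exact this
  have htop : ⊤ ≤ Submodule.span F (Set.range x) := by
    have h1 := hspan d le_rfl
    have h2 : X d = ⊤ := Submodule.eq_top_of_finrank_eq (by rw [hXk d le_rfl]; simp)
    have h3 : ({j : Fin d | j.val < d}) = Set.univ := by ext j; simp
    rw [h3, Set.image_univ, h2] at h1
    exact h1.le
  refine ⟨basisOfTopLeSpanOfCardEqFinrank x htop (by simp), ?_⟩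
  simpa using hspan

lemma s8_equiv {F : Type} [Field F] {d : ℕ} (X Y : ℕ → Submodule F (Fin d → F))
    (hX : Monotone X) (hXk : ∀ k ≤ d, Module.finrank F (X k) = k)
    (hY : Monotone Y) (hYk : ∀ k ≤ d, Module.finrank F (Y k) = k) :
    ∃ e : (Fin d → F) ≃ₗ[F] (Fin d → F),
      ∀ k ≤ d, (X k).map (e : (Fin d → F) →ₗ[F] (Fin d → F)) = Y k := by
  obtain ⟨b, hb⟩ := s8_basis X hX hXk
  obtain ⟨c, hc⟩ := s8_basis Y hY hYk
  refine ⟨b.equiv c (Equiv.refl _), ?_⟩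
  intro k hk
  rw [hb k hk, hc k hk, Submodule.map_span, ← Set.image_comp]
  congr 2
  ext j
  simp

/-- `U` is comparable with every member of `s`. -/
def S8Compat {F : Type} [Field F] {d : ℕ} (s : Finset (Submodule F (Fin d → F)))
    (U : Submodule F (Fin d → F)) : Prop := ∀ V ∈ s, V ≤ U ∨ U ≤ V

lemma s8_chain_insert {F : Type} [Field F] {d : ℕ} (s : Set (Submodule F (Fin d → F)))
    (U : Submodule F (Fin d → F)) :
    IsChain (· ≤ ·) (insert U s) ↔ IsChain (· ≤ ·) s ∧ ∀ V ∈ s, V ≤ U ∨ U ≤ V := by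
  constructor
  · intro h
    refine ⟨h.mono (Set.subset_insert _ _), fun V hV => ?_⟩
    exact h.total (Set.mem_insert_of_mem _ hV) (Set.mem_insert _ _)
  · rintro ⟨h, h'⟩
    exact h.insert fun V hV _ => (h' V hV).symm

lemma s8_mem {F : Type} [Field F] [Fintype F] {d i₀ i₁ i₂ : ℕ}
    {s : Finset (Submodule F (Fin d → F))} (h01 : i₀ < i₁) (h12 : i₁ < i₂)
    (hchain : IsChain (· ≤ ·) (s : Set (Submodule F (Fin d → F))))
    (U₀ U₁ U₂ : Submodule F (Fin d → F)) :
    (U₀, U₁, U₂) ∈ linkTriangles F d i₀ i₁ i₂ s ↔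
      Module.finrank F U₀ = i₀ ∧ Module.finrank F U₁ = i₁ ∧ Module.finrank F U₂ = i₂ ∧
      U₀ ≤ U₁ ∧ U₁ ≤ U₂ ∧ S8Compat s U₀ ∧ S8Compat s U₁ ∧ S8Compat s U₂ := by
  simp only [linkTriangles, Finset.mem_filter, Finset.mem_univ, true_and, Finset.coe_insert,
    s8_chain_insert, Set.forall_mem_insert, S8Compat, Finset.mem_coe]
  constructor
  · rintro ⟨r0, r1, r2, ⟨⟨-, c2⟩, c12, c1⟩, c01, c02, c0⟩
    refine ⟨r0, r1, r2, ?_, ?_, c0, c1, c2⟩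
    · rcases c01 with h | h
      · have := Submodule.finrank_mono h
        omega
      · exact h
    · rcases c12 with h | h
      · have := Submodule.finrank_mono h
        omega
      · exact h
  · rintro ⟨r0, r1, r2, l01, l12, c0, c1, c2⟩
    exact ⟨r0, r1, r2, ⟨⟨hchain, c2⟩, Or.inr l12, c1⟩, Or.inr l01, Or.inr (l01.trans l12), c0⟩

/-- Index used to push `U` up along the flag `X` to dimension `m`. -/
noncomputable def s8k {F : Type} [Field F] {d : ℕ} (X : ℕ → Submodule F (Fin d → F)) (m : ℕ)
    (U : Submodule F (Fin d → F)) : ℕ :=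
  Nat.findGreatest (fun k => Module.finrank F ↥(U ⊔ X k) ≤ m) d

lemma s8k_le {F : Type} [Field F] {d : ℕ} (X : ℕ → Submodule F (Fin d → F)) (m : ℕ)
    (U : Submodule F (Fin d → F)) (j : ℕ) (hj : j ≤ d) (h : Module.finrank F ↥(U ⊔ X j) ≤ m) :
    j ≤ s8k X m U := Nat.le_findGreatest hj h

lemma s8_push_rank {F : Type} [Field F] {d : ℕ} (X : ℕ → Submodule F (Fin d → F))
    (hX : Monotone X) (hXk : ∀ k ≤ d, Module.finrank F (X k) = k) (m : ℕ)
    (U : Submodule F (Fin d → F)) (hU : Module.finrank F U ≤ m) (hm : m < d) :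
    Module.finrank F ↥(U ⊔ X (s8k X m U)) = m := by
  have h0 : Module.finrank F ↥(U ⊔ X 0) ≤ m := by
    have : X 0 = ⊥ := Submodule.finrank_eq_zero.1 (hXk 0 (by omega))
    rw [this, sup_bot_eq]; exact hU
  have h1 : Module.finrank F ↥(U ⊔ X (s8k X m U)) ≤ m :=
    Nat.findGreatest_spec (P := fun k => Module.finrank F ↥(U ⊔ X k) ≤ m) (Nat.zero_le d) h0
  have hle : s8k X m U ≤ d := Nat.findGreatest_le d
  have hlt : s8k X m U < d := by
    refine lt_of_le_of_ne hle ?_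
    intro h
    have h2 : Module.finrank F (X (s8k X m U)) ≤ Module.finrank F ↥(U ⊔ X (s8k X m U)) :=
      Submodule.finrank_mono le_sup_right
    rw [hXk _ hle] at h2
    omega
  refine le_antisymm h1 ?_
  by_contra hcon
  push Not at hcon
  have h3 : Module.finrank F ↥(U ⊔ X (s8k X m U + 1)) ≤ m := by
    have e := Submodule.finrank_sup_add_finrank_inf_eq (U ⊔ X (s8k X m U)) (X (s8k X m U + 1))
    have e2 : Module.finrank F (X (s8k X m U)) ≤
        Module.finrank F ↥((U ⊔ X (s8k X m U)) ⊓ (X (s8k X m U + 1))) :=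
      Submodule.finrank_mono (le_inf le_sup_right (hX (by omega)))
    rw [sup_assoc, sup_eq_right.2 (hX (by omega : s8k X m U ≤ s8k X m U + 1))] at e
    rw [hXk _ hle] at e2
    rw [hXk _ (by omega)] at e
    omega
  have := s8k_le X m U _ (by omega) h3
  omega

lemma s8_push_compat {F : Type} [Field F] {d : ℕ} (X : ℕ → Submodule F (Fin d → F))
    (hX : Monotone X) (hXk : ∀ k ≤ d, Module.finrank F (X k) = k) (m : ℕ)
    (s : Finset (Submodule F (Fin d → F))) (hs : ∀ V ∈ s, X (Module.finrank F V) = V)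
    (U : Submodule F (Fin d → F)) (hU : Module.finrank F U ≤ m) (hm : m < d)
    (hc : S8Compat s U) : S8Compat s (U ⊔ X (s8k X m U)) := by
  intro V hV
  have hVd : Module.finrank F V ≤ d := by simpa using Submodule.finrank_le V
  rcases hc V hV with h | h
  · exact Or.inl (h.trans le_sup_left)
  · by_cases hj : Module.finrank F V ≤ m
    · left
      have : Module.finrank F V ≤ s8k X m U := by
        apply s8k_le _ _ _ _ hVd
        rw [hs V hV, sup_eq_right.2 h]
        exact hj
      calc V = X (Module.finrank F V) := (hs V hV).symm
        _ ≤ X (s8k X m U) := hX this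
        _ ≤ _ := le_sup_right
    · right
      refine sup_le h ?_
      have h2 : Module.finrank F (X (s8k X m U)) ≤ Module.finrank F ↥(U ⊔ X (s8k X m U)) :=
        Submodule.finrank_mono le_sup_right
      rw [s8_push_rank X hX hXk m U hU hm, hXk (s8k X m U) (Nat.findGreatest_le d)] at h2
      calc X (s8k X m U) ≤ X (Module.finrank F V) := hX (by omega)
        _ = V := hs V hV

lemma s8_cone (d : ℕ) (F : Type) [Field F] [Fintype F] (Γ : Type) [Group Γ]
    (i₀ i₁ i₂ : ℕ) (h01 : i₀ < i₁) (h12 : i₁ < i₂) (hhigh : i₂ < d)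
    (s : Finset (Submodule F (Fin d → F)))
    (hchain : IsChain (· ≤ ·) (s : Set (Submodule F (Fin d → F))))
    (hcond1 : 2 * i₀ ≤ i₁ ∨
      ∃ V ∈ s, i₀ < Module.finrank F V ∧ Module.finrank F V < i₁)
    (hcond2 : 2 * i₁ ≤ i₂ + i₀ ∨
      (∃ V ∈ s, i₀ < Module.finrank F V ∧ Module.finrank F V < i₁ ∧
        2 * i₁ ≤ i₂ + Module.finrank F V) ∨
      ∃ W ∈ s, i₁ < Module.finrank F W ∧ Module.finrank F W < i₂) :
    ∃ L : (Submodule F (Fin d → F) × Submodule F (Fin d → F) × Submodule F (Fin d → F)) →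
        List (Submodule F (Fin d → F) × Submodule F (Fin d → F) × Submodule F (Fin d → F)),
      (∀ p ∈ linkTriangles F d i₀ i₁ i₂ s, (L p).length ≤ 13 ∧
        ∀ t ∈ L p, t ∈ linkTriangles F d i₀ i₁ i₂ s) ∧
      ∀ f : Submodule F (Fin d → F) → Submodule F (Fin d → F) → Γ,
        ∃ g : Submodule F (Fin d → F) → Γ, ∀ p ∈ linkTriangles F d i₀ i₁ i₂ s,
          (∀ t ∈ L p, f t.1 t.2.1 * f t.2.1 t.2.2 = f t.1 t.2.2) →
          f p.1 p.2.1 = g p.1 * (g p.2.1)⁻¹ ∧ f p.1 p.2.2 = g p.1 * (g p.2.2)⁻¹ ∧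
          f p.2.1 p.2.2 = g p.2.1 * (g p.2.2)⁻¹ := by
  obtain ⟨X, hX, hXk, hXs⟩ := s8_fullflag (s : Set (Submodule F (Fin d → F))) hchain
  simp only [Finset.mem_coe] at hXs
  -- members of a flag through `s` are compatible
  have flagc : ∀ Y : ℕ → Submodule F (Fin d → F), Monotone Y →
      (∀ V ∈ s, Y (Module.finrank F V) = V) → ∀ k, S8Compat s (Y k) := by
    intro Y hY hYs k V hV
    rcases le_total (Module.finrank F V) k with h | h
    · left; rw [← hYs V hV]; exact hY h
    · right; rw [← hYs V hV]; exact hY h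
  -- compatible spaces and large/small members of `s`
  have above : ∀ U V : Submodule F (Fin d → F), S8Compat s U → V ∈ s →
      Module.finrank F U < Module.finrank F V → U ≤ V := by
    intro U V hU hV hlt
    rcases hU V hV with h | h
    · have := Submodule.finrank_mono h
      omega
    · exact h
  have below : ∀ U V : Submodule F (Fin d → F), S8Compat s U → V ∈ s →
      Module.finrank F V < Module.finrank F U → V ≤ U := by
    intro U V hU hV hlt
    rcases hU V hV with h | h
    · exact h
    · have := Submodule.finrank_mono h
      omega
  -- sums of two compatible `i₀`-dimensional spaces
  have sum0 : ∀ U W : Submodule F (Fin d → F), S8Compat s U → S8Compat s W →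
      Module.finrank F U = i₀ → Module.finrank F W = i₀ →
      Module.finrank F ↥(U ⊔ W) ≤ i₁ := by
    intro U W hU hW rU rW
    rcases hcond1 with h | ⟨V, hV, h1, h2⟩
    · have := Submodule.finrank_sup_add_finrank_inf_eq U W
      omega
    · have : U ⊔ W ≤ V :=
        sup_le (above U V hU hV (by omega)) (above W V hW hV (by omega))
      have := Submodule.finrank_mono this
      omega
  have hW : ∀ U₂ : Submodule F (Fin d → F), ∃ W₀ : Submodule F (Fin d → F),
      S8Compat s U₂ → Module.finrank F U₂ = i₂ →
        S8Compat s W₀ ∧ Module.finrank F W₀ = i₀ ∧ W₀ ≤ U₂ := by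
    intro U₂
    by_cases hc : S8Compat s U₂
    · obtain ⟨Y, hY, hYk, hYs⟩ := s8_fullflag (insert U₂ (s : Set (Submodule F (Fin d → F))))
        ((s8_chain_insert _ _).2 ⟨hchain, hc⟩)
      refine ⟨Y i₀, fun _ r => ⟨flagc Y hY (fun V hV => hYs V (Or.inr hV)) _,
        hYk _ (by omega), ?_⟩⟩
      rw [← hYs U₂ (Or.inl rfl), r]
      exact hY (by omega)
    · exact ⟨⊥, fun h => absurd h hc⟩
  choose W hWp using hW
  have hZ : ∀ U₀ W₀ U₂ : Submodule F (Fin d → F), ∃ Z : Submodule F (Fin d → F),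
      S8Compat s U₀ → S8Compat s W₀ → S8Compat s U₂ → Module.finrank F U₀ = i₀ →
      Module.finrank F W₀ = i₀ → Module.finrank F U₂ = i₂ → U₀ ≤ U₂ → W₀ ≤ U₂ →
        S8Compat s Z ∧ Module.finrank F Z = i₁ ∧ U₀ ≤ Z ∧ W₀ ≤ Z ∧ Z ≤ U₂ := by
    intro U₀ W₀ U₂
    by_cases hc : S8Compat s U₀ ∧ S8Compat s W₀ ∧ S8Compat s U₂ ∧ U₀ ≤ U₂ ∧ W₀ ≤ U₂
    · obtain ⟨c0, c0', c2, l, l'⟩ := hc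
      have cs : S8Compat s (U₀ ⊔ W₀) := by
        intro V hV
        rcases c0 V hV with h | h
        · exact Or.inl (h.trans le_sup_left)
        rcases c0' V hV with h' | h'
        · exact Or.inl (h'.trans le_sup_right)
        · exact Or.inr (sup_le h h')
      obtain ⟨Y, hY, hYk, hYs⟩ := s8_fullflag
        (insert (U₀ ⊔ W₀) (insert U₂ (s : Set (Submodule F (Fin d → F)))))
        ((s8_chain_insert _ _).2 ⟨(s8_chain_insert _ _).2 ⟨hchain, c2⟩, by
          rintro V (rfl | hV)
          · exact Or.inr (sup_le l l')
          · exact cs V hV⟩)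
      refine ⟨Y i₁, fun _ _ _ r0 r0' r2 _ _ =>
        ⟨flagc Y hY (fun V hV => hYs V (Or.inr (Or.inr hV))) _, hYk _ (by omega), ?_⟩⟩
      have hle : U₀ ⊔ W₀ ≤ Y i₁ := by
        rw [← hYs (U₀ ⊔ W₀) (Or.inl rfl)]
        exact hY (sum0 U₀ W₀ c0 c0' r0 r0')
      refine ⟨le_sup_left.trans hle, le_sup_right.trans hle, ?_⟩
      rw [← hYs U₂ (Or.inr (Or.inl rfl)), r2]
      exact hY (by omega)
    · exact ⟨⊥, fun a b c _ _ _ e g => absurd ⟨a, b, c, e, g⟩ hc⟩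
  choose Z hZp using hZ
  obtain ⟨A, hA⟩ : ∃ A : Submodule F (Fin d → F), A = X i₀ := ⟨_, rfl⟩
  obtain ⟨V1, hV1⟩ : ∃ V1 : Submodule F (Fin d → F) → Submodule F (Fin d → F),
    ∀ U, V1 U = U ⊔ X (s8k X i₁ U) := ⟨_, fun _ => rfl⟩
  obtain ⟨V2, hV2⟩ : ∃ V2 : Submodule F (Fin d → F) → Submodule F (Fin d → F),
    ∀ U, V2 U = U ⊔ X (s8k X i₂ U) := ⟨_, fun _ => rfl⟩
  have cA : S8Compat s A := hA ▸ flagc X hX hXs i₀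
  have rA : Module.finrank F A = i₀ := hA ▸ hXk _ (by omega)
  have pV1 : ∀ U, S8Compat s U → Module.finrank F U = i₀ →
      S8Compat s (V1 U) ∧ Module.finrank F (V1 U) = i₁ ∧ U ≤ V1 U ∧ A ≤ V1 U := by
    intro U c r
    rw [hV1]
    refine ⟨s8_push_compat X hX hXk i₁ s hXs U (by omega) (by omega) c,
      s8_push_rank X hX hXk i₁ U (by omega) (by omega), le_sup_left, ?_⟩
    refine le_trans ?_ le_sup_right
    rw [hA]
    apply hX
    apply s8k_le _ _ _ _ (by omega)
    rw [← hA]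
    exact sum0 U A c cA r rA
  have pV2 : ∀ U, S8Compat s U → Module.finrank F U = i₁ →
      S8Compat s (V2 U) ∧ Module.finrank F (V2 U) = i₂ ∧ U ≤ V2 U := by
    intro U c r
    rw [hV2]
    exact ⟨s8_push_compat X hX hXk i₂ s hXs U (by omega) (by omega) c,
      s8_push_rank X hX hXk i₂ U (by omega) (by omega), le_sup_left⟩
  have pV12 : ∀ U₀ U₁, S8Compat s U₀ → Module.finrank F U₀ = i₀ → S8Compat s U₁ →
      Module.finrank F U₁ = i₁ → U₀ ≤ U₁ → V1 U₀ ≤ V2 U₁ := by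
    intro U₀ U₁ c0 r0 c1 r1 l
    obtain ⟨cV, rV, lV, -⟩ := pV1 U₀ c0 r0
    have key : Module.finrank F ↥(U₁ ⊔ V1 U₀) ≤ i₂ := by
      have e := Submodule.finrank_sup_add_finrank_inf_eq U₁ (V1 U₀)
      rcases hcond2 with h | ⟨V, hV, h1, h2, h3⟩ | ⟨V, hV, h1, h2⟩
      · have := Submodule.finrank_mono (le_inf l lV)
        omega
      · have := Submodule.finrank_mono
          (le_inf (below U₁ V c1 hV (by omega)) (below (V1 U₀) V cV hV (by omega)))
        omega
      · have := Submodule.finrank_mono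
          (sup_le (above U₁ V c1 hV (by omega)) (above (V1 U₀) V cV hV (by omega)))
        omega
    rw [hV1] at key ⊢
    rw [hV2]
    refine sup_le (l.trans le_sup_left) (le_trans ?_ le_sup_right)
    apply hX
    apply s8k_le _ _ _ _ (Nat.findGreatest_le d)
    refine le_trans (Submodule.finrank_mono ?_) key
    exact sup_le_sup_left le_sup_right _
  obtain ⟨L01, hL01⟩ : ∃ L01 : Submodule F (Fin d → F) → Submodule F (Fin d → F) →
      List (Submodule F (Fin d → F) × Submodule F (Fin d → F) × Submodule F (Fin d → F)),
      ∀ U₀ U₁, L01 U₀ U₁ = [(A, V1 U₀, V2 U₁), (U₀, V1 U₀, V2 U₁), (U₀, U₁, V2 U₁)] :=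
    ⟨_, fun _ _ => rfl⟩
  have mL01 : ∀ U₀ U₁, S8Compat s U₀ → Module.finrank F U₀ = i₀ → S8Compat s U₁ →
      Module.finrank F U₁ = i₁ → U₀ ≤ U₁ →
      ∀ t ∈ L01 U₀ U₁, t ∈ linkTriangles F d i₀ i₁ i₂ s := by
    intro U₀ U₁ c0 r0 c1 r1 l t ht
    obtain ⟨a1, a2, a3, a4⟩ := pV1 U₀ c0 r0
    obtain ⟨b1, b2, b3⟩ := pV2 U₁ c1 r1
    have e := pV12 U₀ U₁ c0 r0 c1 r1 l
    rw [hL01] at ht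
    simp only [List.mem_cons, List.not_mem_nil, or_false] at ht
    rcases ht with rfl | rfl | rfl
    · exact (s8_mem h01 h12 hchain _ _ _).2 ⟨rA, a2, b2, a4, e, cA, a1, b1⟩
    · exact (s8_mem h01 h12 hchain _ _ _).2 ⟨r0, a2, b2, a3, e, c0, a1, b1⟩
    · exact (s8_mem h01 h12 hchain _ _ _).2 ⟨r0, r1, b2, l, b3, c0, c1, b1⟩
  refine ⟨fun p => [(p.1, p.2.1, p.2.2), (p.1, Z p.1 (W p.2.2) p.2.2, p.2.2),
      (W p.2.2, Z p.1 (W p.2.2) p.2.2, p.2.2)] ++ (L01 p.1 p.2.1 ++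
      (L01 p.1 (Z p.1 (W p.2.2) p.2.2) ++ L01 (W p.2.2) (Z p.1 (W p.2.2) p.2.2))), ?_, ?_⟩
  · rintro ⟨U₀, U₁, U₂⟩ hp
    refine ⟨by simp [hL01], ?_⟩
    have hp' := hp
    rw [s8_mem h01 h12 hchain] at hp'
    obtain ⟨r0, r1, r2, l01, l12, c0, c1, c2⟩ := hp'
    obtain ⟨w1, w2, w3⟩ := hWp U₂ c2 r2
    obtain ⟨z1, z2, z3, z4, z5⟩ := hZp U₀ (W U₂) U₂ c0 w1 c2 r0 w2 r2 (l01.trans l12) w3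
    intro t ht
    simp only [List.mem_append, List.mem_cons, List.not_mem_nil, or_false] at ht
    rcases ht with (rfl | rfl | rfl) | ht | ht | ht
    · exact hp
    · exact (s8_mem h01 h12 hchain _ _ _).2 ⟨r0, z2, r2, z3, z5, c0, z1, c2⟩
    · exact (s8_mem h01 h12 hchain _ _ _).2 ⟨w2, z2, r2, z4, z5, w1, z1, c2⟩
    · exact mL01 _ _ c0 r0 c1 r1 l01 t ht
    · exact mL01 _ _ c0 r0 z1 z2 z3 t ht
    · exact mL01 _ _ w1 w2 z1 z2 z4 t ht
  · intro f
    obtain ⟨g0, hg0⟩ : ∃ g0 : Submodule F (Fin d → F) → Γ,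
      ∀ U, g0 U = f U (V1 U) * (f A (V1 U))⁻¹ := ⟨_, fun _ => rfl⟩
    obtain ⟨g1, hg1⟩ : ∃ g1 : Submodule F (Fin d → F) → Γ,
      ∀ U, g1 U = f U (V2 U) * (f A (V2 U))⁻¹ := ⟨_, fun _ => rfl⟩
    have e01 : ∀ U₀ U₁, (∀ t ∈ L01 U₀ U₁, f t.1 t.2.1 * f t.2.1 t.2.2 = f t.1 t.2.2) →
        f U₀ U₁ = g0 U₀ * (g1 U₁)⁻¹ := by
      intro U₀ U₁ h
      rw [hL01] at h
      have t1 := h (A, V1 U₀, V2 U₁) (by simp)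
      have t2 := h (U₀, V1 U₀, V2 U₁) (by simp)
      have t3 := h (U₀, U₁, V2 U₁) (by simp)
      simp only at t1 t2 t3
      rw [hg0, hg1, ← t1, eq_mul_inv_of_mul_eq t3, ← t2]
      group
    refine ⟨fun U => if Module.finrank F U = i₀ then g0 U else
      if Module.finrank F U = i₁ then g1 U else (f (W U) U)⁻¹ * g0 (W U), ?_⟩
    rintro ⟨U₀, U₁, U₂⟩ hp h
    rw [s8_mem h01 h12 hchain] at hp
    obtain ⟨r0, r1, r2, -⟩ := hp
    simp only [r0, r1, r2, if_true, if_neg h01.ne', if_neg h12.ne', if_neg (h01.trans h12).ne']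
    have t1 := h (U₀, U₁, U₂) (by simp)
    have t2 := h (U₀, Z U₀ (W U₂) U₂, U₂) (by simp)
    have t3 := h (W U₂, Z U₀ (W U₂) U₂, U₂) (by simp)
    have a1 := e01 U₀ U₁ (fun t ht => h t (by simp [ht]))
    have a2 := e01 U₀ (Z U₀ (W U₂) U₂) (fun t ht => h t (by simp [ht]))
    have a3 := e01 (W U₂) (Z U₀ (W U₂) U₂) (fun t ht => h t (by simp [ht]))
    simp only at t1 t2 t3
    have b2 : f U₀ U₂ = g0 U₀ * ((f (W U₂) U₂)⁻¹ * g0 (W U₂))⁻¹ := by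
      rw [← t2, ← t3, a2, a3]
      group
    refine ⟨a1, b2, ?_⟩
    rw [eq_inv_mul_of_mul_eq t1, b2, a1]
    group

lemma s8_trans {F : Type} [Field F] [Fintype F] {d i₀ i₁ i₂ : ℕ}
    {s : Finset (Submodule F (Fin d → F))}
    (p p' : Submodule F (Fin d → F) × Submodule F (Fin d → F) × Submodule F (Fin d → F))
    (hp : p ∈ linkTriangles F d i₀ i₁ i₂ s) (hp' : p' ∈ linkTriangles F d i₀ i₁ i₂ s) :
    ∃ e : (Fin d → F) ≃ₗ[F] (Fin d → F),
      (∀ V ∈ s, V.map (e : (Fin d → F) →ₗ[F] (Fin d → F)) = V) ∧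
      p.1.map (e : (Fin d → F) →ₗ[F] (Fin d → F)) = p'.1 ∧
      p.2.1.map (e : (Fin d → F) →ₗ[F] (Fin d → F)) = p'.2.1 ∧
      p.2.2.map (e : (Fin d → F) →ₗ[F] (Fin d → F)) = p'.2.2 := by
  simp only [linkTriangles, Finset.mem_filter, Finset.mem_univ, true_and] at hp hp'
  obtain ⟨r0, r1, r2, hc⟩ := hp
  obtain ⟨r0', r1', r2', hc'⟩ := hp'
  obtain ⟨X, hX, hXk, hXs⟩ := s8_fullflag _ hc
  obtain ⟨Y, hY, hYk, hYs⟩ := s8_fullflag _ hc'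
  obtain ⟨e, he⟩ := s8_equiv X Y hX hXk hY hYk
  have hd : ∀ V : Submodule F (Fin d → F), Module.finrank F V ≤ d := fun V => by
    simpa using Submodule.finrank_le V
  refine ⟨e, ?_, ?_, ?_, ?_⟩
  · intro V hV
    have h := he _ (hd V)
    rwa [hXs V (by simp [hV]), hYs V (by simp [hV])] at h
  · have h := he _ (hd p.1)
    rwa [hXs p.1 (by simp), r0, ← r0', hYs p'.1 (by simp)] at h
  · have h := he _ (hd p.2.1)
    rwa [hXs p.2.1 (by simp), r1, ← r1', hYs p'.2.1 (by simp)] at h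
  · have h := he _ (hd p.2.2)
    rwa [hXs p.2.2 (by simp), r2, ← r2', hYs p'.2.2 (by simp)] at h

/-- Abstract averaging over a finite group acting transitively on a finite set `T`. -/
lemma s8_avg {G α : Type} [Group G] [Fintype G] [MulAction G α] (T : Finset α)
    (hT : ∀ γ : G, ∀ p ∈ T, γ • p ∈ T) (htr : ∀ p ∈ T, ∀ p' ∈ T, ∃ γ : G, γ • p = p')
    (bad : α → ℝ) (p : α) (hp : p ∈ T) :
    (T.card : ℝ) * ∑ γ : G, bad (γ • p) = (Fintype.card G : ℝ) * ∑ t ∈ T, bad t := by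
  have h1 : ∀ t ∈ T, ∑ γ : G, bad (γ • t) = ∑ γ : G, bad (γ • p) := by
    intro t ht
    obtain ⟨h, rfl⟩ := htr p hp t ht
    exact Fintype.sum_equiv (Equiv.mulRight h) _ _ (fun γ => by simp [mul_smul])
  have h2 : ∀ γ : G, ∑ t ∈ T, bad (γ • t) = ∑ t ∈ T, bad t := by
    intro γ
    refine Finset.sum_bij' (fun t _ => γ • t) (fun t _ => γ⁻¹ • t) (fun t ht => hT _ _ ht)
      (fun t ht => hT _ _ ht) ?_ ?_ ?_ <;> simp
  calc (T.card : ℝ) * ∑ γ : G, bad (γ • p) = ∑ t ∈ T, ∑ γ : G, bad (γ • t) := by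
        rw [Finset.sum_congr rfl h1]; simp
    _ = ∑ γ : G, ∑ t ∈ T, bad (γ • t) := Finset.sum_comm
    _ = _ := by rw [Finset.sum_congr rfl (fun γ _ => h2 γ)]; simp

/-- The averaging step. -/
lemma s8_main {G α Φ : Type} [Group G] [Fintype G] [MulAction G α] (T : Finset α)
    (hT : ∀ γ : G, ∀ p ∈ T, γ • p ∈ T) (htr : ∀ p ∈ T, ∀ p' ∈ T, ∃ γ : G, γ • p = p')
    (bad : α → ℝ) (hbad : ∀ t, 0 ≤ bad t) (dist : Φ → α → ℝ) (L : α → List α)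
    (hL : ∀ p ∈ T, (L p).length ≤ 13 ∧ ∀ t ∈ L p, t ∈ T)
    (g : G → Φ)
    (hg : ∀ γ : G, ∀ p ∈ T, dist (g γ) (γ • p) ≤ ((L p).map (fun t => bad (γ • t))).sum) :
    ∃ γ : G, ∑ p ∈ T, dist (g γ) p ≤ 13 * ∑ t ∈ T, bad t := by
  have h2 : ∀ γ : G, ∑ t ∈ T, dist (g γ) (γ • t) = ∑ t ∈ T, dist (g γ) t := by
    intro γ
    refine Finset.sum_bij' (fun t _ => γ • t) (fun t _ => γ⁻¹ • t) (fun t ht => hT _ _ ht)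
      (fun t ht => hT _ _ ht) ?_ ?_ ?_ <;> simp
  rcases T.eq_empty_or_nonempty with rfl | hne
  · exact ⟨1, by simp⟩
  have hc : (0 : ℝ) < T.card := by exact_mod_cast hne.card_pos
  have hN : 0 ≤ ∑ t ∈ T, bad t := Finset.sum_nonneg fun t _ => hbad t
  have hB : ∀ t ∈ T, ∑ γ : G, bad (γ • t) =
      (Fintype.card G : ℝ) * (∑ t ∈ T, bad t) / T.card := by
    intro t ht
    rw [eq_div_iff hc.ne', ← s8_avg T hT htr bad t ht, mul_comm]
  have h3 : ∀ p ∈ T, ∑ γ : G, dist (g γ) (γ • p) ≤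
      13 * ((Fintype.card G : ℝ) * (∑ t ∈ T, bad t) / T.card) := by
    intro p hp
    obtain ⟨hl, hm⟩ := hL p hp
    have hswap : ∀ l : List α, (∀ t ∈ l, t ∈ T) →
        ∑ γ : G, (l.map (fun t => bad (γ • t))).sum =
          l.length * ((Fintype.card G : ℝ) * (∑ t ∈ T, bad t) / T.card) := by
      intro l
      induction l with
      | nil => simp
      | cons a l ih =>
        intro h
        simp only [List.map_cons, List.sum_cons, List.length_cons, Finset.sum_add_distrib]
        rw [ih (fun t ht => h t (by simp [ht])), hB a (h a (by simp))]
        push_cast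
        ring
    calc ∑ γ : G, dist (g γ) (γ • p) ≤ ∑ γ : G, ((L p).map (fun t => bad (γ • t))).sum :=
          Finset.sum_le_sum fun γ _ => hg γ p hp
      _ = _ := hswap _ hm
      _ ≤ _ := by
          apply mul_le_mul_of_nonneg_right
          · exact_mod_cast hl
          · positivity
  have h4 : ∑ γ : G, ∑ p ∈ T, dist (g γ) p ≤ ∑ γ : G, 13 * ∑ t ∈ T, bad t := by
    calc ∑ γ : G, ∑ p ∈ T, dist (g γ) p = ∑ γ : G, ∑ p ∈ T, dist (g γ) (γ • p) :=
          Finset.sum_congr rfl fun γ _ => (h2 γ).symm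
      _ = ∑ p ∈ T, ∑ γ : G, dist (g γ) (γ • p) := Finset.sum_comm
      _ ≤ ∑ p ∈ T, 13 * ((Fintype.card G : ℝ) * (∑ t ∈ T, bad t) / T.card) :=
          Finset.sum_le_sum h3
      _ = _ := by
          simp only [Finset.sum_const, nsmul_eq_mul, Finset.card_univ]
          field_simp
  obtain ⟨γ, -, h⟩ := Finset.exists_le_of_sum_le (Finset.univ_nonempty) h4
  exact ⟨γ, h⟩

/-- The stabilizer of `s` in the general linear group. -/
def s8G {F : Type} [Field F] {d : ℕ} (s : Finset (Submodule F (Fin d → F))) :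
    Subgroup ((Fin d → F) ≃ₗ[F] (Fin d → F)) where
  carrier := {e | ∀ V ∈ s, V.map (e : (Fin d → F) →ₗ[F] (Fin d → F)) = V}
  one_mem' := by
    intro V _
    exact Submodule.map_id V
  mul_mem' := by
    intro a b ha hb V hV
    have : V.map ((a * b : (Fin d → F) ≃ₗ[F] (Fin d → F)) : (Fin d → F) →ₗ[F] (Fin d → F)) =
      (V.map (b : (Fin d → F) →ₗ[F] (Fin d → F))).map (a : (Fin d → F) →ₗ[F] (Fin d → F)) :=
      Submodule.map_comp _ _ V
    rw [this, hb V hV, ha V hV]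
  inv_mem' := by
    intro a ha V hV
    have h : (V.map (a : (Fin d → F) →ₗ[F] (Fin d → F))).map
        ((a⁻¹ : (Fin d → F) ≃ₗ[F] (Fin d → F)) : (Fin d → F) →ₗ[F] (Fin d → F)) = V := by
      rw [← Submodule.map_comp]
      convert Submodule.map_id V
      exact LinearMap.ext fun x => a.symm_apply_apply x
    rwa [ha V hV] at h

/-- Image of a subspace under an element of the stabilizer. -/
def s8m {F : Type} [Field F] {d : ℕ} {s : Finset (Submodule F (Fin d → F))} (γ : s8G s)
    (U : Submodule F (Fin d → F)) : Submodule F (Fin d → F) :=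
  U.map (γ.1 : (Fin d → F) →ₗ[F] (Fin d → F))

lemma s8m_one {F : Type} [Field F] {d : ℕ} {s : Finset (Submodule F (Fin d → F))}
    (U : Submodule F (Fin d → F)) : s8m (1 : s8G s) U = U := Submodule.map_id U

lemma s8m_mul {F : Type} [Field F] {d : ℕ} {s : Finset (Submodule F (Fin d → F))} (a b : s8G s)
    (U : Submodule F (Fin d → F)) : s8m (a * b) U = s8m a (s8m b U) :=
  Submodule.map_comp _ _ U

/-- The action on triples. -/
@[reducible] def s8Act {F : Type} [Field F] {d : ℕ} (s : Finset (Submodule F (Fin d → F))) :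
    MulAction (s8G s)
      (Submodule F (Fin d → F) × Submodule F (Fin d → F) × Submodule F (Fin d → F)) where
  smul γ p := (s8m γ p.1, s8m γ p.2.1, s8m γ p.2.2)
  one_smul p := by
    show (s8m 1 p.1, s8m 1 p.2.1, s8m 1 p.2.2) = p
    simp only [s8m_one]
  mul_smul a b p := by
    show (s8m (a * b) p.1, s8m (a * b) p.2.1, s8m (a * b) p.2.2) = _
    simp only [s8m_mul]
    rfl

lemma s8_mem_act {F : Type} [Field F] [Fintype F] {d i₀ i₁ i₂ : ℕ}
    {s : Finset (Submodule F (Fin d → F))} (γ : s8G s)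
    (p : Submodule F (Fin d → F) × Submodule F (Fin d → F) × Submodule F (Fin d → F))
    (hp : p ∈ linkTriangles F d i₀ i₁ i₂ s) :
    (s8m γ p.1, s8m γ p.2.1, s8m γ p.2.2) ∈ linkTriangles F d i₀ i₁ i₂ s := by
  simp only [linkTriangles, Finset.mem_filter, Finset.mem_univ, true_and] at hp ⊢
  obtain ⟨r0, r1, r2, hc⟩ := hp
  have hr : ∀ U, Module.finrank F (s8m γ U) = Module.finrank F U := fun U =>
    LinearEquiv.finrank_map_eq γ.1 U
  refine ⟨by rw [hr, r0], by rw [hr, r1], by rw [hr, r2], ?_⟩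
  have him : IsChain (· ≤ ·) (Set.image (s8m γ) ((insert p.1 (insert p.2.1 (insert p.2.2 s)) :
      Finset (Submodule F (Fin d → F))) : Set (Submodule F (Fin d → F)))) := by
    rintro _ ⟨U, hU, rfl⟩ _ ⟨V, hV, rfl⟩ _
    rcases hc.total hU hV with h | h
    · exact Or.inl (Submodule.map_mono h)
    · exact Or.inr (Submodule.map_mono h)
  refine him.mono ?_
  intro V hV
  simp only [Finset.coe_insert, Set.mem_insert_iff, Finset.mem_coe] at hV
  rcases hV with rfl | rfl | rfl | hV
  · exact ⟨p.1, by simp, rfl⟩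
  · exact ⟨p.2.1, by simp, rfl⟩
  · exact ⟨p.2.2, by simp, rfl⟩
  · exact ⟨V, by simp [hV], γ.2 V hV⟩

lemma s8_list_sum {α : Type} (l : List α) (b : α → ℝ) (hb : ∀ t, 0 ≤ b t) (t : α) (ht : t ∈ l) :
    b t ≤ (l.map b).sum :=
  List.single_le_sum (by simpa using fun a _ => hb a) _ (List.mem_map_of_mem ht)

/-- Coboundary expansion (with constant `1/13`) of well-separated
three-dimension projections of links of the flags complex, with respect to any group. -/
theorem stmt_8 (d : ℕ) (hd : 3 ≤ d) (q : ℕ) (hq : IsPrimePow q)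
    (F : Type) [Field F] [Fintype F] (hF : Fintype.card F = q)
    (Γ : Type) [Group Γ]
    (i₀ i₁ i₂ : ℕ) (h01 : i₀ < i₁) (h12 : i₁ < i₂) (hlow : 1 ≤ i₀) (hhigh : i₂ ≤ d - 1)
    (s : Finset (Submodule F (Fin d → F)))
    (hchain : IsChain (· ≤ ·) (s : Set (Submodule F (Fin d → F))))
    (hdims : ∀ V ∈ s, 1 ≤ Module.finrank F V ∧ Module.finrank F V ≤ d - 1 ∧
      Module.finrank F V ≠ i₀ ∧ Module.finrank F V ≠ i₁ ∧ Module.finrank F V ≠ i₂)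
    (hdistinct : ∀ V ∈ s, ∀ V' ∈ s, V ≠ V' →
      Module.finrank F V ≠ Module.finrank F V')
    (hcond1 : 2 * i₀ ≤ i₁ ∨
      ∃ V ∈ s, i₀ < Module.finrank F V ∧ Module.finrank F V < i₁)
    (hcond2 : 2 * i₁ ≤ i₂ + i₀ ∨
      (∃ V ∈ s, i₀ < Module.finrank F V ∧ Module.finrank F V < i₁ ∧
        2 * i₁ ≤ i₂ + Module.finrank F V) ∨
      ∃ W ∈ s, i₁ < Module.finrank F W ∧ Module.finrank F W < i₂)
    (f : Submodule F (Fin d → F) → Submodule F (Fin d → F) → Γ)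
    (hanti : ∀ U V : Submodule F (Fin d → F), U ≠ V →
      (Module.finrank F U = i₀ ∨ Module.finrank F U = i₁ ∨ Module.finrank F U = i₂) →
      (Module.finrank F V = i₀ ∨ Module.finrank F V = i₁ ∨ Module.finrank F V = i₂) →
      IsChain (· ≤ ·)
        ((insert U (insert V s) : Finset (Submodule F (Fin d → F))) :
          Set (Submodule F (Fin d → F))) →
      f U V = (f V U)⁻¹) :
    ∃ g : Submodule F (Fin d → F) → Γ,
      (1 / 13 : ℝ) * triDist F d i₀ i₁ i₂ s Γ f g ≤ triWt F d i₀ i₁ i₂ s Γ f := by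
  have hlt : i₂ < d := by
    clear hcond1 hcond2
    omega
  obtain ⟨L, hL, hcone⟩ := s8_cone d F Γ i₀ i₁ i₂ h01 h12 hlt s hchain hcond1 hcond2
  let _ : Fintype (s8G s) := by
    haveI : Finite ((Fin d → F) ≃ₗ[F] (Fin d → F)) :=
      Finite.of_injective (fun e => (e : (Fin d → F) → (Fin d → F))) DFunLike.coe_injective
    exact Fintype.ofFinite _
  let _ := s8Act s
  have hact : ∀ (γ : s8G s)
      (p : Submodule F (Fin d → F) × Submodule F (Fin d → F) × Submodule F (Fin d → F)),
      γ • p = (s8m γ p.1, s8m γ p.2.1, s8m γ p.2.2) := fun _ _ => rfl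
  choose g0 hg0 using fun γ : s8G s => hcone (fun U V => f (s8m γ U) (s8m γ V))
  have hmain := s8_main (G := s8G s) (Φ := Submodule F (Fin d → F) → Γ)
    (linkTriangles F d i₀ i₁ i₂ s)
    (fun γ p hp => s8_mem_act γ p hp)
    (by
      intro p hp p' hp'
      obtain ⟨e, he, e0, e1, e2⟩ := s8_trans p p' hp hp'
      exact ⟨⟨e, he⟩, Prod.ext e0 (Prod.ext e1 e2)⟩)
    (fun t => if f t.1 t.2.1 * f t.2.1 t.2.2 = f t.1 t.2.2 then (0 : ℝ) else 1)
    (by intro t; split_ifs <;> norm_num)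
    (fun g p => ((if f p.1 p.2.1 = g p.1 * (g p.2.1)⁻¹ then (0 : ℝ) else 1) +
        (if f p.1 p.2.2 = g p.1 * (g p.2.2)⁻¹ then (0 : ℝ) else 1) +
        (if f p.2.1 p.2.2 = g p.2.1 * (g p.2.2)⁻¹ then (0 : ℝ) else 1)) / 3)
    L hL (fun γ U => g0 γ (s8m γ⁻¹ U))
    (by
      intro γ p hp
      have hinv : ∀ U, s8m γ⁻¹ (s8m γ U) = U := by
        intro U
        rw [← s8m_mul, inv_mul_cancel, s8m_one]
      simp only [hact, hinv]
      by_cases hall : ∀ t ∈ L p, f (s8m γ t.1) (s8m γ t.2.1) * f (s8m γ t.2.1) (s8m γ t.2.2) =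
          f (s8m γ t.1) (s8m γ t.2.2)
      · obtain ⟨a, b, c⟩ := hg0 γ p hp hall
        rw [if_pos a, if_pos b, if_pos c]
        simp only [add_zero, zero_div]
        apply List.sum_nonneg
        intro x hx
        obtain ⟨t, -, rfl⟩ := List.mem_map.1 hx
        split_ifs <;> norm_num
      · push Not at hall
        obtain ⟨t, ht, hne⟩ := hall
        have h1 := s8_list_sum (L p) (fun t => if f (s8m γ t.1) (s8m γ t.2.1) *
          f (s8m γ t.2.1) (s8m γ t.2.2) = f (s8m γ t.1) (s8m γ t.2.2) then (0 : ℝ) else 1)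
          (by intro t; split_ifs <;> norm_num) t ht
        simp only [if_neg hne] at h1
        refine le_trans ?_ h1
        split_ifs <;> norm_num)
  obtain ⟨γ, hγ⟩ := hmain
  refine ⟨fun U => g0 γ (s8m γ⁻¹ U), ?_⟩
  have hw : ∑ t ∈ linkTriangles F d i₀ i₁ i₂ s,
      (if f t.1 t.2.1 * f t.2.1 t.2.2 = f t.1 t.2.2 then (0 : ℝ) else 1) =
      ∑ p ∈ linkTriangles F d i₀ i₁ i₂ s,
      if f p.1 p.2.1 * f p.2.1 p.2.2 * f p.2.2 p.1 = 1 then (0 : ℝ) else 1 := by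
    apply Finset.sum_congr rfl
    rintro ⟨U₀, U₁, U₂⟩ hp
    have hp' := hp
    simp only [linkTriangles, Finset.mem_filter, Finset.mem_univ, true_and] at hp'
    obtain ⟨r0, r1, r2, hc⟩ := hp'
    have ha : f U₂ U₀ = (f U₀ U₂)⁻¹ := by
      apply hanti U₂ U₀ _ (by omega) (by omega)
      · refine hc.mono ?_
        intro V
        simp only [Finset.coe_insert, Set.mem_insert_iff, Finset.mem_coe]
        tauto
      · rintro rfl
        omega
    simp only [ha, mul_inv_eq_one]
  rw [hw] at hγ
  unfold triDist triWt
  rw [← mul_div_assoc]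
  apply div_le_div_of_nonneg_right _ (Nat.cast_nonneg _)
  linarith
end

section
/- There exists a constant c > 0 such that for every group Γ, all integers d > k ≥ 2, every prime power q ≥ 25, and every nonempty face s of B(2d,S_k,q) with 2k+1 − |s| ≥ 3, the following holds: for every Γ-valued 1-cochain f on the link of s there exists g from the link's vertices to Γ with c·dist(f,δg) ≤ wt(δf). -/
open Finset
open scoped Classical

/-- A face of the projected flags complex `B(n,S,q)`: a finite chain of subspaces of `F^n`
whose dimensions all lie in `S`. -/
def IsFlagFace (F : Type) [Field F] [Fintype F] (n : ℕ) (S : Finset ℕ)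
    (s : Finset (Submodule F (Fin n → F))) : Prop :=
  IsChain (· ≤ ·) (s : Set (Submodule F (Fin n → F))) ∧
    ∀ W ∈ s, Module.finrank F W ∈ S

/-- A maximal face of `B(n,S,q)`: a chain containing one subspace of each dimension in `S`. -/
def IsMaxFlagFace (F : Type) [Field F] [Fintype F] (n : ℕ) (S : Finset ℕ)
    (T : Finset (Submodule F (Fin n → F))) : Prop :=
  IsFlagFace F n S T ∧ ∀ i ∈ S, ∃ W ∈ T, Module.finrank F W = i

/-- The maximal faces of `B(n,S,q)` containing a given face `s`. -/
noncomputable def maxFacesAbove (F : Type) [Field F] [Fintype F] (n : ℕ) (S : Finset ℕ)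
    (s : Finset (Submodule F (Fin n → F))) : Finset (Finset (Submodule F (Fin n → F))) :=
  Finset.univ.filter fun T => IsMaxFlagFace F n S T ∧ s ⊆ T

/-- `wt(δf) = Pr_{{u,v,w} ∼ π₂}[δf(u,v,w) ≠ 1]` for the link of `s`, where `π₂` samples a
uniformly random maximal face `T ⊇ s` and then a uniformly random 3-element subset of
`T ∖ s`. -/
noncomputable def linkWt (F : Type) [Field F] [Fintype F] (n : ℕ) (S : Finset ℕ)
    (s : Finset (Submodule F (Fin n → F))) (Γ : Type) [Group Γ]
    (f : Submodule F (Fin n → F) → Submodule F (Fin n → F) → Γ) : ℝ :=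
  (∑ T ∈ maxFacesAbove F n S s,
      (∑ e ∈ (T \ s).powersetCard 3,
          if ∃ u ∈ e, ∃ v ∈ e, ∃ w ∈ e, u ≠ v ∧ v ≠ w ∧ u ≠ w ∧
              f u v * f v w * f w u ≠ 1
          then (1 : ℝ) else 0) / (((T \ s).powersetCard 3).card : ℝ)) /
    ((maxFacesAbove F n S s).card : ℝ)

/-- `dist(f, δg) = Pr_{{u,v} ∼ π₁}[f(u,v) ≠ g(u)·g(v)⁻¹]` for the link of `s`, where `π₁`
samples a uniformly random maximal face `T ⊇ s` and then a uniformly random 2-element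
subset of `T ∖ s`. -/
noncomputable def linkDist (F : Type) [Field F] [Fintype F] (n : ℕ) (S : Finset ℕ)
    (s : Finset (Submodule F (Fin n → F))) (Γ : Type) [Group Γ]
    (f : Submodule F (Fin n → F) → Submodule F (Fin n → F) → Γ)
    (g : Submodule F (Fin n → F) → Γ) : ℝ :=
  (∑ T ∈ maxFacesAbove F n S s,
      (∑ e ∈ (T \ s).powersetCard 2,
          if ∃ u ∈ e, ∃ v ∈ e, u ≠ v ∧ f u v ≠ g u * (g v)⁻¹
          then (1 : ℝ) else 0) / (((T \ s).powersetCard 2).card : ℝ)) /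
    ((maxFacesAbove F n S s).card : ℝ)



/-! ### Linear algebra -/

/-- Extending a linear equivalence between subspaces to the whole spaces. -/
theorem exists_extend_equiv {F V₁ V₂ : Type*} [Field F] [AddCommGroup V₁] [Module F V₁]
    [AddCommGroup V₂] [Module F V₂] [FiniteDimensional F V₁] [FiniteDimensional F V₂]
    (h : Module.finrank F V₁ = Module.finrank F V₂) (K₁ : Submodule F V₁) (K₂ : Submodule F V₂)
    (e : K₁ ≃ₗ[F] K₂) : ∃ E : V₁ ≃ₗ[F] V₂, ∀ x : K₁, E x = e x := by
  obtain ⟨C₁, hC₁⟩ := K₁.exists_isCompl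
  obtain ⟨C₂, hC₂⟩ := K₂.exists_isCompl
  have h1 := Submodule.finrank_add_eq_of_isCompl hC₁
  have h2 := Submodule.finrank_add_eq_of_isCompl hC₂
  have h3 := e.finrank_eq
  have h4 : Module.finrank F C₁ = Module.finrank F C₂ := by omega
  let e' := LinearEquiv.ofFinrankEq C₁ C₂ h4
  refine ⟨(Submodule.prodEquivOfIsCompl _ _ hC₁).symm ≪≫ₗ (e.prodCongr e') ≪≫ₗ
    (Submodule.prodEquivOfIsCompl _ _ hC₂), fun x => ?_⟩
  simp

/-- Two subspaces of the same dimension containing `K` are related by an automorphism fixing `K`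
pointwise. -/
theorem exists_equiv_fix {F V : Type*} [Field F] [AddCommGroup V] [Module F V]
    [FiniteDimensional F V] (K B B' : Submodule F V) (h : K ≤ B) (h' : K ≤ B')
    (hd : Module.finrank F B = Module.finrank F B') :
    ∃ E : V ≃ₗ[F] V, (∀ x ∈ K, E x = x) ∧ B.map (E : V →ₗ[F] V) = B' := by
  let i₁ := Submodule.submoduleOfEquivOfLe h
  let i₂ := Submodule.submoduleOfEquivOfLe h'
  obtain ⟨e, he⟩ := exists_extend_equiv hd (K.submoduleOf B) (K.submoduleOf B') (i₁ ≪≫ₗ i₂.symm)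
  obtain ⟨E, hE⟩ := exists_extend_equiv rfl B B' e
  have hmap : B.map (E : V →ₗ[F] V) = B' := by
    apply Submodule.eq_of_le_of_finrank_eq
    · rintro _ ⟨x, hx, rfl⟩
      have := hE ⟨x, hx⟩
      simp only [LinearEquiv.coe_coe]
      rw [this]
      exact (e ⟨x, hx⟩).2
    · rw [LinearEquiv.finrank_map_eq, hd]
  refine ⟨E, fun x hx => ?_, hmap⟩
  have h1 := hE ⟨x, h hx⟩
  have h2 := he ⟨⟨x, h hx⟩, hx⟩
  simp only at h1 h2
  rw [h1, h2]
  have h3 : ((i₂ (i₂.symm (i₁ ⟨⟨x, h hx⟩, hx⟩)) : K) : V) = x := by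
    rw [LinearEquiv.apply_symm_apply]; rfl
  exact h3

/-- Chains of subspaces with the same dimensions are conjugate. -/
theorem exists_equiv_chain {F V : Type*} [Field F] [AddCommGroup V] [Module F V]
    [FiniteDimensional F V] (c : Finset (Submodule F V)) :
    ∀ c' : Finset (Submodule F V), IsChain (· ≤ ·) (c : Set (Submodule F V)) →
      IsChain (· ≤ ·) (c' : Set (Submodule F V)) →
      c.image (fun W : Submodule F V => Module.finrank F W) = c'.image (fun W : Submodule F V => Module.finrank F W) →
      ∃ E : V ≃ₗ[F] V, ∀ x ∈ c, ∀ y ∈ c', Module.finrank F x = Module.finrank F y →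
        x.map (E : V →ₗ[F] V) = y := by
  induction c using Finset.induction_on_max_value (fun W : Submodule F V => Module.finrank F W) with
  | empty => exact fun c' _ _ _ => ⟨LinearEquiv.refl F V, by simp⟩
  | insert a c ha hmax ih =>
    intro c' hc hc' him
    have lt_of : ∀ (d : Finset (Submodule F V)), IsChain (· ≤ ·) (d : Set (Submodule F V)) →
        ∀ x ∈ d, ∀ y ∈ d, Module.finrank F x ≤ Module.finrank F y → x ≤ y := by
      intro d hd x hx y hy hxy
      rcases hd.total hx hy with h | h
      · exact h
      · exact (Submodule.eq_of_le_of_finrank_le h hxy).ge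
    have hmem : Module.finrank F a ∈ c'.image (fun W : Submodule F V => Module.finrank F W) := by
      rw [← him]; exact Finset.mem_image_of_mem (fun W : Submodule F V => Module.finrank F W) (Finset.mem_insert_self a c)
    obtain ⟨a', ha', hda⟩ := Finset.mem_image.1 hmem
    have hmax' : ∀ y ∈ c', Module.finrank F y ≤ Module.finrank F a := by
      intro y hy
      have : Module.finrank F y ∈ (insert a c).image (fun W : Submodule F V => Module.finrank F W) := by
        rw [him]; exact Finset.mem_image_of_mem _ hy
      obtain ⟨x, hx, hxy⟩ := Finset.mem_image.1 this
      rw [← hxy]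
      rcases Finset.mem_insert.1 hx with rfl | hx
      · exact le_rfl
      · exact hmax x hx
    have hclt : ∀ x ∈ c, Module.finrank F x ≠ Module.finrank F a := by
      intro x hx h
      have h1 := lt_of _ hc x (by simp [hx]) a (by simp) h.le
      have h2 := lt_of _ hc a (by simp) x (by simp [hx]) h.ge
      exact ha (le_antisymm h1 h2 ▸ hx)
    have hclt' : ∀ y ∈ c'.erase a', Module.finrank F y ≠ Module.finrank F a := by
      intro y hy h
      obtain ⟨hne, hy⟩ := Finset.mem_erase.1 hy
      have h1 := lt_of _ hc' y hy a' ha' (h.trans hda.symm).le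
      have h2 := lt_of _ hc' a' ha' y hy (h.trans hda.symm).ge
      exact hne (le_antisymm h1 h2)
    have him' : c.image (fun W : Submodule F V => Module.finrank F W) =
        (c'.erase a').image (fun W : Submodule F V => Module.finrank F W) := by
      ext i
      constructor
      · intro hi
        obtain ⟨x, hx, rfl⟩ := Finset.mem_image.1 hi
        have : Module.finrank F x ∈ c'.image (fun W : Submodule F V => Module.finrank F W) := by
          rw [← him]; exact Finset.mem_image_of_mem (fun W : Submodule F V => Module.finrank F W) (Finset.mem_insert_of_mem hx)
        obtain ⟨y, hy, hxy⟩ := Finset.mem_image.1 this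
        refine Finset.mem_image.2 ⟨y, Finset.mem_erase.2 ⟨?_, hy⟩, hxy⟩
        rintro rfl
        exact hclt x hx (hxy.symm.trans hda)
      · intro hi
        obtain ⟨y, hy, rfl⟩ := Finset.mem_image.1 hi
        have : Module.finrank F y ∈ (insert a c).image (fun W : Submodule F V => Module.finrank F W) := by
          rw [him]; exact Finset.mem_image_of_mem (fun W : Submodule F V => Module.finrank F W) (Finset.mem_of_mem_erase hy)
        obtain ⟨x, hx, hxy⟩ := Finset.mem_image.1 this
        refine Finset.mem_image.2 ⟨x, ?_, hxy⟩
        rcases Finset.mem_insert.1 hx with rfl | hx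
        · exact absurd hxy.symm (hclt' y hy)
        · exact hx
    obtain ⟨e, he⟩ := ih (c'.erase a') (hc.mono (by simp)) (hc'.mono (by simp)) him'
    -- the top of the smaller chain
    let K : Submodule F V := (c'.erase a').sup id
    have hK' : K ≤ a' := Finset.sup_le fun y hy =>
      lt_of _ hc' y (Finset.mem_of_mem_erase hy) a' ha'
        ((hmax' y (Finset.mem_of_mem_erase hy)).trans hda.ge)
    have hK : K ≤ a.map (e : V →ₗ[F] V) := by
      refine Finset.sup_le fun y hy => ?_
      have : Module.finrank F y ∈ c.image (fun W : Submodule F V => Module.finrank F W) := by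
        rw [him']; exact Finset.mem_image_of_mem _ hy
      obtain ⟨x, hx, hxy⟩ := Finset.mem_image.1 this
      rw [id, ← he x hx y hy hxy]
      exact Submodule.map_mono (lt_of _ hc x (by simp [hx]) a (by simp) (hmax x hx))
    obtain ⟨h, hfix, hmap⟩ := exists_equiv_fix K _ a' hK hK'
      (by rw [LinearEquiv.finrank_map_eq]; exact hda.symm)
    have hcomp : ∀ x : Submodule F V, x.map ((e ≪≫ₗ h : V ≃ₗ[F] V) : V →ₗ[F] V) =
        (x.map (e : V →ₗ[F] V)).map (h : V →ₗ[F] V) := by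
      intro x
      rw [← Submodule.map_comp]; rfl
    refine ⟨e ≪≫ₗ h, fun x hx y hy hxy => ?_⟩
    rw [hcomp]
    rcases Finset.mem_insert.1 hx with rfl | hx
    · rw [hmap]
      by_contra hne
      exact hclt' y (Finset.mem_erase.2 ⟨fun h => hne h.symm, hy⟩) hxy.symm
    · have hy' : y ∈ c'.erase a' := by
        refine Finset.mem_erase.2 ⟨?_, hy⟩
        rintro rfl
        exact hclt x hx (hxy.trans hda)
      rw [he x hx y hy' hxy]
      apply le_antisymm
      · rintro _ ⟨v, hv, rfl⟩
        have : v ∈ K := (Finset.le_sup (f := id) hy' : y ≤ K) hv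
        simpa [hfix v this] using hv
      · intro v hv
        have : v ∈ K := (Finset.le_sup (f := id) hy' : y ≤ K) hv
        exact ⟨v, hv, hfix v this⟩

/-- Interpolating a subspace of prescribed dimension. -/
theorem exists_subspace_between {F V : Type*} [Field F] [AddCommGroup V] [Module F V]
    [FiniteDimensional F V] (A B : Submodule F V) (h : A ≤ B) (t : ℕ)
    (h1 : Module.finrank F A ≤ t) (h2 : t ≤ Module.finrank F B) :
    ∃ C : Submodule F V, A ≤ C ∧ C ≤ B ∧ Module.finrank F C = t := by
  induction t, h1 using Nat.le_induction with
  | base => exact ⟨A, le_rfl, h, rfl⟩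
  | succ t ht ih =>
    obtain ⟨C, hAC, hCB, hC⟩ := ih (by omega)
    have hlt : C < B := lt_of_le_of_ne hCB (by rintro rfl; omega)
    obtain ⟨x, hxB, hxC⟩ := SetLike.exists_of_lt hlt
    refine ⟨C ⊔ Submodule.span F {x}, hAC.trans le_sup_left,
      sup_le hCB (by simpa using hxB), ?_⟩
    have h3 := Submodule.finrank_add_le_finrank_add_finrank C (Submodule.span F {x})
    have h4 : Module.finrank F (Submodule.span F {x}) ≤ 1 := by
      simpa using finrank_span_le_card (R := F) ({x} : Set V)
    have h5 : C < C ⊔ Submodule.span F {x} := by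
      refine lt_of_le_of_ne le_sup_left fun h => hxC ?_
      rw [h]; exact Submodule.mem_sup_right (Submodule.mem_span_singleton_self x)
    have h6 := Submodule.finrank_lt_finrank_of_lt h5
    omega


/-! ### The averaging argument -/

section Averaging

/-- Comparability. -/
def Cmp {P : Type*} [LE P] (x y : P) : Prop := x ≤ y ∨ y ≤ x

theorem Cmp.symm {P : Type*} [LE P] {x y : P} (h : Cmp x y) : Cmp y x := Or.symm h

/-- `f` extended by `1` to the diagonal. -/
noncomputable def FF {P Γ : Type*} [Group Γ] (f : P → P → Γ) (x y : P) : Γ :=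
  if x = y then 1 else f x y

/-- A bad (violated) triangle. -/
def BadT {P Γ : Type*} [Group Γ] (f : P → P → Γ) (x y z : P) : Prop :=
  FF f x y * FF f y z * FF f z x ≠ 1

/-- Antisymmetry of a cochain on a set of vertices. -/
def Anti {P Γ : Type*} [LE P] [Group Γ] (Lk : P → Prop) (f : P → P → Γ) : Prop :=
  ∀ x y, Lk x → Lk y → x ≠ y → Cmp x y → f x y = (f y x)⁻¹

theorem FF_self {P Γ : Type*} [Group Γ] (f : P → P → Γ) (x : P) : FF f x x = 1 := by simp [FF]

theorem FF_anti {P Γ : Type*} [LE P] [Group Γ] {Lk : P → Prop} {f : P → P → Γ} (hf : Anti Lk f)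
    {x y : P} (hx : Lk x) (hy : Lk y) (h : Cmp x y) : FF f x y = (FF f y x)⁻¹ := by
  by_cases hxy : x = y
  · simp [FF, hxy]
  · simp only [FF, hxy, Ne.symm hxy, if_false]
    exact hf x y hx hy hxy h

/-- An admissible triangle: its colours are read off three distinct positions of `τ`. -/
def TriOK {P : Type*} [LE P] (Lk : P → Prop) (dim : P → ℕ) (τ : Fin 7 → P) (x y z : P) : Prop :=
  Lk x ∧ Lk y ∧ Lk z ∧ Cmp x y ∧ Cmp y z ∧ Cmp x z ∧
    ((x = y ∨ y = z ∨ x = z) ∨ ∃ α β γ : Fin 7, (α ≠ β ∧ β ≠ γ ∧ α ≠ γ) ∧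
      dim x = dim (τ α) ∧ dim y = dim (τ β) ∧ dim z = dim (τ γ))

/-- Existence of a cone with bounded fillings, with colour parameters `θ`. -/
def IsCone {P : Type*} [PartialOrder P] (Lk : P → Prop) (dim : P → ℕ) (Γ : Type*) [Group Γ]
    (θ : Fin 5 → P) : Prop :=
  ∃ pot : (P → P → Γ) → P → Γ, ∀ u v, Lk u → Lk v → u < v →
    ∃ D : List (P × P × P), D.length ≤ 12 ∧
      (∀ t ∈ D, TriOK Lk dim (Matrix.vecCons u (Matrix.vecCons v θ)) t.1 t.2.1 t.2.2) ∧
      ∀ f : P → P → Γ, Anti Lk f → (∀ t ∈ D, ¬ BadT f t.1 t.2.1 t.2.2) →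
        f u v = pot f u * (pot f v)⁻¹

theorem not_badT_of_degenerate {P Γ : Type*} [LE P] [Group Γ] {Lk : P → Prop} {f : P → P → Γ}
    (hf : Anti Lk f) {x y z : P} (hx : Lk x) (hy : Lk y) (hz : Lk z) (hxy : Cmp x y)
    (hyz : Cmp y z) (hxz : Cmp x z) (h : x = y ∨ y = z ∨ x = z) : ¬ BadT f x y z := by
  unfold BadT
  rw [not_not]
  rcases h with rfl | rfl | rfl
  · rw [FF_self, FF_anti hf hx hz hxz]; simp
  · rw [FF_self, FF_anti hf hx hy hxy]; simp
  · rw [FF_self, FF_anti hf hx hy hxy]; simp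

theorem sum_pi_le {P : Type*} (E : Finset P) (φ : P → P → P → ℝ)
    (hφ : ∀ x y z, 0 ≤ φ x y z) (α β γ : Fin 7) (h : α ≠ β ∧ β ≠ γ ∧ α ≠ γ) :
    ∑ τ ∈ Fintype.piFinset (fun _ : Fin 7 => E), φ (τ α) (τ β) (τ γ) ≤
      (E.card : ℝ) ^ 4 * ∑ p ∈ E ×ˢ E ×ˢ E, φ p.1 p.2.1 p.2.2 := by
  obtain ⟨h1, h2, h3⟩ := h
  have key : ∑ τ ∈ Fintype.piFinset (fun _ : Fin 7 => E), φ (τ α) (τ β) (τ γ) =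
      ∑ p ∈ E ×ˢ E ×ˢ E, ∑ τ ∈ (Fintype.piFinset (fun _ : Fin 7 => E)) with
        (τ α, τ β, τ γ) = p, φ (τ α) (τ β) (τ γ) := by
    rw [Finset.sum_fiberwise_of_maps_to]
    intro τ hτ
    simp only [Fintype.mem_piFinset] at hτ
    simp [hτ]
  rw [key, Finset.mul_sum]
  refine Finset.sum_le_sum fun p _ => ?_
  have hc : ∑ τ ∈ (Fintype.piFinset (fun _ : Fin 7 => E)) with
        (τ α, τ β, τ γ) = p, φ (τ α) (τ β) (τ γ) =
      ∑ τ ∈ (Fintype.piFinset (fun _ : Fin 7 => E)) with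
        (τ α, τ β, τ γ) = p, φ p.1 p.2.1 p.2.2 := by
    refine Finset.sum_congr rfl fun τ hτ => ?_
    rw [← (Finset.mem_filter.1 hτ).2]
  rw [hc, Finset.sum_const, nsmul_eq_mul]
  refine mul_le_mul_of_nonneg_right ?_ (hφ _ _ _)
  have hsub : ((Fintype.piFinset (fun _ : Fin 7 => E)).filter fun τ => (τ α, τ β, τ γ) = p) ⊆
      Fintype.piFinset (fun i : Fin 7 => if i = α then {p.1} else if i = β then {p.2.1} else
        if i = γ then {p.2.2} else E) := by
    intro τ hτ
    obtain ⟨hτ1, hp⟩ := Finset.mem_filter.1 hτ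
    rw [Fintype.mem_piFinset] at hτ1 ⊢
    rw [← hp]
    intro i
    split_ifs with ha hb hg
    · simp [ha]
    · simp [hb]
    · simp [hg]
    · exact hτ1 i
  have hle := Finset.card_le_card hsub
  rw [Fintype.card_piFinset] at hle
  have hprod : ∏ i : Fin 7, (if i = α then {p.1} else if i = β then {p.2.1} else
        if i = γ then {p.2.2} else E : Finset P).card =
      ∏ i : Fin 7, if i ∈ ({α, β, γ} : Finset (Fin 7)) then 1 else E.card := by
    refine Finset.prod_congr rfl fun i _ => ?_
    simp only [Finset.mem_insert, Finset.mem_singleton]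
    split_ifs <;> simp_all
  rw [hprod, Finset.prod_ite, Finset.prod_const_one, one_mul, Finset.prod_const] at hle
  have hcard : (Finset.univ.filter fun i : Fin 7 => i ∉ ({α, β, γ} : Finset (Fin 7))).card = 4 := by
    have : (Finset.univ.filter fun i : Fin 7 => i ∉ ({α, β, γ} : Finset (Fin 7))) =
        ({α, β, γ} : Finset (Fin 7))ᶜ := by ext; simp
    rw [this, Finset.card_compl, Finset.card_eq_three.2 ⟨α, β, γ, h1, h3, h2, rfl⟩]
    simp
  rw [hcard] at hle
  exact_mod_cast hle

/-- The number of translates of a triangle that are bad. -/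
noncomputable def eps {P H Γ : Type*} [Group Γ] [Group H] [Fintype H] [MulAction H P]
    (f : P → P → Γ) (x y z : P) : ℝ :=
  ∑ h : H, if BadT f (h • x) (h • y) (h • z) then (1 : ℝ) else 0

theorem averaging {P H Γ : Type*} [PartialOrder P] [Group Γ] [Group H] [Fintype H] [MulAction H P]
    (Lk : P → Prop) (dim : P → ℕ)
    (hLk : ∀ (h : H) x, Lk x → Lk (h • x)) (hdim : ∀ (h : H) x, dim (h • x) = dim x)
    (hle : ∀ (h : H) (x y : P), x ≤ y → h • x ≤ h • y)
    (E : Finset P) (hE : ∀ x ∈ E, Lk x)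
    (tr : ∀ x ∈ E, ∀ y ∈ E, ∀ z ∈ E, ∀ x' y' z', Lk x' → Lk y' → Lk z' → Cmp x' y' → Cmp y' z' →
      Cmp x' z' → dim x' = dim x → dim y' = dim y → dim z' = dim z →
      ∃ h : H, h • x = x' ∧ h • y = y' ∧ h • z = z')
    (f : P → P → Γ) (hf : Anti Lk f)
    (Θ : Finset (Fin 5 → P)) (hΘ : Θ.Nonempty) (hΘE : ∀ θ ∈ Θ, ∀ i, θ i ∈ E)
    (hcone : ∀ θ ∈ Θ, IsCone Lk dim Γ θ) :
    ∃ g : P → Γ, (Θ.card : ℝ) * (∑ h : H, ∑ p ∈ E ×ˢ E,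
      if p.1 < p.2 ∧ f (h • p.1) (h • p.2) ≠ g (h • p.1) * (g (h • p.2))⁻¹ then (1 : ℝ) else 0) ≤
      12 * 343 * (E.card : ℝ) ^ 4 * ∑ p ∈ E ×ˢ E ×ˢ E, eps (H := H) f p.1 p.2.1 p.2.2 := by
  have heps0 : ∀ x y z, 0 ≤ eps (H := H) f x y z := fun x y z =>
    Finset.sum_nonneg fun h _ => by split_ifs <;> norm_num
  choose! pot hpot using hcone
  have hcmp : ∀ (h : H) (x y : P), Cmp x y → Cmp (h • x) (h • y) := by
    rintro h x y (hxy | hxy)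
    · exact Or.inl (hle _ _ _ hxy)
    · exact Or.inr (hle _ _ _ hxy)
  let fh : H → P → P → Γ := fun h a b => f (h • a) (h • b)
  have hfh : ∀ h, Anti Lk (fh h) := fun h x y hx hy hne hxy =>
    hf _ _ (hLk h _ hx) (hLk h _ hy) (fun he => hne (MulAction.injective h he)) (hcmp h _ _ hxy)
  have hFF : ∀ h x y, FF (fh h) x y = FF f (h • x) (h • y) := by
    intro h x y
    simp only [FF, fh, (MulAction.injective h).eq_iff]
  have hBad : ∀ h x y z, BadT (fh h) x y z ↔ BadT f (h • x) (h • y) (h • z) := by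
    intro h x y z
    simp only [BadT, hFF]
  let g : (Fin 5 → P) → H → P → Γ := fun θ h w => pot θ (fh h) (h⁻¹ • w)
  let τ : (Fin 5 → P) → P × P → Fin 7 → P := fun θ p =>
    Matrix.vecCons p.1 (Matrix.vecCons p.2 θ)
  let I3 : Finset (Fin 7 × Fin 7 × Fin 7) :=
    Finset.univ.filter fun a => a.1 ≠ a.2.1 ∧ a.2.1 ≠ a.2.2 ∧ a.1 ≠ a.2.2
  let W : (Fin 5 → P) → P × P → ℝ := fun θ p =>
    ∑ a ∈ I3, eps (H := H) f (τ θ p a.1) (τ θ p a.2.1) (τ θ p a.2.2)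
  have hW0 : ∀ θ p, 0 ≤ W θ p := fun θ p => Finset.sum_nonneg fun a _ => heps0 _ _ _
  have htri : ∀ θ ∈ Θ, ∀ p ∈ E ×ˢ E, ∀ k : H, ∀ x y z,
      TriOK Lk dim (τ θ (k • p.1, k • p.2)) x y z → eps (H := H) f x y z ≤ W θ p := by
    rintro θ hθ p hp k x y z ⟨hx, hy, hz, hxy, hyz, hxz, hdeg | ⟨α, β, γ, hd, h1, h2, h3⟩⟩
    · have : eps (H := H) f x y z = 0 := by
        refine Finset.sum_eq_zero fun h _ => ?_
        rw [if_neg]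
        refine not_badT_of_degenerate hf (hLk _ _ hx) (hLk _ _ hy) (hLk _ _ hz) (hcmp _ _ _ hxy)
          (hcmp _ _ _ hyz) (hcmp _ _ _ hxz) ?_
        rcases hdeg with rfl | rfl | rfl <;> simp
      rw [this]; exact hW0 _ _
    · have hmem : ∀ i, τ θ p i ∈ E := by
        intro i
        obtain ⟨hp1, hp2⟩ := Finset.mem_product.1 hp
        refine Fin.cases ?_ (fun i => ?_) i
        · exact hp1
        · refine Fin.cases ?_ (fun i => ?_) i
          · exact hp2
          · exact hΘE θ hθ i
      have hdt : ∀ i, dim (τ θ (k • p.1, k • p.2) i) = dim (τ θ p i) := by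
        intro i
        refine Fin.cases ?_ (fun i => ?_) i
        · exact hdim _ _
        · refine Fin.cases ?_ (fun i => ?_) i
          · exact hdim _ _
          · rfl
      rw [hdt] at h1 h2 h3
      obtain ⟨k', e1, e2, e3⟩ := tr _ (hmem α) _ (hmem β) _ (hmem γ) x y z hx hy hz hxy hyz hxz
        h1 h2 h3
      have heq : eps (H := H) f x y z = eps (H := H) f (τ θ p α) (τ θ p β) (τ θ p γ) := by
        unfold eps
        rw [← e1, ← e2, ← e3]
        refine Fintype.sum_equiv (Equiv.mulRight k') _ _ fun h => ?_
        simp [mul_smul]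
      rw [heq]
      exact Finset.single_le_sum (f := fun a : Fin 7 × Fin 7 × Fin 7 =>
        eps (H := H) f (τ θ p a.1) (τ θ p a.2.1) (τ θ p a.2.2)) (fun a _ => heps0 _ _ _)
        (show (α, β, γ) ∈ I3 by simpa [I3] using hd)
  have hinner : ∀ θ ∈ Θ, ∀ p ∈ E ×ˢ E, ∀ k : H,
      (∑ h' : H, if p.1 < p.2 ∧ f ((h' * k) • p.1) ((h' * k) • p.2) ≠
        g θ h' ((h' * k) • p.1) * (g θ h' ((h' * k) • p.2))⁻¹ then (1 : ℝ) else 0) ≤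
        12 * W θ p := by
    intro θ hθ p hp k
    by_cases hlt : p.1 < p.2
    swap
    · simp only [hlt, false_and, if_false, Finset.sum_const_zero]
      exact mul_nonneg (by norm_num) (hW0 _ _)
    obtain ⟨hp1, hp2⟩ := Finset.mem_product.1 hp
    have hlt' : k • p.1 < k • p.2 :=
      lt_of_le_of_ne (hle _ _ _ hlt.le) fun he => hlt.ne (MulAction.injective k he)
    obtain ⟨D, hDlen, hDok, hD⟩ := hpot θ hθ (k • p.1) (k • p.2) (hLk _ _ (hE _ hp1))
      (hLk _ _ (hE _ hp2)) hlt'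
    calc (∑ h' : H, if p.1 < p.2 ∧ f ((h' * k) • p.1) ((h' * k) • p.2) ≠
        g θ h' ((h' * k) • p.1) * (g θ h' ((h' * k) • p.2))⁻¹ then (1 : ℝ) else 0)
        ≤ ∑ h' : H, ∑ t ∈ D.toFinset,
            if BadT f (h' • t.1) (h' • t.2.1) (h' • t.2.2) then (1 : ℝ) else 0 := by
          refine Finset.sum_le_sum fun h' _ => ?_
          split_ifs with hc
          · obtain ⟨-, hc⟩ := hc
            have hex : ∃ t ∈ D, BadT (fh h') t.1 t.2.1 t.2.2 := by
              by_contra hno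
              push Not at hno
              refine hc ?_
              have := hD (fh h') (hfh h') hno
              simpa [g, fh, mul_smul] using this
            obtain ⟨t, ht, hbad⟩ := hex
            rw [hBad] at hbad
            have := Finset.single_le_sum (f := fun t : P × P × P =>
              if BadT f (h' • t.1) (h' • t.2.1) (h' • t.2.2) then (1 : ℝ) else 0)
              (s := D.toFinset) (fun t _ => by split_ifs <;> norm_num) (List.mem_toFinset.2 ht)
            simpa [hbad] using this
          · exact Finset.sum_nonneg fun t _ => by split_ifs <;> norm_num
      _ = ∑ t ∈ D.toFinset, eps (H := H) f t.1 t.2.1 t.2.2 := by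
          rw [Finset.sum_comm]; rfl
      _ ≤ ∑ t ∈ D.toFinset, W θ p :=
          Finset.sum_le_sum fun t ht => htri θ hθ p hp k _ _ _ (hDok t (List.mem_toFinset.1 ht))
      _ ≤ 12 * W θ p := by
          rw [Finset.sum_const, nsmul_eq_mul]
          refine mul_le_mul_of_nonneg_right ?_ (hW0 _ _)
          exact_mod_cast (List.toFinset_card_le D).trans hDlen
  let X : (Fin 5 → P) → H → ℝ := fun θ h' => ∑ h : H, ∑ p ∈ E ×ˢ E,
      if p.1 < p.2 ∧ f (h • p.1) (h • p.2) ≠ g θ h' (h • p.1) * (g θ h' (h • p.2))⁻¹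
        then (1 : ℝ) else 0
  have hX : ∀ θ ∈ Θ, ∑ h' : H, X θ h' ≤ (Fintype.card H : ℝ) * ∑ p ∈ E ×ˢ E, 12 * W θ p := by
    intro θ hθ
    have h1 : ∀ h' : H, X θ h' = ∑ k : H, ∑ p ∈ E ×ˢ E,
        if p.1 < p.2 ∧ f ((h' * k) • p.1) ((h' * k) • p.2) ≠
        g θ h' ((h' * k) • p.1) * (g θ h' ((h' * k) • p.2))⁻¹ then (1 : ℝ) else 0 := by
      intro h'
      exact (Fintype.sum_equiv (Equiv.mulLeft h') _ _ fun k => rfl).symm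
    simp_rw [h1]
    rw [Finset.sum_comm]
    calc _ ≤ ∑ k : H, ∑ p ∈ E ×ˢ E, 12 * W θ p := by
          refine Finset.sum_le_sum fun k _ => ?_
          rw [Finset.sum_comm]
          exact Finset.sum_le_sum fun p hp => hinner θ hθ p hp k
      _ = _ := by rw [Finset.sum_const, nsmul_eq_mul, Finset.card_univ]
  set R : ℝ := ∑ p ∈ E ×ˢ E ×ˢ E, eps (H := H) f p.1 p.2.1 p.2.2 with hR
  have hR0 : 0 ≤ R := Finset.sum_nonneg fun p _ => heps0 _ _ _
  have hWsum : ∑ θ ∈ Θ, ∑ p ∈ E ×ˢ E, W θ p ≤ 343 * ((E.card : ℝ) ^ 4 * R) := by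
    have h1 : ∀ a ∈ I3, ∑ θ ∈ Θ, ∑ p ∈ E ×ˢ E,
        eps (H := H) f (τ θ p a.1) (τ θ p a.2.1) (τ θ p a.2.2) ≤ (E.card : ℝ) ^ 4 * R := by
      intro a ha
      refine le_trans ?_ (sum_pi_le E (eps (H := H) f) heps0 a.1 a.2.1 a.2.2
        (by simpa [I3] using ha))
      rw [← Finset.sum_product']
      have hinj : Set.InjOn (fun x : (Fin 5 → P) × (P × P) => τ x.1 x.2)
          (Θ ×ˢ (E ×ˢ E) : Finset _) := by
        rintro ⟨θ, p, q⟩ _ ⟨θ', p', q'⟩ _ h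
        have h := h
        simp only [τ] at h
        obtain ⟨h1, h2⟩ := Matrix.vecCons_inj.1 h
        obtain ⟨h2, h3⟩ := Matrix.vecCons_inj.1 h2
        rw [h1, h2, h3]
      rw [← Finset.sum_image (f := fun t : Fin 7 → P => eps (H := H) f (t a.1) (t a.2.1) (t a.2.2))
        hinj]
      refine Finset.sum_le_sum_of_subset_of_nonneg ?_ fun _ _ _ => heps0 _ _ _
      intro t ht
      obtain ⟨⟨θ, p⟩, hx, rfl⟩ := Finset.mem_image.1 ht
      obtain ⟨hθ, hp⟩ := Finset.mem_product.1 hx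
      obtain ⟨hp1, hp2⟩ := Finset.mem_product.1 hp
      rw [Fintype.mem_piFinset]
      intro i
      refine Fin.cases ?_ (fun i => ?_) i
      · exact hp1
      · refine Fin.cases ?_ (fun i => ?_) i
        · exact hp2
        · exact hΘE θ hθ i
    calc ∑ θ ∈ Θ, ∑ p ∈ E ×ˢ E, W θ p
        = ∑ a ∈ I3, ∑ θ ∈ Θ, ∑ p ∈ E ×ˢ E,
            eps (H := H) f (τ θ p a.1) (τ θ p a.2.1) (τ θ p a.2.2) := by
          simp only [W]
          rw [Finset.sum_comm' (s := I3) (t := fun _ => Θ) (t' := Θ) (s' := fun _ => I3)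
            (by intro x y; tauto)]
          refine Finset.sum_congr rfl fun θ _ => ?_
          rw [Finset.sum_comm]
      _ ≤ ∑ a ∈ I3, (E.card : ℝ) ^ 4 * R := Finset.sum_le_sum h1
      _ ≤ 343 * ((E.card : ℝ) ^ 4 * R) := by
          rw [Finset.sum_const, nsmul_eq_mul]
          refine mul_le_mul_of_nonneg_right ?_ (by positivity)
          have : I3.card ≤ 343 := (Finset.card_le_univ _).trans (by simp)
          exact_mod_cast this
  have hHpos : (0 : ℝ) < Fintype.card H := by exact_mod_cast Fintype.card_pos
  have hΘpos : (0 : ℝ) < Θ.card := by exact_mod_cast hΘ.card_pos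
  have htot : ∑ x ∈ Θ ×ˢ (Finset.univ : Finset H), X x.1 x.2 ≤
      ∑ x ∈ Θ ×ˢ (Finset.univ : Finset H), 12 * 343 * (E.card : ℝ) ^ 4 * R / Θ.card := by
    rw [Finset.sum_const, Finset.sum_product, Finset.card_product, nsmul_eq_mul]
    calc ∑ θ ∈ Θ, ∑ h' : H, X θ h' ≤ ∑ θ ∈ Θ, (Fintype.card H : ℝ) * ∑ p ∈ E ×ˢ E, 12 * W θ p :=
          Finset.sum_le_sum hX
      _ = (Fintype.card H : ℝ) * (12 * ∑ θ ∈ Θ, ∑ p ∈ E ×ˢ E, W θ p) := by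
          simp_rw [← Finset.mul_sum]
      _ ≤ (Fintype.card H : ℝ) * (12 * (343 * ((E.card : ℝ) ^ 4 * R))) := by gcongr
      _ = _ := by
          rw [Finset.card_univ]; push_cast
          field_simp
  obtain ⟨⟨θ, h'⟩, hx, hle'⟩ := Finset.exists_le_of_sum_le
    (hΘ.product (Finset.univ_nonempty (α := H))) htot
  refine ⟨g θ h', ?_⟩
  have := (le_div_iff₀ hΘpos).1 hle'
  rw [mul_comm]
  exact this

end Averaging


set_option linter.unusedSectionVars false
section LinkAveraging

variable {F : Type} [Field F] [Fintype F] {n : ℕ}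

/-- Vertices of the link of `s`. -/
def LinkV (S : Finset ℕ) (s : Finset (Submodule F (Fin n → F)))
    (x : Submodule F (Fin n → F)) : Prop :=
  x ∉ s ∧ Module.finrank F x ∈ S ∧ ∀ W ∈ s, Cmp x W

/-- Dimension function. -/
noncomputable def dm (x : Submodule F (Fin n → F)) : ℕ := Module.finrank F x

/-- The symmetry group of the link. -/
def symGroup (s : Finset (Submodule F (Fin n → F))) :
    Subgroup (Submodule F (Fin n → F) ≃o Submodule F (Fin n → F)) where
  carrier := {h | (∀ W, dm (h W) = dm W) ∧ ∀ W ∈ s, h W = W}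
  mul_mem' := by
    rintro a b ⟨ha, ha'⟩ ⟨hb, hb'⟩
    refine ⟨fun W => ?_, fun W hW => ?_⟩
    · rw [RelIso.mul_apply, ha, hb]
    · rw [RelIso.mul_apply, hb' W hW, ha' W hW]
  one_mem' := ⟨fun _ => rfl, fun _ _ => rfl⟩
  inv_mem' := by
    rintro a ⟨ha, ha'⟩
    refine ⟨fun W => ?_, fun W hW => ?_⟩
    · rw [← ha, RelIso.apply_inv_self]
    · conv_lhs => rw [← ha' W hW]
      rw [RelIso.inv_apply_self]

noncomputable instance (s : Finset (Submodule F (Fin n → F))) : Fintype (symGroup s) :=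
  haveI : Finite (Submodule F (Fin n → F) ≃o Submodule F (Fin n → F)) := DFunLike.finite _
  Fintype.ofFinite _

theorem cmp_eq_of_dm_eq {x y : Submodule F (Fin n → F)} (h : Cmp x y) (hd : dm x = dm y) :
    x = y := by
  rcases h with h | h
  · exact Submodule.eq_of_le_of_finrank_eq h hd
  · exact (Submodule.eq_of_le_of_finrank_eq h hd.symm).symm

theorem exists_sym (s c c' : Finset (Submodule F (Fin n → F)))
    (hc : IsChain (· ≤ ·) (c : Set (Submodule F (Fin n → F))))
    (hc' : IsChain (· ≤ ·) (c' : Set (Submodule F (Fin n → F))))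
    (hsc : s ⊆ c) (hsc' : s ⊆ c') (him : c.image dm = c'.image dm) :
    ∃ h : symGroup s, ∀ x ∈ c, ∀ y ∈ c', dm x = dm y → h • x = y := by
  obtain ⟨E, hE⟩ := exists_equiv_chain c c' hc hc' him
  refine ⟨⟨Submodule.orderIsoMapComap E, ?_, ?_⟩, ?_⟩
  · intro W
    exact LinearEquiv.finrank_map_eq E W
  · intro W hW
    exact hE W (hsc hW) W (hsc' hW) rfl
  · intro x hx y hy hxy
    exact hE x hx y hy hxy

theorem sym_dm {s : Finset (Submodule F (Fin n → F))} (h : symGroup s)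
    (x : Submodule F (Fin n → F)) : dm (h • x) = dm x := h.2.1 x

theorem sym_fix {s : Finset (Submodule F (Fin n → F))} (h : symGroup s)
    (x : Submodule F (Fin n → F)) (hx : x ∈ s) : h • x = x := h.2.2 x hx

theorem sym_le {s : Finset (Submodule F (Fin n → F))} (h : symGroup s)
    (x y : Submodule F (Fin n → F)) : h • x ≤ h • y ↔ x ≤ y := h.1.le_iff_le

theorem sym_link {S : Finset ℕ} {s : Finset (Submodule F (Fin n → F))} (h : symGroup s)
    (x : Submodule F (Fin n → F)) (hx : LinkV S s x) : LinkV S s (h • x) := by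
  obtain ⟨h1, h2, h3⟩ := hx
  refine ⟨fun hm => h1 ?_, ?_, fun W hW => ?_⟩
  · have : h • x = h • (h • x) := (sym_fix h _ hm).symm
    rw [MulAction.injective h this]; exact hm
  · have := sym_dm h x
    unfold dm at this
    rw [this]; exact h2
  · rw [← sym_fix h W hW]
    rcases h3 W hW with h4 | h4
    · exact Or.inl ((sym_le h _ _).2 h4)
    · exact Or.inr ((sym_le h _ _).2 h4)

/-- Translating a finset. -/
noncomputable def tl {s : Finset (Submodule F (Fin n → F))} (h : symGroup s)
    (T : Finset (Submodule F (Fin n → F))) : Finset (Submodule F (Fin n → F)) :=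
  T.image (fun x => h • x)

theorem tl_mul {s : Finset (Submodule F (Fin n → F))} (h k : symGroup s)
    (T : Finset (Submodule F (Fin n → F))) : tl (h * k) T = tl h (tl k T) := by
  simp only [tl, Finset.image_image]
  congr 1

theorem tl_one {s : Finset (Submodule F (Fin n → F))}
    (T : Finset (Submodule F (Fin n → F))) : tl (1 : symGroup s) T = T := by
  simp [tl]

theorem tl_mem {S : Finset ℕ} {s : Finset (Submodule F (Fin n → F))} (h : symGroup s)
    {T : Finset (Submodule F (Fin n → F))} (hT : T ∈ maxFacesAbove F n S s) :
    tl h T ∈ maxFacesAbove F n S s := by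
  simp only [maxFacesAbove, Finset.mem_filter, Finset.mem_univ, true_and] at hT ⊢
  obtain ⟨⟨⟨h1, h2⟩, h3⟩, h4⟩ := hT
  refine ⟨⟨⟨?_, ?_⟩, ?_⟩, ?_⟩
  · intro a ha b hb _
    simp only [tl, Finset.coe_image, Set.mem_image] at ha hb
    obtain ⟨x, hx, rfl⟩ := ha
    obtain ⟨y, hy, rfl⟩ := hb
    rcases h1.total hx hy with h | h'
    · exact Or.inl ((sym_le _ _ _).2 h)
    · exact Or.inr ((sym_le _ _ _).2 h')
  · intro W hW
    obtain ⟨x, hx, rfl⟩ := Finset.mem_image.1 hW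
    have := sym_dm h x
    unfold dm at this
    rw [this]; exact h2 x hx
  · intro i hi
    obtain ⟨W, hW, rfl⟩ := h3 i hi
    exact ⟨h • W, Finset.mem_image_of_mem _ hW, sym_dm h W⟩
  · intro W hW
    exact Finset.mem_image.2 ⟨W, h4 hW, sym_fix h W hW⟩

theorem sum_max {S : Finset ℕ} {s : Finset (Submodule F (Fin n → F))}
    {T0 : Finset (Submodule F (Fin n → F))} (hT0 : T0 ∈ maxFacesAbove F n S s)
    (φ : Finset (Submodule F (Fin n → F)) → ℝ) :
    (∑ T ∈ maxFacesAbove F n S s, φ T) / ((maxFacesAbove F n S s).card : ℝ) =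
      (∑ h : symGroup s, φ (tl h T0)) / (Fintype.card (symGroup s) : ℝ) := by
  have himg : ∀ T ∈ maxFacesAbove F n S s, T.image dm = S := by
    intro T hT
    simp only [maxFacesAbove, Finset.mem_filter, Finset.mem_univ, true_and] at hT
    obtain ⟨⟨⟨h1, h2⟩, h3⟩, h4⟩ := hT
    ext i
    constructor
    · intro hi
      obtain ⟨x, hx, rfl⟩ := Finset.mem_image.1 hi
      exact h2 x hx
    · intro hi
      obtain ⟨W, hW, rfl⟩ := h3 i hi
      exact Finset.mem_image.2 ⟨W, hW, rfl⟩
  have htrans : ∀ T ∈ maxFacesAbove F n S s, ∃ k : symGroup s, T = tl k T0 := by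
    intro T hT
    have i1 := himg T hT
    have i0 := himg T0 hT0
    have hT' := hT
    have hT0' := hT0
    simp only [maxFacesAbove, Finset.mem_filter, Finset.mem_univ, true_and] at hT' hT0'
    obtain ⟨k, hk⟩ := exists_sym s T0 T hT0'.1.1.1 hT'.1.1.1 hT0'.2 hT'.2 (i0.trans i1.symm)
    refine ⟨k, ?_⟩
    ext y
    constructor
    · intro hy
      have : dm y ∈ T0.image dm := by rw [i0, ← i1]; exact Finset.mem_image_of_mem _ hy
      obtain ⟨x, hx, hxy⟩ := Finset.mem_image.1 this
      exact Finset.mem_image.2 ⟨x, hx, hk x hx y hy hxy⟩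
    · intro hy
      obtain ⟨x, hx, rfl⟩ := Finset.mem_image.1 hy
      have : dm x ∈ T.image dm := by rw [i1, ← i0]; exact Finset.mem_image_of_mem _ hx
      obtain ⟨y, hy, hxy⟩ := Finset.mem_image.1 this
      rw [hk x hx y hy hxy.symm]; exact hy
  have hM : (0 : ℝ) < (maxFacesAbove F n S s).card := by
    exact_mod_cast Finset.card_pos.2 ⟨T0, hT0⟩
  have hH : (0 : ℝ) < Fintype.card (symGroup s) := by exact_mod_cast Fintype.card_pos
  rw [div_eq_div_iff hM.ne' hH.ne']
  have e1 : ∑ T ∈ maxFacesAbove F n S s, ∑ h : symGroup s, φ (tl h T) =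
      (∑ h : symGroup s, φ (tl h T0)) * ((maxFacesAbove F n S s).card : ℝ) := by
    rw [mul_comm, ← nsmul_eq_mul, ← Finset.sum_const]
    refine Finset.sum_congr rfl fun T hT => ?_
    obtain ⟨k, rfl⟩ := htrans T hT
    refine Fintype.sum_equiv (Equiv.mulRight k) _ _ fun h => ?_
    simp [tl_mul]
  have e2 : ∑ T ∈ maxFacesAbove F n S s, ∑ h : symGroup s, φ (tl h T) =
      (∑ T ∈ maxFacesAbove F n S s, φ T) * (Fintype.card (symGroup s) : ℝ) := by
    rw [Finset.sum_comm, mul_comm, ← nsmul_eq_mul, ← Finset.card_univ, ← Finset.sum_const]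
    refine Finset.sum_congr rfl fun h _ => ?_
    refine Finset.sum_bij' (fun T _ => tl h T) (fun T _ => tl h⁻¹ T) (fun T hT => tl_mem h hT)
      (fun T hT => tl_mem _ hT) ?_ ?_ ?_
    · intro T _; rw [← tl_mul]; simp [tl_one]
    · intro T _; rw [← tl_mul]; simp [tl_one]
    · intro T _; rfl
  rw [← e1, e2]

theorem tl_sdiff {s : Finset (Submodule F (Fin n → F))} (h : symGroup s)
    (T : Finset (Submodule F (Fin n → F))) : tl h T \ s = tl h (T \ s) := by
  ext x
  simp only [tl, Finset.mem_sdiff, Finset.mem_image]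
  constructor
  · rintro ⟨⟨y, hy, rfl⟩, hx⟩
    exact ⟨y, ⟨hy, fun hys => hx (by rwa [sym_fix h y hys])⟩, rfl⟩
  · rintro ⟨y, ⟨hy, hys⟩, rfl⟩
    refine ⟨⟨y, hy, rfl⟩, fun hm => hys ?_⟩
    have : h • y = h • (h • y) := (sym_fix h _ hm).symm
    rw [MulAction.injective h this]; exact hm

theorem tl_card {s : Finset (Submodule F (Fin n → F))} (h : symGroup s)
    (T : Finset (Submodule F (Fin n → F))) : (tl h T).card = T.card :=
  Finset.card_image_of_injective _ (MulAction.injective h)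

theorem sum_powersetCard_tl {s : Finset (Submodule F (Fin n → F))} (h : symGroup s)
    (E : Finset (Submodule F (Fin n → F))) (k : ℕ)
    (φ : Finset (Submodule F (Fin n → F)) → ℝ) :
    ∑ e ∈ (tl h E).powersetCard k, φ e = ∑ e ∈ E.powersetCard k, φ (tl h e) := by
  symm
  refine Finset.sum_bij' (fun T _ => tl h T) (fun T _ => tl h⁻¹ T) ?_ ?_ ?_ ?_ ?_
  · intro T hT
    rw [Finset.mem_powersetCard] at hT ⊢
    exact ⟨Finset.image_subset_image hT.1, (tl_card h T).trans hT.2⟩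
  · intro T hT
    rw [Finset.mem_powersetCard] at hT ⊢
    refine ⟨?_, (tl_card _ T).trans hT.2⟩
    have : E = tl h⁻¹ (tl h E) := by rw [← tl_mul]; simp [tl_one]
    rw [this]
    exact Finset.image_subset_image hT.1
  · intro T _; rw [← tl_mul]; simp [tl_one]
  · intro T _; rw [← tl_mul]; simp [tl_one]
  · intro T _; rfl

end LinkAveraging


set_option linter.unusedSectionVars false
section LinkAveraging

variable {F : Type} [Field F] [Fintype F] {n : ℕ}

/-- Indicator of a violated triangle, as in `linkWt`. -/
noncomputable def ind3 {Γ : Type} [Group Γ]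
    (f : Submodule F (Fin n → F) → Submodule F (Fin n → F) → Γ)
    (e : Finset (Submodule F (Fin n → F))) : ℝ :=
  if ∃ u ∈ e, ∃ v ∈ e, ∃ w ∈ e, u ≠ v ∧ v ≠ w ∧ u ≠ w ∧ f u v * f v w * f w u ≠ 1
  then (1 : ℝ) else 0

/-- Indicator of a violated edge, as in `linkDist`. -/
noncomputable def ind2 {Γ : Type} [Group Γ]
    (f : Submodule F (Fin n → F) → Submodule F (Fin n → F) → Γ)
    (g : Submodule F (Fin n → F) → Γ)
    (e : Finset (Submodule F (Fin n → F))) : ℝ :=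
  if ∃ u ∈ e, ∃ v ∈ e, u ≠ v ∧ f u v ≠ g u * (g v)⁻¹ then (1 : ℝ) else 0

theorem mem_link {S : Finset ℕ} {s T0 : Finset (Submodule F (Fin n → F))}
    (hT0 : T0 ∈ maxFacesAbove F n S s) {x : Submodule F (Fin n → F)} (hx : x ∈ T0 \ s) :
    LinkV S s x := by
  simp only [maxFacesAbove, Finset.mem_filter, Finset.mem_univ, true_and] at hT0
  rw [Finset.mem_sdiff] at hx
  exact ⟨hx.2, hT0.1.1.2 x hx.1, fun W hW => hT0.1.1.1.total hx.1 (hT0.2 hW)⟩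

theorem mem_cmp {S : Finset ℕ} {s T0 : Finset (Submodule F (Fin n → F))}
    (hT0 : T0 ∈ maxFacesAbove F n S s) {x y : Submodule F (Fin n → F)} (hx : x ∈ T0 \ s)
    (hy : y ∈ T0 \ s) : Cmp x y := by
  simp only [maxFacesAbove, Finset.mem_filter, Finset.mem_univ, true_and] at hT0
  rw [Finset.mem_sdiff] at hx hy
  exact hT0.1.1.1.total hx.1 hy.1

theorem chain_aux {S : Finset ℕ} {s : Finset (Submodule F (Fin n → F))}
    (hs : IsChain (· ≤ ·) (s : Set (Submodule F (Fin n → F))))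
    {x y z : Submodule F (Fin n → F)} (hx : LinkV S s x) (hy : LinkV S s y) (hz : LinkV S s z)
    (hxy : Cmp x y) (hyz : Cmp y z) (hxz : Cmp x z) :
    IsChain (· ≤ ·) ((insert x (insert y (insert z s)) : Finset (Submodule F (Fin n → F))) :
      Set (Submodule F (Fin n → F))) := by
  simp only [Finset.coe_insert]
  refine ((hs.insert fun W hW _ => hz.2.2 W hW).insert fun W hW _ => ?_).insert fun W hW _ => ?_
  · rcases hW with rfl | hW
    · exact hyz
    · exact hy.2.2 W hW
  · rcases hW with rfl | rfl | hW
    · exact hxy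
    · exact hxz
    · exact hx.2.2 W hW

theorem eps_sum_le {S : Finset ℕ} {s T0 : Finset (Submodule F (Fin n → F))}
    (hT0 : T0 ∈ maxFacesAbove F n S s) {Γ : Type} [Group Γ]
    (f : Submodule F (Fin n → F) → Submodule F (Fin n → F) → Γ) (hf : Anti (LinkV S s) f) :
    ∑ p ∈ (T0 \ s) ×ˢ (T0 \ s) ×ˢ (T0 \ s), eps (H := symGroup s) f p.1 p.2.1 p.2.2 ≤
      27 * ∑ h : symGroup s, ∑ e ∈ (T0 \ s).powersetCard 3, ind3 f (tl h e) := by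
  unfold eps
  rw [Finset.sum_comm, Finset.mul_sum]
  refine Finset.sum_le_sum fun h _ => ?_
  have h1 : ∀ p ∈ (T0 \ s) ×ˢ (T0 \ s) ×ˢ (T0 \ s),
      (if BadT f (h • p.1) (h • p.2.1) (h • p.2.2) then (1 : ℝ) else 0) ≤
      ∑ e ∈ (T0 \ s).powersetCard 3, if p ∈ e ×ˢ e ×ˢ e then ind3 f (tl h e) else 0 := by
    rintro ⟨x, y, z⟩ hp
    simp only [Finset.mem_product] at hp
    obtain ⟨hx, hy, hz⟩ := hp
    have hn : ∀ e ∈ (T0 \ s).powersetCard 3,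
        (0 : ℝ) ≤ if (x, y, z) ∈ e ×ˢ e ×ˢ e then ind3 f (tl h e) else 0 := by
      intro e _
      unfold ind3
      split_ifs <;> norm_num
    by_cases hb : BadT f (h • x) (h • y) (h • z)
    · have hcm : ∀ {x y}, x ∈ T0 \ s → y ∈ T0 \ s → Cmp (h • x) (h • y) := by
        intro x y hx hy
        rcases mem_cmp hT0 hx hy with h' | h'
        · exact Or.inl ((sym_le _ _ _).2 h')
        · exact Or.inr ((sym_le _ _ _).2 h')
      have hnd : ¬ (h • x = h • y ∨ h • y = h • z ∨ h • x = h • z) := fun hd =>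
        not_badT_of_degenerate hf (sym_link h _ (mem_link hT0 hx)) (sym_link h _ (mem_link hT0 hy))
          (sym_link h _ (mem_link hT0 hz)) (hcm hx hy) (hcm hy hz) (hcm hx hz) hd hb
      push Not at hnd
      obtain ⟨n1, n2, n3⟩ := hnd
      have m1 : x ≠ y := fun h' => n1 (by rw [h'])
      have m2 : y ≠ z := fun h' => n2 (by rw [h'])
      have m3 : x ≠ z := fun h' => n3 (by rw [h'])
      rw [if_pos hb]
      have he : ({x, y, z} : Finset (Submodule F (Fin n → F))) ∈ (T0 \ s).powersetCard 3 := by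
        rw [Finset.mem_powersetCard]
        refine ⟨?_, Finset.card_eq_three.2 ⟨x, y, z, m1, m3, m2, rfl⟩⟩
        intro w hw
        simp only [Finset.mem_insert, Finset.mem_singleton] at hw
        rcases hw with rfl | rfl | rfl <;> assumption
      refine le_trans ?_ (Finset.single_le_sum hn he)
      rw [if_pos (by simp), ind3, if_pos]
      refine ⟨h • x, Finset.mem_image_of_mem _ (by simp), h • y,
        Finset.mem_image_of_mem _ (by simp), h • z, Finset.mem_image_of_mem _ (by simp),
        n1, n2, n3, ?_⟩
      unfold BadT FF at hb
      rw [if_neg n1, if_neg n2, if_neg (Ne.symm n3)] at hb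
      exact hb
    · rw [if_neg hb]
      exact Finset.sum_nonneg hn
  refine (Finset.sum_le_sum h1).trans ?_
  rw [Finset.sum_comm, Finset.mul_sum]
  refine Finset.sum_le_sum fun e he => ?_
  rw [Finset.mem_powersetCard] at he
  rw [← Finset.sum_filter, Finset.sum_const, nsmul_eq_mul]
  have hc : (((T0 \ s) ×ˢ (T0 \ s) ×ˢ (T0 \ s)).filter fun p => p ∈ e ×ˢ e ×ˢ e).card ≤ 27 := by
    calc _ ≤ (e ×ˢ e ×ˢ e).card := Finset.card_le_card (fun p hp => (Finset.mem_filter.1 hp).2)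
      _ = 27 := by simp [Finset.card_product, he.2]
  have : (0 : ℝ) ≤ ind3 f (tl h e) := by unfold ind3; split_ifs <;> norm_num
  exact mul_le_mul_of_nonneg_right (by exact_mod_cast hc) this

theorem ind2_sum_le {S : Finset ℕ} {s T0 : Finset (Submodule F (Fin n → F))}
    (hT0 : T0 ∈ maxFacesAbove F n S s) {Γ : Type} [Group Γ]
    (f : Submodule F (Fin n → F) → Submodule F (Fin n → F) → Γ) (hf : Anti (LinkV S s) f)
    (g : Submodule F (Fin n → F) → Γ) (h : symGroup s) :
    ∑ e ∈ (T0 \ s).powersetCard 2, ind2 f g (tl h e) ≤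
      ∑ p ∈ (T0 \ s) ×ˢ (T0 \ s),
      if p.1 < p.2 ∧ f (h • p.1) (h • p.2) ≠ g (h • p.1) * (g (h • p.2))⁻¹
        then (1 : ℝ) else 0 := by
  have e1 : ∑ e ∈ (T0 \ s).powersetCard 2, ind2 f g (tl h e) =
      (((T0 \ s).powersetCard 2).filter fun e =>
        ∃ u ∈ tl h e, ∃ v ∈ tl h e, u ≠ v ∧ f u v ≠ g u * (g v)⁻¹).card := by
    unfold ind2
    rw [Finset.sum_boole]
  have e2 : (∑ p ∈ (T0 \ s) ×ˢ (T0 \ s),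
      if p.1 < p.2 ∧ f (h • p.1) (h • p.2) ≠ g (h • p.1) * (g (h • p.2))⁻¹
        then (1 : ℝ) else 0) = (((T0 \ s) ×ˢ (T0 \ s)).filter fun p =>
        p.1 < p.2 ∧ f (h • p.1) (h • p.2) ≠ g (h • p.1) * (g (h • p.2))⁻¹).card := by
    rw [Finset.sum_boole]
  rw [e1, e2]
  norm_cast
  refine Finset.card_le_card_of_surjOn (fun p => {p.1, p.2}) ?_
  intro e he
  simp only [Finset.coe_filter, Set.mem_ofPred_eq, Finset.mem_powersetCard] at he
  obtain ⟨⟨hsub, hcard⟩, u, hu, v, hv, huv, hne⟩ := he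
  obtain ⟨x, hx, rfl⟩ := Finset.mem_image.1 hu
  obtain ⟨y, hy, rfl⟩ := Finset.mem_image.1 hv
  have hxy : x ≠ y := fun h' => huv (by rw [h'])
  have heq : e = {x, y} := by
    symm
    apply Finset.eq_of_subset_of_card_le
    · intro w hw
      simp only [Finset.mem_insert, Finset.mem_singleton] at hw
      rcases hw with rfl | rfl <;> assumption
    · rw [hcard, Finset.card_pair hxy]
  have hxE := hsub hx
  have hyE := hsub hy
  rcases mem_cmp hT0 hxE hyE with hle | hle
  · refine ⟨(x, y), ?_, heq.symm⟩
    simp only [Finset.coe_filter, Set.mem_ofPred_eq, Finset.mem_product]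
    exact ⟨⟨hxE, hyE⟩, lt_of_le_of_ne hle hxy, hne⟩
  · refine ⟨(y, x), ?_, ?_⟩
    · simp only [Finset.coe_filter, Set.mem_ofPred_eq, Finset.mem_product]
      refine ⟨⟨hyE, hxE⟩, lt_of_le_of_ne hle hxy.symm, fun h' => hne ?_⟩
      rw [hf _ _ (sym_link h _ (mem_link hT0 hxE)) (sym_link h _ (mem_link hT0 hyE)) huv
        (Or.inr ((sym_le _ _ _).2 hle)), h']
      simp
    · rw [heq]; exact Finset.pair_comm _ _

theorem numeric_aux {K A B C D W N r a b w δ : ℝ} (hg : K * A ≤ 12 * 343 * r ^ 4 * B)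
    (hDA : D ≤ A) (hB : B ≤ 27 * W) (hH : 0 < N) (hwt : w = W / (a * N)) (hdist : δ = D / (b * N))
    (c3 : 0 < a) (c2 : 0 < b) (c3' : a ≤ r ^ 3) (c2' : r ^ 2 ≤ 4 * b) (hr0 : 0 < r) (hΘ0 : 0 < K)
    (hW0 : 0 ≤ W) (hD0 : 0 ≤ D) (hC : r ^ 5 ≤ C * K) : δ ≤ (12 * 343 * 27 * 4 * C) * w := by
  have hWw : W = w * (a * N) := by rw [hwt]; field_simp
  have hDd : D = δ * (b * N) := by rw [hdist]; field_simp
  have hw0 : 0 ≤ w := by rw [hwt]; positivity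
  have hδ0 : 0 ≤ δ := by rw [hdist]; positivity
  have k1 : K * D ≤ 12 * 343 * r ^ 4 * (27 * W) := by
    calc K * D ≤ K * A := by gcongr
      _ ≤ 12 * 343 * r ^ 4 * B := hg
      _ ≤ _ := by gcongr
  have k2 : W ≤ w * (r ^ 3 * N) := by rw [hWw]; gcongr
  have k3 : δ * (r ^ 2 * N) ≤ 4 * D := by
    rw [hDd]
    have := mul_le_mul_of_nonneg_left c2' (mul_nonneg hδ0 hH.le)
    nlinarith
  have k4 : K * (δ * (r ^ 2 * N)) ≤
      (12 * 343 * 27 * 4) * r ^ 5 * w * (r ^ 2 * N) := by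
    calc K * (δ * (r ^ 2 * N)) ≤ K * (4 * D) := by gcongr
      _ = 4 * (K * D) := by ring
      _ ≤ 4 * (12 * 343 * r ^ 4 * (27 * W)) := by gcongr
      _ ≤ 4 * (12 * 343 * r ^ 4 * (27 * (w * (r ^ 3 * N)))) := by gcongr
      _ = _ := by ring
  have hpos : (0 : ℝ) < r ^ 2 * N := by positivity
  have k5 : K * δ ≤ (12 * 343 * 27 * 4) * r ^ 5 * w := by
    refine le_of_mul_le_mul_right ?_ hpos
    linarith [k4]
  have k6 : K * δ ≤ K * ((12 * 343 * 27 * 4 * C) * w) := by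
    calc _ ≤ _ := k5
      _ ≤ (12 * 343 * 27 * 4) * (C * K) * w := by gcongr
      _ = _ := by ring
  exact le_of_mul_le_mul_left k6 hΘ0

theorem link_main {S : Finset ℕ} {s T0 : Finset (Submodule F (Fin n → F))}
    (hT0 : T0 ∈ maxFacesAbove F n S s) {Γ : Type} [Group Γ]
    (f : Submodule F (Fin n → F) → Submodule F (Fin n → F) → Γ) (hf : Anti (LinkV S s) f)
    (Θ : Finset (Fin 5 → Submodule F (Fin n → F))) (hΘ : Θ.Nonempty)
    (hΘE : ∀ θ ∈ Θ, ∀ i, θ i ∈ T0 \ s) (hcone : ∀ θ ∈ Θ, IsCone (LinkV S s) dm Γ θ)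
    (hr : 3 ≤ (T0 \ s).card) (C : ℝ) (hC : ((T0 \ s).card : ℝ) ^ 5 ≤ C * Θ.card) :
    ∃ g, linkDist F n S s Γ f g ≤ (12 * 343 * 27 * 4 * C) * linkWt F n S s Γ f := by
  have hT0' := hT0
  simp only [maxFacesAbove, Finset.mem_filter, Finset.mem_univ, true_and] at hT0'
  obtain ⟨⟨⟨hT1, hT2⟩, hT3⟩, hT4⟩ := hT0'
  have hs : IsChain (· ≤ ·) (s : Set (Submodule F (Fin n → F))) :=
    hT1.mono (by exact_mod_cast hT4)
  obtain ⟨g, hg⟩ := averaging (H := symGroup s) (LinkV S s) dm (fun h x => sym_link h x)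
    (fun h x => sym_dm h x) (fun h x y => (sym_le h x y).2) (T0 \ s) (fun x hx => mem_link hT0 hx)
    (by
      intro x hx y hy z hz x' y' z' hx' hy' hz' hxy hyz hxz dx dy dz
      obtain ⟨h, hh⟩ := exists_sym s _ _
        (chain_aux hs (mem_link hT0 hx) (mem_link hT0 hy) (mem_link hT0 hz) (mem_cmp hT0 hx hy)
          (mem_cmp hT0 hy hz) (mem_cmp hT0 hx hz))
        (chain_aux hs hx' hy' hz' hxy hyz hxz)
        (by intro W hW; simp [hW]) (by intro W hW; simp [hW])
        (by simp only [Finset.image_insert, dx, dy, dz])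
      exact ⟨h, hh x (by simp) x' (by simp) dx.symm, hh y (by simp) y' (by simp) dy.symm,
        hh z (by simp) z' (by simp) dz.symm⟩)
    f hf Θ hΘ hΘE hcone
  refine ⟨g, ?_⟩
  set E := T0 \ s with hE
  set r : ℕ := E.card with hrdef
  set A := ∑ h : symGroup s, ∑ p ∈ E ×ˢ E,
      if p.1 < p.2 ∧ f (h • p.1) (h • p.2) ≠ g (h • p.1) * (g (h • p.2))⁻¹
      then (1 : ℝ) else 0 with hA
  set W := ∑ h : symGroup s, ∑ e ∈ E.powersetCard 3, ind3 f (tl h e) with hW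
  set D := ∑ h : symGroup s, ∑ e ∈ E.powersetCard 2, ind2 f g (tl h e) with hD
  have hDA : D ≤ A := Finset.sum_le_sum fun h _ => ind2_sum_le hT0 f hf g h
  have hB := eps_sum_le hT0 f hf
  have hH : (0 : ℝ) < Fintype.card (symGroup s) := by exact_mod_cast Fintype.card_pos
  set N : ℝ := ((Fintype.card (symGroup s) : ℕ) : ℝ) with hN
  have hwt : linkWt F n S s Γ f = W / (r.choose 3 * N) := by
    have := sum_max hT0 (fun T => (∑ e ∈ (T \ s).powersetCard 3, ind3 f e) /
      (((T \ s).powersetCard 3).card : ℝ))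
    unfold ind3 at this
    unfold linkWt
    rw [this]
    simp only [tl_sdiff, sum_powersetCard_tl, Finset.card_powersetCard, tl_card]
    rw [← Finset.sum_div, div_div]
    rfl
  have hdist : linkDist F n S s Γ f g = D / (r.choose 2 * N) := by
    have := sum_max hT0 (fun T => (∑ e ∈ (T \ s).powersetCard 2, ind2 f g e) /
      (((T \ s).powersetCard 2).card : ℝ))
    unfold ind2 at this
    unfold linkDist
    rw [this]
    simp only [tl_sdiff, sum_powersetCard_tl, Finset.card_powersetCard, tl_card]
    rw [← Finset.sum_div, div_div]
    rfl
  have c3 : (0 : ℝ) < r.choose 3 := by exact_mod_cast Nat.choose_pos hr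
  have c2 : (0 : ℝ) < r.choose 2 := by exact_mod_cast Nat.choose_pos (by omega)
  have c3' : (r.choose 3 : ℝ) ≤ (r : ℝ) ^ 3 := by
    exact_mod_cast Nat.choose_le_pow r 3
  have c2' : (r : ℝ) ^ 2 ≤ 4 * r.choose 2 := by
    rw [Nat.cast_choose_two]
    have : (3 : ℝ) ≤ r := by exact_mod_cast hr
    nlinarith
  have hr0 : (0 : ℝ) < r := by
    have : (3 : ℝ) ≤ r := by exact_mod_cast hr
    linarith
  have hΘ0 : (0 : ℝ) < Θ.card := by exact_mod_cast Finset.card_pos.2 hΘ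
  have hW0 : 0 ≤ W := by
    refine Finset.sum_nonneg fun h _ => Finset.sum_nonneg fun e _ => ?_
    unfold ind3; split_ifs <;> norm_num
  have hD0 : 0 ≤ D := by
    refine Finset.sum_nonneg fun h _ => Finset.sum_nonneg fun e _ => ?_
    unfold ind2; split_ifs <;> norm_num
  exact numeric_aux hg hDA hB hH hwt hdist c3 c2 c3' c2' hr0 hΘ0 hW0 hD0 hC

end LinkAveraging


section Cones

variable {P : Type*} [Lattice P]

theorem Cmp.refl {P : Type*} [Preorder P] (x : P) : Cmp x x := Or.inl le_rfl

theorem TriOK.comp {P Γ : Type*} [LE P] [Group Γ] {Lk : P → Prop} {dim : P → ℕ} {τ : Fin 7 → P}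
    {f : P → P → Γ} {x y z : P}
    (h : TriOK Lk dim τ x y z) (hf : Anti Lk f) (hb : ¬ BadT f x y z) :
    FF f x y * FF f y z = FF f x z := by
  obtain ⟨hx, hy, hz, hxy, hyz, hxz, -⟩ := h
  unfold BadT at hb
  rw [not_not] at hb
  rw [FF_anti hf hx hz hxz]
  exact eq_inv_of_mul_eq_one_left hb

theorem FF_of_ne {P Γ : Type*} [Group Γ] {f : P → P → Γ} {x y : P} (h : x ≠ y) :
    FF f x y = f x y := if_neg h

/-- An interval of a ranked lattice, all of whose elements of rank `1, …, m` are vertices. -/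
structure RPart (Lk : P → Prop) (dim : P → ℕ) (Z Y : P) (ρ : P → ℕ) (m : ℕ) : Prop where
  zero : ρ Z = 0
  ZY : Z ≤ Y
  top : m ≤ ρ Y
  interp : ∀ x y t, Z ≤ x → x ≤ y → y ≤ Y → ρ x ≤ t → t ≤ ρ y → ∃ w, x ≤ w ∧ w ≤ y ∧ ρ w = t
  sub : ∀ c x y, Z ≤ c → c ≤ x → c ≤ y → x ≤ Y → y ≤ Y → ρ (x ⊔ y) + ρ c ≤ ρ x + ρ y
  mono : ∀ x y, Z ≤ x → x ≤ y → y ≤ Y → ρ x ≤ ρ y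
  eq : ∀ x y, Z ≤ x → x ≤ y → y ≤ Y → ρ x = ρ y → x = y
  dimEq : ∀ x y, Z ≤ x → x ≤ Y → Z ≤ y → y ≤ Y → ρ x = ρ y → dim x = dim y
  lk : ∀ x, Z ≤ x → x ≤ Y → 1 ≤ ρ x → ρ x ≤ m → Lk x
  other : ∀ x, Lk x → ¬ (Z ≤ x ∧ x ≤ Y ∧ 1 ≤ ρ x ∧ ρ x ≤ m) →
    ∀ y, Z ≤ y → y ≤ Y → 1 ≤ ρ y → ρ y ≤ m → Cmp x y

/-- Membership in the part. -/
def Mv (Z Y : P) (ρ : P → ℕ) (m : ℕ) (x : P) : Prop := Z ≤ x ∧ x ≤ Y ∧ 1 ≤ ρ x ∧ ρ x ≤ m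

/-- The potential. -/
noncomputable def potI {Γ : Type*} [Group Γ] (Z Y : P) (ρ : P → ℕ) (m : ℕ) (p T : P → P) (A : P)
    (f : P → P → Γ) (u : P) : Γ :=
  if Mv Z Y ρ m u then FF f u (p u) * FF f (p u) (T (p u)) * FF f (T (p u)) A else FF f u A

/-- Data of the paths in the cone. -/
structure ConeData (Z Y : P) (ρ : P → ℕ) (m : ℕ) (p T : P → P) (A : P) (i0 a t1 : ℕ) : Prop where
  A_mem : Mv Z Y ρ m A
  A_rk : ρ A = a
  p_mem : ∀ u, Mv Z Y ρ m u → Mv Z Y ρ m (p u)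
  p_rk : ∀ u, Mv Z Y ρ m u → ρ (p u) = i0
  p_cmp : ∀ u, Mv Z Y ρ m u → Cmp u (p u)
  T_mem : ∀ u, Mv Z Y ρ m u → Mv Z Y ρ m (T (p u))
  T_rk : ∀ u, Mv Z Y ρ m u → ρ (T (p u)) = t1
  T_p : ∀ u, Mv Z Y ρ m u → p u ≤ T (p u)
  T_A : ∀ u, Mv Z Y ρ m u → A ≤ T (p u)

theorem exists_coneData {Lk : P → Prop} {dim : P → ℕ} {Z Y : P} {ρ : P → ℕ} {m : ℕ}
    (h : RPart Lk dim Z Y ρ m) {A : P} {i0 a t1 : ℕ} (hA : Mv Z Y ρ m A) (hAa : ρ A = a)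
    (h0 : 1 ≤ i0) (h1 : i0 + a ≤ t1) (h2 : t1 ≤ m) :
    ∃ p T, ConeData Z Y ρ m p T A i0 a t1 := by
  have e1 : ∀ u, ∃ u', Mv Z Y ρ m u → Mv Z Y ρ m u' ∧ ρ u' = i0 ∧ Cmp u u' := by
    intro u
    by_cases hu : Mv Z Y ρ m u
    · obtain ⟨hu1, hu2, hu3, hu4⟩ := hu
      by_cases hi : i0 ≤ ρ u
      · obtain ⟨w, hw1, hw2, hw3⟩ := h.interp Z u i0 le_rfl hu1 hu2 (by rw [h.zero]; omega) hi
        exact ⟨w, fun _ => ⟨⟨hw1, hw2.trans hu2, by omega, by omega⟩, hw3, Or.inr hw2⟩⟩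
      · obtain ⟨w, hw1, hw2, hw3⟩ := h.interp u Y i0 hu1 hu2 le_rfl (by omega)
          (by have := h.top; omega)
        exact ⟨w, fun _ => ⟨⟨hu1.trans hw1, hw2, by omega, by omega⟩, hw3, Or.inl hw1⟩⟩
    · exact ⟨u, fun h' => absurd h' hu⟩
  choose p hp using e1
  have e2 : ∀ x, ∃ t, Mv Z Y ρ m x → ρ x = i0 →
      Mv Z Y ρ m t ∧ ρ t = t1 ∧ x ≤ t ∧ A ≤ t := by
    intro x
    by_cases hx : Mv Z Y ρ m x ∧ ρ x = i0
    · obtain ⟨⟨hx1, hx2, hx3, hx4⟩, hx5⟩ := hx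
      have := h.sub Z x A le_rfl hx1 hA.1 hx2 hA.2.1
      obtain ⟨w, hw1, hw2, hw3⟩ := h.interp (x ⊔ A) Y t1 (hx1.trans le_sup_left)
        (sup_le hx2 hA.2.1) le_rfl (by omega) (by have := h.top; omega)
      exact ⟨w, fun _ _ => ⟨⟨hx1.trans (le_sup_left.trans hw1), hw2, by omega, by omega⟩, hw3,
        le_sup_left.trans hw1, le_sup_right.trans hw1⟩⟩
    · exact ⟨x, fun h1 h2 => absurd ⟨h1, h2⟩ hx⟩
  choose T hT using e2
  exact ⟨p, T, hA, hAa, fun u hu => (hp u hu).1, fun u hu => (hp u hu).2.1,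
    fun u hu => (hp u hu).2.2, fun u hu => (hT _ (hp u hu).1 (hp u hu).2.1).1,
    fun u hu => (hT _ (hp u hu).1 (hp u hu).2.1).2.1,
    fun u hu => (hT _ (hp u hu).1 (hp u hu).2.1).2.2.1,
    fun u hu => (hT _ (hp u hu).1 (hp u hu).2.1).2.2.2⟩

variable {Lk : P → Prop} {dim : P → ℕ} {Z Y : P} {ρ : P → ℕ} {m : ℕ}

theorem RPart.Lk_of (h : RPart Lk dim Z Y ρ m) {x : P} (hx : Mv Z Y ρ m x) : Lk x :=
  h.lk x hx.1 hx.2.1 hx.2.2.1 hx.2.2.2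

theorem RPart.dimEq' (h : RPart Lk dim Z Y ρ m) {x y : P} (hx : Mv Z Y ρ m x)
    (hy : Mv Z Y ρ m y) (hr : ρ x = ρ y) : dim x = dim y :=
  h.dimEq x y hx.1 hx.2.1 hy.1 hy.2.1 hr

theorem triOK_mk {τ : Fin 7 → P} {x y z : P} (hx : Lk x) (hy : Lk y) (hz : Lk z) (hxy : Cmp x y)
    (hyz : Cmp y z) (hxz : Cmp x z) (α β γ : Fin 7) (hd : α ≠ β ∧ β ≠ γ ∧ α ≠ γ)
    (h1 : dim x = dim (τ α)) (h2 : dim y = dim (τ β)) (h3 : dim z = dim (τ γ)) :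
    TriOK Lk dim τ x y z :=
  ⟨hx, hy, hz, hxy, hyz, hxz, Or.inr ⟨α, β, γ, hd, h1, h2, h3⟩⟩

theorem triOK_deg {τ : Fin 7 → P} {x y z : P} (hx : Lk x) (hy : Lk y) (hz : Lk z) (hxy : Cmp x y)
    (hyz : Cmp y z) (hxz : Cmp x z) (hd : x = y ∨ y = z ∨ x = z) :
    TriOK Lk dim τ x y z :=
  ⟨hx, hy, hz, hxy, hyz, hxz, Or.inl hd⟩

/-- A cone, given fillings of the edges inside the part. -/
theorem coneI (Γ : Type*) [Group Γ] (h : RPart Lk dim Z Y ρ m) {p T : P → P} {A : P}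
    {i0 a t1 : ℕ} (hc : ConeData Z Y ρ m p T A i0 a t1) {θ : Fin 5 → P}
    (h0 : Mv Z Y ρ m (θ 0)) (h0' : ρ (θ 0) = i0) (h1 : θ 1 = A)
    (h2 : Mv Z Y ρ m (θ 2)) (h2' : ρ (θ 2) = t1)
    (hin : ∀ u v, Mv Z Y ρ m u → Mv Z Y ρ m v → u < v →
      ∃ D : List (P × P × P), D.length ≤ 12 ∧
      (∀ t ∈ D, TriOK Lk dim (Matrix.vecCons u (Matrix.vecCons v θ)) t.1 t.2.1 t.2.2) ∧
      ∀ f : P → P → Γ, Anti Lk f → (∀ t ∈ D, ¬ BadT f t.1 t.2.1 t.2.2) →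
        f u v = (FF f u (p u) * FF f (p u) (T (p u)) * FF f (T (p u)) A) *
          (FF f v (p v) * FF f (p v) (T (p v)) * FF f (T (p v)) A)⁻¹) :
    IsCone Lk dim Γ θ := by
  have hoth : ∀ {x y}, Lk x → ¬ Mv Z Y ρ m x → Mv Z Y ρ m y → Cmp x y :=
    fun {x y} hx hx' hy => h.other x hx hx' y hy.1 hy.2.1 hy.2.2.1 hy.2.2.2
  refine ⟨potI Z Y ρ m p T A, fun u v hu hv huv => ?_⟩
  by_cases mu : Mv Z Y ρ m u <;> by_cases mv : Mv Z Y ρ m v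
  · obtain ⟨D, hD⟩ := hin u v mu mv huv
    refine ⟨D, ?_⟩
    simpa only [potI, if_pos mu, if_pos mv] using hD
  · have q1 := h.Lk_of (hc.p_mem u mu)
    have q2 := h.Lk_of (hc.T_mem u mu)
    have q3 := h.Lk_of hc.A_mem
    refine ⟨[(v, u, p u), (v, p u, T (p u)), (v, T (p u), A)], by simp, ?_, ?_⟩
    · simp only [List.forall_mem_cons, List.not_mem_nil, IsEmpty.forall_iff, implies_true, and_true]
      refine ⟨?_, ?_, ?_⟩
      · exact triOK_mk hv hu q1 (Or.inr huv.le) (hc.p_cmp u mu) (hoth hv mv (hc.p_mem u mu))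
          1 0 2 (by decide) rfl rfl (h.dimEq' (hc.p_mem u mu) h0 ((hc.p_rk u mu).trans h0'.symm))
      · exact triOK_mk hv q1 q2 (hoth hv mv (hc.p_mem u mu)) (Or.inl (hc.T_p u mu))
          (hoth hv mv (hc.T_mem u mu))
          1 2 4 (by decide) rfl (h.dimEq' (hc.p_mem u mu) h0 ((hc.p_rk u mu).trans h0'.symm))
          (h.dimEq' (hc.T_mem u mu) h2 ((hc.T_rk u mu).trans h2'.symm))
      · exact triOK_mk hv q2 q3 (hoth hv mv (hc.T_mem u mu)) (Or.inr (hc.T_A u mu))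
          (hoth hv mv hc.A_mem)
          1 4 3 (by decide) rfl (h.dimEq' (hc.T_mem u mu) h2 ((hc.T_rk u mu).trans h2'.symm))
          (congrArg dim h1.symm)
    · intro f hf hb
      simp only [List.forall_mem_cons, List.not_mem_nil, IsEmpty.forall_iff, implies_true, and_true, BadT, not_not] at hb
      obtain ⟨b1, b2, b3⟩ := hb
      simp only [potI, if_pos mu, if_neg mv]
      rw [FF_anti hf q1 hv (hoth hv mv (hc.p_mem u mu)).symm] at b1
      rw [FF_anti hf q2 hv (hoth hv mv (hc.T_mem u mu)).symm] at b2
      rw [FF_anti hf q3 hv (hoth hv mv (hc.A_mem)).symm] at b3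
      rw [mul_inv_eq_one] at b1 b2 b3
      rw [← FF_of_ne (f := f) huv.ne, FF_anti hf hu hv (Or.inl huv.le), ← b3, ← b2, ← b1]
      group
  · have q1 := h.Lk_of (hc.p_mem v mv)
    have q2 := h.Lk_of (hc.T_mem v mv)
    have q3 := h.Lk_of hc.A_mem
    refine ⟨[(u, v, p v), (u, p v, T (p v)), (u, T (p v), A)], by simp, ?_, ?_⟩
    · simp only [List.forall_mem_cons, List.not_mem_nil, IsEmpty.forall_iff, implies_true, and_true]
      refine ⟨?_, ?_, ?_⟩
      · exact triOK_mk hu hv q1 (Or.inl huv.le) (hc.p_cmp v mv) (hoth hu mu (hc.p_mem v mv))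
          0 1 2 (by decide) rfl rfl (h.dimEq' (hc.p_mem v mv) h0 ((hc.p_rk v mv).trans h0'.symm))
      · exact triOK_mk hu q1 q2 (hoth hu mu (hc.p_mem v mv)) (Or.inl (hc.T_p v mv))
          (hoth hu mu (hc.T_mem v mv))
          0 2 4 (by decide) rfl (h.dimEq' (hc.p_mem v mv) h0 ((hc.p_rk v mv).trans h0'.symm))
          (h.dimEq' (hc.T_mem v mv) h2 ((hc.T_rk v mv).trans h2'.symm))
      · exact triOK_mk hu q2 q3 (hoth hu mu (hc.T_mem v mv)) (Or.inr (hc.T_A v mv))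
          (hoth hu mu hc.A_mem)
          0 4 3 (by decide) rfl (h.dimEq' (hc.T_mem v mv) h2 ((hc.T_rk v mv).trans h2'.symm))
          (congrArg dim h1.symm)
    · intro f hf hb
      simp only [List.forall_mem_cons, List.not_mem_nil, IsEmpty.forall_iff, implies_true, and_true, BadT, not_not] at hb
      obtain ⟨b1, b2, b3⟩ := hb
      simp only [potI, if_pos mv, if_neg mu]
      rw [FF_anti hf q1 hu (hoth hu mu (hc.p_mem v mv)).symm] at b1
      rw [FF_anti hf q2 hu (hoth hu mu (hc.T_mem v mv)).symm] at b2
      rw [FF_anti hf q3 hu (hoth hu mu (hc.A_mem)).symm] at b3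
      rw [mul_inv_eq_one] at b1 b2 b3
      rw [← FF_of_ne (f := f) huv.ne, ← b3, ← b2, ← b1]
      group
  · have q3 := h.Lk_of hc.A_mem
    refine ⟨[(u, v, A)], by simp, ?_, ?_⟩
    · simp only [List.forall_mem_cons, List.not_mem_nil, IsEmpty.forall_iff, implies_true, and_true]
      exact triOK_mk hu hv q3 (Or.inl huv.le) (hoth hv mv hc.A_mem) (hoth hu mu hc.A_mem)
        0 1 3 (by decide) rfl rfl (congrArg dim h1.symm)
    · intro f hf hb
      simp only [List.forall_mem_cons, List.not_mem_nil, IsEmpty.forall_iff, implies_true, and_true, BadT, not_not] at hb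
      simp only [potI, if_neg mv, if_neg mu]
      rw [FF_anti hf q3 hu (hoth hu mu (hc.A_mem)).symm, mul_inv_eq_one] at hb
      rw [← FF_of_ne (f := f) huv.ne, ← hb]
      group

/-- Case Ib: filling with a vertex of another part. -/
theorem coneIb (Γ : Type*) [Group Γ] (h : RPart Lk dim Z Y ρ m) {θ : Fin 5 → P}
    (h0 : Mv Z Y ρ m (θ 0)) (h1 : Mv Z Y ρ m (θ 1)) (h2 : Mv Z Y ρ m (θ 2))
    (hr : ρ (θ 0) + ρ (θ 1) ≤ ρ (θ 2)) (h3 : Lk (θ 3)) (h3' : ¬ Mv Z Y ρ m (θ 3)) :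
    IsCone Lk dim Γ θ := by
  obtain ⟨p, T, hc⟩ := exists_coneData h h1 rfl h0.2.2.1 hr h2.2.2.2
  refine coneI Γ h hc h0 rfl rfl h2 rfl ?_
  have hoth : ∀ {y}, Mv Z Y ρ m y → Cmp y (θ 3) :=
    fun {y} hy => (h.other _ h3 h3' y hy.1 hy.2.1 hy.2.2.1 hy.2.2.2).symm
  intro u v mu mv huv
  set b := θ 3 with hb
  refine ⟨[(u, v, b), (u, p u, b), (p u, T (p u), b), (T (p u), θ 1, b),
    (v, p v, b), (p v, T (p v), b), (T (p v), θ 1, b)], by simp, ?_⟩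
  have t1 : TriOK Lk dim (Matrix.vecCons u (Matrix.vecCons v θ)) u v b :=
    triOK_mk (h.Lk_of mu) (h.Lk_of mv) h3 (Or.inl huv.le) (hoth mv) (hoth mu)
      0 1 5 (by decide) rfl rfl rfl
  have t2 : TriOK Lk dim (Matrix.vecCons u (Matrix.vecCons v θ)) u (p u) b :=
    triOK_mk (h.Lk_of mu) (h.Lk_of (hc.p_mem u mu)) h3 (hc.p_cmp u mu) (hoth (hc.p_mem u mu))
      (hoth mu) 0 2 5 (by decide) rfl (h.dimEq' (hc.p_mem u mu) h0 (hc.p_rk u mu)) rfl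
  have t2' : TriOK Lk dim (Matrix.vecCons u (Matrix.vecCons v θ)) v (p v) b :=
    triOK_mk (h.Lk_of mv) (h.Lk_of (hc.p_mem v mv)) h3 (hc.p_cmp v mv) (hoth (hc.p_mem v mv))
      (hoth mv) 1 2 5 (by decide) rfl (h.dimEq' (hc.p_mem v mv) h0 (hc.p_rk v mv)) rfl
  have t3 : ∀ w, Mv Z Y ρ m w →
      TriOK Lk dim (Matrix.vecCons u (Matrix.vecCons v θ)) (p w) (T (p w)) b := fun w mw =>
    triOK_mk (h.Lk_of (hc.p_mem w mw)) (h.Lk_of (hc.T_mem w mw)) h3 (Or.inl (hc.T_p w mw))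
      (hoth (hc.T_mem w mw)) (hoth (hc.p_mem w mw)) 2 4 5 (by decide)
      (h.dimEq' (hc.p_mem w mw) h0 (hc.p_rk w mw))
      (h.dimEq' (hc.T_mem w mw) h2 (hc.T_rk w mw)) rfl
  have t4 : ∀ w, Mv Z Y ρ m w →
      TriOK Lk dim (Matrix.vecCons u (Matrix.vecCons v θ)) (T (p w)) (θ 1) b := fun w mw =>
    triOK_mk (h.Lk_of (hc.T_mem w mw)) (h.Lk_of h1) h3 (Or.inr (hc.T_A w mw))
      (hoth h1) (hoth (hc.T_mem w mw)) 4 3 5 (by decide)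
      (h.dimEq' (hc.T_mem w mw) h2 (hc.T_rk w mw)) rfl rfl
  simp only [List.forall_mem_cons, List.not_mem_nil, IsEmpty.forall_iff, implies_true, and_true]
  refine ⟨⟨t1, t2, t3 u mu, t4 u mu, t2', t3 v mv, t4 v mv⟩, ?_⟩
  rintro f hf ⟨b1, b2, b3, b4, b5, b6, b7⟩
  have e1 := t1.comp hf b1
  have e2 := t2.comp hf b2
  have e3 := (t3 u mu).comp hf b3
  have e4 := (t4 u mu).comp hf b4
  have e5 := t2'.comp hf b5
  have e6 := (t3 v mv).comp hf b6
  have e7 := (t4 v mv).comp hf b7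
  rw [← FF_of_ne (f := f) huv.ne, eq_mul_inv_of_mul_eq e1, ← e2, ← e3, ← e4, ← e5, ← e6, ← e7]
  group

/-- Case Ia: filling inside the part. -/
theorem coneIa (Γ : Type*) [Group Γ] (h : RPart Lk dim Z Y ρ m) {p T : P → P} {θ : Fin 5 → P}
    (h0 : Mv Z Y ρ m (θ 0)) (h1 : Mv Z Y ρ m (θ 1)) (h2 : Mv Z Y ρ m (θ 2))
    (h3 : Mv Z Y ρ m (θ 3)) (h4 : Mv Z Y ρ m (θ 4))
    (hc : ConeData Z Y ρ m p T (θ 1) (ρ (θ 0)) (ρ (θ 1)) (ρ (θ 2)))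
    (hfill : ∀ u v, Mv Z Y ρ m u → Mv Z Y ρ m v → u < v → ∃ u1 w t,
      (u1 = u ∨ (u1 = p u ∧ p u ≤ u)) ∧ (w = v ∨ (Mv Z Y ρ m w ∧ ρ w = ρ (θ 3))) ∧ u1 ≤ w ∧
      w ≤ v ∧ Cmp (p v) w ∧ Mv Z Y ρ m t ∧ ρ t = ρ (θ 4) ∧ w ≤ t ∧ T (p u) ≤ t ∧ T (p v) ≤ t) :
    IsCone Lk dim Γ θ := by
  refine coneI Γ h hc h0 rfl rfl h2 rfl ?_
  intro u v mu mv huv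
  obtain ⟨u1, w, t, hu1, hw, h1w, hwv, hpw, mt, ht, hwt, hTu, hTv⟩ := hfill u v mu mv huv
  have mu1 : Mv Z Y ρ m u1 := by
    rcases hu1 with rfl | ⟨rfl, -⟩
    · exact mu
    · exact hc.p_mem u mu
  have mw : Mv Z Y ρ m w := by
    rcases hw with rfl | ⟨hw, -⟩
    · exact mv
    · exact hw
  have cu1 : u1 ≤ u := by
    rcases hu1 with rfl | ⟨rfl, h'⟩
    · exact le_rfl
    · exact h'
  set τ := Matrix.vecCons u (Matrix.vecCons v θ) with hτ
  have dt : dim t = dim (τ 6) := h.dimEq' mt h4 ht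
  have dp : ∀ x, Mv Z Y ρ m x → dim (p x) = dim (τ 2) := fun x mx =>
    h.dimEq' (hc.p_mem x mx) h0 (hc.p_rk x mx)
  have dT : ∀ x, Mv Z Y ρ m x → dim (T (p x)) = dim (τ 4) := fun x mx =>
    h.dimEq' (hc.T_mem x mx) h2 (hc.T_rk x mx)
  have Lu := h.Lk_of mu
  have Lv := h.Lk_of mv
  have Lu1 := h.Lk_of mu1
  have Lw := h.Lk_of mw
  have Lt := h.Lk_of mt
  have Lp : ∀ x, Mv Z Y ρ m x → Lk (p x) := fun x mx => h.Lk_of (hc.p_mem x mx)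
  have LT : ∀ x, Mv Z Y ρ m x → Lk (T (p x)) := fun x mx => h.Lk_of (hc.T_mem x mx)
  have LA := h.Lk_of h1
  refine ⟨[(u, u1, v), (u1, v, w), (v, p v, w), (u1, w, t), (u1, p u, t), (p v, w, t),
    (p u, T (p u), t), (p v, T (p v), t), (T (p u), θ 1, t), (T (p v), θ 1, t)], by simp, ?_⟩
  have s1 : TriOK Lk dim τ u u1 v := by
    have c1 : Cmp u u1 := Or.inr cu1
    have c2 : Cmp u1 v := Or.inl (h1w.trans hwv)
    have c3 : Cmp u v := Or.inl huv.le
    rcases hu1 with h' | ⟨h', -⟩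
    · exact triOK_deg Lu Lu1 Lv c1 c2 c3 (Or.inl h'.symm)
    · exact triOK_mk Lu Lu1 Lv c1 c2 c3 0 2 1 (by decide) rfl (by rw [h']; exact dp u mu) rfl
  have s2 : TriOK Lk dim τ u1 v w := by
    have c1 : Cmp u1 v := Or.inl (h1w.trans hwv)
    have c2 : Cmp v w := Or.inr hwv
    have c3 : Cmp u1 w := Or.inl h1w
    rcases hw with hw | ⟨-, hw⟩
    · exact triOK_deg Lu1 Lv Lw c1 c2 c3 (Or.inr (Or.inl hw.symm))
    · rcases hu1 with h' | ⟨h', -⟩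
      · exact triOK_mk Lu1 Lv Lw c1 c2 c3 0 1 5 (by decide) (by rw [h']; rfl) rfl
          (h.dimEq' mw h3 hw)
      · exact triOK_mk Lu1 Lv Lw c1 c2 c3 2 1 5 (by decide) (by rw [h']; exact dp u mu) rfl
          (h.dimEq' mw h3 hw)
  have s3 : TriOK Lk dim τ v (p v) w := by
    have c1 : Cmp v w := Or.inr hwv
    rcases hw with hw | ⟨-, hw⟩
    · exact triOK_deg Lv (Lp v mv) Lw (hc.p_cmp v mv) hpw c1 (Or.inr (Or.inr hw.symm))
    · exact triOK_mk Lv (Lp v mv) Lw (hc.p_cmp v mv) hpw c1 1 2 5 (by decide) rfl (dp v mv)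
          (h.dimEq' mw h3 hw)
  have s4 : TriOK Lk dim τ u1 w t := by
    have c1 : Cmp u1 w := Or.inl h1w
    have c2 : Cmp w t := Or.inl hwt
    have c3 : Cmp u1 t := Or.inl (h1w.trans hwt)
    rcases hw with hw | ⟨-, hw⟩ <;> rcases hu1 with h' | ⟨h', -⟩
    · exact triOK_mk Lu1 Lw Lt c1 c2 c3 0 1 6 (by decide) (by rw [h']; rfl) (by rw [hw]; rfl) dt
    · exact triOK_mk Lu1 Lw Lt c1 c2 c3 2 1 6 (by decide) (by rw [h']; exact dp u mu)
        (by rw [hw]; rfl) dt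
    · exact triOK_mk Lu1 Lw Lt c1 c2 c3 0 5 6 (by decide) (by rw [h']; rfl)
        (h.dimEq' mw h3 hw) dt
    · exact triOK_mk Lu1 Lw Lt c1 c2 c3 2 5 6 (by decide) (by rw [h']; exact dp u mu)
        (h.dimEq' mw h3 hw) dt
  have s5 : TriOK Lk dim τ u1 (p u) t := by
    have c2 : Cmp (p u) t := Or.inl ((hc.T_p u mu).trans hTu)
    have c3 : Cmp u1 t := Or.inl (h1w.trans hwt)
    rcases hu1 with h' | ⟨h', -⟩
    · exact triOK_mk Lu1 (Lp u mu) Lt (by rw [h']; exact hc.p_cmp u mu) c2 c3 0 2 6 (by decide)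
        (by rw [h']; rfl) (dp u mu) dt
    · exact triOK_deg Lu1 (Lp u mu) Lt (by rw [h']; exact Cmp.refl _) c2 c3 (Or.inl h')
  have s6 : TriOK Lk dim τ (p v) w t := by
    have c2 : Cmp w t := Or.inl hwt
    have c3 : Cmp (p v) t := Or.inl ((hc.T_p v mv).trans hTv)
    rcases hw with hw | ⟨-, hw⟩
    · exact triOK_mk (Lp v mv) Lw Lt hpw c2 c3 2 1 6 (by decide) (dp v mv) (by rw [hw]; rfl) dt
    · exact triOK_mk (Lp v mv) Lw Lt hpw c2 c3 2 5 6 (by decide) (dp v mv)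
        (h.dimEq' mw h3 hw) dt
  have s7 : ∀ x, Mv Z Y ρ m x → T (p x) ≤ t → TriOK Lk dim τ (p x) (T (p x)) t := fun x mx hx =>
    triOK_mk (Lp x mx) (LT x mx) Lt (Or.inl (hc.T_p x mx)) (Or.inl hx)
      (Or.inl ((hc.T_p x mx).trans hx)) 2 4 6 (by decide) (dp x mx) (dT x mx) dt
  have s8 : ∀ x, Mv Z Y ρ m x → T (p x) ≤ t → TriOK Lk dim τ (T (p x)) (θ 1) t := fun x mx hx =>
    triOK_mk (LT x mx) LA Lt (Or.inr (hc.T_A x mx)) (Or.inl ((hc.T_A x mx).trans hx))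
      (Or.inl hx) 4 3 6 (by decide) (dT x mx) rfl dt
  simp only [List.forall_mem_cons, List.not_mem_nil, IsEmpty.forall_iff, implies_true, and_true]
  refine ⟨⟨s1, s2, s3, s4, s5, s6, s7 u mu hTu, s7 v mv hTv, s8 u mu hTu, s8 v mv hTv⟩, ?_⟩
  rintro f hf ⟨b1, b2, b3, b4, b5, b6, b7, b8, b9, b10⟩
  have e1 := s1.comp hf b1
  have e2 := s2.comp hf b2
  have e3 := s3.comp hf b3
  have e4 := s4.comp hf b4
  have e5 := s5.comp hf b5
  have e6 := s6.comp hf b6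
  have e7 := (s7 u mu hTu).comp hf b7
  have e8 := (s7 v mv hTv).comp hf b8
  have e9 := (s8 u mu hTu).comp hf b9
  have e10 := (s8 v mv hTv).comp hf b10
  rw [← FF_of_ne (f := f) huv.ne]
  have k1 : FF f u (p u) * FF f (p u) t = FF f u u1 * FF f u1 t := by
    rcases hu1 with rfl | ⟨rfl, -⟩
    · rw [e5, FF_self, one_mul]
    · rfl
  have k2 : FF f u (p u) * FF f (p u) (T (p u)) * FF f (T (p u)) (θ 1) * FF f (θ 1) t =
      FF f u v * FF f v w * FF f w t := by
    rw [mul_assoc, e9, mul_assoc, e7, k1, ← e4, ← e2, ← e1]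
    group
  have k3 : FF f v (p v) * FF f (p v) (T (p v)) * FF f (T (p v)) (θ 1) * FF f (θ 1) t =
      FF f v w * FF f w t := by
    rw [mul_assoc, e10, mul_assoc, e8, ← e6, ← e3]
    group
  rw [eq_mul_inv_of_mul_eq k2, eq_mul_inv_of_mul_eq k3]
  group

/-- Large parts. -/
theorem coneI_large (Γ : Type*) [Group Γ] (h : RPart Lk dim Z Y ρ m) {θ : Fin 5 → P} (x : ℕ)
    (h0 : Mv Z Y ρ m (θ 0)) (h1 : Mv Z Y ρ m (θ 1)) (h2 : Mv Z Y ρ m (θ 2))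
    (h3 : Mv Z Y ρ m (θ 3)) (h4 : Mv Z Y ρ m (θ 4))
    (r0 : ρ (θ 0) ≤ x) (r1 : ρ (θ 1) ≤ x) (r2 : 2 * x ≤ ρ (θ 2)) (r2' : ρ (θ 2) ≤ 3 * x)
    (r3 : 2 * x ≤ ρ (θ 3)) (r3' : ρ (θ 3) ≤ 3 * x) (r4 : 9 * x ≤ ρ (θ 4)) :
    IsCone Lk dim Γ θ := by
  obtain ⟨p, T, hc⟩ := exists_coneData h h1 rfl h0.2.2.1
    (show ρ (θ 0) + ρ (θ 1) ≤ ρ (θ 2) by omega) h2.2.2.2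
  refine coneIa Γ h h0 h1 h2 h3 h4 hc ?_
  intro u v mu mv huv
  -- the final vertex
  have hfin : ∀ w, Mv Z Y ρ m w → ρ w ≤ 3 * x → ∃ t, Mv Z Y ρ m t ∧ ρ t = ρ (θ 4) ∧ w ≤ t ∧
      T (p u) ≤ t ∧ T (p v) ≤ t := by
    intro w mw hw
    have mT := hc.T_mem u mu
    have mS := hc.T_mem v mv
    have b1 := h.sub Z w (T (p u)) le_rfl mw.1 mT.1 mw.2.1 mT.2.1
    have b2 := h.sub Z (w ⊔ T (p u)) (T (p v)) le_rfl (mw.1.trans le_sup_left) mS.1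
      (sup_le mw.2.1 mT.2.1) mS.2.1
    have g1 := hc.T_rk u mu
    have g2 := hc.T_rk v mv
    have g4 := h4.2.2
    obtain ⟨t, ht1, ht2, ht3⟩ := h.interp (w ⊔ T (p u) ⊔ T (p v)) Y (ρ (θ 4))
      ((mw.1.trans le_sup_left).trans le_sup_left) (sup_le (sup_le mw.2.1 mT.2.1) mS.2.1) le_rfl
      (by omega) (by have := h.top; omega)
    have ht4 := le_sup_left.trans ht1
    exact ⟨t, ⟨mw.1.trans (le_sup_left.trans ht4), ht2, by omega, by omega⟩, ht3,
      le_sup_left.trans ht4, le_sup_right.trans ht4, le_sup_right.trans ht1⟩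
  have hpr := hc.p_rk u mu
  have hpr' := hc.p_rk v mv
  have mpu := hc.p_mem u mu
  have mpv := hc.p_mem v mv
  have h03 := h0.2.2.1
  by_cases hv : ρ v ≤ 3 * x
  · obtain ⟨t, mt, ht, hwt, hTu, hTv⟩ := hfin v mv hv
    exact ⟨u, v, t, Or.inl rfl, Or.inl rfl, huv.le, le_rfl, (hc.p_cmp v mv).symm, mt, ht, hwt,
      hTu, hTv⟩
  · have hvp : p v ≤ v := by
      rcases hc.p_cmp v mv with h' | h'
      · have := h.mono v (p v) mv.1 h' mpv.2.1
        omega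
      · exact h'
    have hex : ∃ u1, (u1 = u ∨ (u1 = p u ∧ p u ≤ u)) ∧ Mv Z Y ρ m u1 ∧ ρ u1 ≤ x ∧ u1 ≤ u := by
      by_cases hu : ρ u ≤ x
      · exact ⟨u, Or.inl rfl, mu, hu, le_rfl⟩
      · have hup : p u ≤ u := by
          rcases hc.p_cmp u mu with h' | h'
          · have := h.mono u (p u) mu.1 h' mpu.2.1
            omega
          · exact h'
        exact ⟨p u, Or.inr ⟨rfl, hup⟩, mpu, by omega, hup⟩
    obtain ⟨u1, hu1, mu1, hu1x, hu1u⟩ := hex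
    have b1 := h.sub Z u1 (p v) le_rfl mu1.1 mpv.1 mu1.2.1 mpv.2.1
    obtain ⟨w, hw1, hw2, hw3⟩ := h.interp (u1 ⊔ p v) v (ρ (θ 3)) (mu1.1.trans le_sup_left)
      (sup_le (hu1u.trans huv.le) hvp) mv.2.1 (by omega) (by omega)
    have mw : Mv Z Y ρ m w := ⟨mu1.1.trans (le_sup_left.trans hw1), hw2.trans mv.2.1,
      by rw [hw3]; exact h3.2.2.1, by rw [hw3]; exact h3.2.2.2⟩
    obtain ⟨t, mt, ht, hwt, hTu, hTv⟩ := hfin w mw (by omega)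
    exact ⟨u1, w, t, hu1, Or.inr ⟨mw, hw3⟩, le_sup_left.trans hw1, hw2,
      Or.inl (le_sup_right.trans hw1), mt, ht, hwt, hTu, hTv⟩

/-- Small parts. -/
theorem coneI_small (Γ : Type*) [Group Γ] (h : RPart Lk dim Z Y ρ m) {θ : Fin 5 → P}
    (h0 : Mv Z Y ρ m (θ 0)) (h1 : Mv Z Y ρ m (θ 1)) (h2 : Mv Z Y ρ m (θ 2))
    (h3 : Mv Z Y ρ m (θ 3)) (h4 : Mv Z Y ρ m (θ 4))
    (r0 : ρ (θ 0) = 1) (r1 : ρ (θ 1) = 1) (r2 : ρ (θ 2) = 2)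
    (r3 : ρ (θ 3) = 2) (r4 : ρ (θ 4) = 3) :
    IsCone Lk dim Γ θ := by
  obtain ⟨p, T, hc⟩ := exists_coneData h h1 rfl h0.2.2.1
    (show ρ (θ 0) + ρ (θ 1) ≤ ρ (θ 2) by omega) h2.2.2.2
  refine coneIa Γ h h0 h1 h2 h3 h4 hc ?_
  intro u v mu mv huv
  have hpr := hc.p_rk u mu
  have hpr' := hc.p_rk v mv
  have mpu := hc.p_mem u mu
  have mpv := hc.p_mem v mv
  have hm3 := h4.2.2.2
  have hple : ∀ x, Mv Z Y ρ m x → p x ≤ x := by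
    intro x mx
    rcases hc.p_cmp x mx with h' | h'
    · have := h.mono x (p x) mx.1 h' (hc.p_mem x mx).2.1
      have h5 := hc.p_rk x mx
      have h6 := mx.2.2.1
      exact (h.eq x (p x) mx.1 h' (hc.p_mem x mx).2.1 (by omega)).symm.le
    · exact h'
  have hup := hple u mu
  have hvp := hple v mv
  -- the final vertex
  have hfin : ∀ w, Mv Z Y ρ m w → ρ w = 2 → p u ≤ w → p v ≤ w →
      ∃ t, Mv Z Y ρ m t ∧ ρ t = ρ (θ 4) ∧ w ≤ t ∧ T (p u) ≤ t ∧ T (p v) ≤ t := by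
    intro w mw hw huw hvw
    have mT := hc.T_mem u mu
    have mS := hc.T_mem v mv
    have g1 := hc.T_rk u mu
    have g2 := hc.T_rk v mv
    have key : ρ (w ⊔ T (p u) ⊔ T (p v)) ≤ 3 := by
      by_cases hpp : p u = p v
      · rw [← hpp, sup_assoc, sup_idem]
        have := h.sub (p u) w (T (p u)) mpu.1 huw (hc.T_p u mu) mw.2.1 mT.2.1
        omega
      · have hsup : p u ⊔ p v = w := by
          apply h.eq _ _ (mpu.1.trans le_sup_left) (sup_le huw hvw) mw.2.1
          have l1 := h.mono _ _ (mpu.1.trans le_sup_left) (sup_le huw hvw) mw.2.1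
          have l2 := h.mono (p u) (p u ⊔ p v) mpu.1 le_sup_left (sup_le mpu.2.1 mpv.2.1)
          by_contra hne
          have l3 : p u = p u ⊔ p v :=
            h.eq _ _ mpu.1 le_sup_left (sup_le mpu.2.1 mpv.2.1) (by omega)
          have l4 : p v = p u ⊔ p v :=
            h.eq _ _ mpv.1 le_sup_right (sup_le mpu.2.1 mpv.2.1) (by omega)
          exact hpp (l3.trans l4.symm)
        have l5 : w ⊔ T (p u) ⊔ T (p v) = T (p u) ⊔ T (p v) := by
          rw [sup_assoc]
          refine sup_eq_right.2 ?_
          rw [← hsup]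
          exact sup_le_sup (hc.T_p u mu) (hc.T_p v mv)
        rw [l5]
        have := h.sub (θ 1) (T (p u)) (T (p v)) h1.1 (hc.T_A u mu) (hc.T_A v mv) mT.2.1 mS.2.1
        omega
    obtain ⟨t, ht1, ht2, ht3⟩ := h.interp (w ⊔ T (p u) ⊔ T (p v)) Y (ρ (θ 4))
      ((mw.1.trans le_sup_left).trans le_sup_left) (sup_le (sup_le mw.2.1 mT.2.1) mS.2.1) le_rfl
      (by omega) (by have := h.top; omega)
    have ht4 := le_sup_left.trans ht1
    exact ⟨t, ⟨mw.1.trans (le_sup_left.trans ht4), ht2, by omega, by omega⟩, ht3,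
      le_sup_left.trans ht4, le_sup_right.trans ht4, le_sup_right.trans ht1⟩
  have b1 := h.sub Z (p u) (p v) le_rfl mpu.1 mpv.1 mpu.2.1 mpv.2.1
  have hv2 : 2 ≤ ρ v := by
    have l1 := h.mono u v mu.1 huv.le mv.2.1
    have l2 := mu.2.2.1
    by_contra hne
    exact huv.ne (h.eq u v mu.1 huv.le mv.2.1 (by omega))
  obtain ⟨w, hw1, hw2, hw3⟩ := h.interp (p u ⊔ p v) v (ρ (θ 3)) (mpu.1.trans le_sup_left)
    (sup_le (hup.trans huv.le) hvp) mv.2.1 (by omega) (by omega)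
  have mw : Mv Z Y ρ m w := ⟨mpu.1.trans (le_sup_left.trans hw1), hw2.trans mv.2.1,
    by rw [hw3]; exact h3.2.2.1, by rw [hw3]; exact h3.2.2.2⟩
  obtain ⟨t, mt, ht, hwt, hTu, hTv⟩ := hfin w mw (by omega) (le_sup_left.trans hw1)
    (le_sup_right.trans hw1)
  exact ⟨p u, w, t, Or.inr ⟨rfl, hup⟩, Or.inr ⟨mw, hw3⟩, le_sup_left.trans hw1, hw2,
    Or.inl (le_sup_right.trans hw1), mt, ht, hwt, hTu, hTv⟩

theorem IsCone.of_dual {P : Type*} [PartialOrder P] {Lk : P → Prop} {dim : P → ℕ} {Γ : Type*}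
    [Group Γ] {θ : Fin 5 → P}
    (h : IsCone (P := Pᵒᵈ) (fun x => Lk (OrderDual.ofDual x)) (fun x => dim (OrderDual.ofDual x)) Γ
      (fun i => OrderDual.toDual (θ i))) : IsCone Lk dim Γ θ := by
  obtain ⟨pot, hpot⟩ := h
  refine ⟨fun f u => pot (fun x y => f (OrderDual.ofDual x) (OrderDual.ofDual y))
    (OrderDual.toDual u), fun u v hu hv huv => ?_⟩
  obtain ⟨D, hD1, hD2, hD3⟩ := hpot (OrderDual.toDual v) (OrderDual.toDual u) hv hu huv
  refine ⟨D.map fun t => (OrderDual.ofDual t.1, OrderDual.ofDual t.2.1, OrderDual.ofDual t.2.2),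
    by simpa using hD1, ?_, ?_⟩
  · intro t ht
    obtain ⟨t', ht', rfl⟩ := List.mem_map.1 ht
    obtain ⟨l1, l2, l3, c1, c2, c3, hd⟩ := hD2 t' ht'
    refine ⟨l1, l2, l3, c1.symm, c2.symm, c3.symm, ?_⟩
    rcases hd with hd | ⟨α, β, γ, ⟨n1, n2, n3⟩, d1, d2, d3⟩
    · exact Or.inl hd
    · refine Or.inr ⟨Equiv.swap 0 1 α, Equiv.swap 0 1 β, Equiv.swap 0 1 γ, ⟨?_, ?_, ?_⟩, ?_⟩
      · simpa using n1
      · simpa using n2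
      · simpa using n3
      · have key : ∀ α : Fin 7, dim (OrderDual.ofDual
            ((Matrix.vecCons (OrderDual.toDual v) (Matrix.vecCons (OrderDual.toDual u)
              (fun i => OrderDual.toDual (θ i))) : Fin 7 → Pᵒᵈ) α)) =
            dim ((Matrix.vecCons u (Matrix.vecCons v θ) : Fin 7 → P) (Equiv.swap 0 1 α)) := by
          intro α
          fin_cases α <;> rfl
        exact ⟨d1.trans (key α), d2.trans (key β), d3.trans (key γ)⟩
  · intro f hf hb
    have hf' : Anti (P := Pᵒᵈ) (fun x => Lk (OrderDual.ofDual x))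
        (fun x y => f (OrderDual.ofDual x) (OrderDual.ofDual y)) :=
      fun x y hx hy hxy hc => hf _ _ hx hy hxy hc.symm
    have := hD3 _ hf' (fun t ht => hb _ (List.mem_map.2 ⟨t, ht, rfl⟩))
    rw [hf u v hu hv huv.ne (Or.inl huv.le)]
    have h2 : f v u = _ := this
    rw [h2]
    group

end Cones


section CaseTwo

variable {P : Type*} [PartialOrder P] {Lk : P → Prop} {dim : P → ℕ}

theorem triOK_mk' {τ : Fin 7 → P} {x y z : P} (hx : Lk x) (hy : Lk y) (hz : Lk z) (hxy : Cmp x y)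
    (hyz : Cmp y z) (hxz : Cmp x z) (α β γ : Fin 7) (hd : α ≠ β ∧ β ≠ γ ∧ α ≠ γ)
    (h1 : x = τ α) (h2 : y = τ β) (h3 : z = τ γ) :
    TriOK Lk dim τ x y z :=
  ⟨hx, hy, hz, hxy, hyz, hxz, Or.inr ⟨α, β, γ, hd, by rw [h1], by rw [h2], by rw [h3]⟩⟩

theorem caseTwo_mixed (Γ : Type*) [Group Γ] (key : P → ℕ)
    (hkey : ∀ x y, Lk x → Lk y → key x ≠ key y → Cmp x y) {a x b u v : P} (ha : Lk a) (hx : Lk x)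
    (hb : Lk b) (hu : Lk u) (hv : Lk v) (hax : key a ≠ key x) (hxb : key x ≠ key b)
    (hab : key a ≠ key b) (hub : key u ≠ key b) (hvb : key v = key b) (τ : Fin 7 → P)
    (i j : Fin 7) (hij : i ≠ j ∧ i ≠ 2 ∧ i ≠ 3 ∧ i ≠ 4 ∧ j ≠ 2 ∧ j ≠ 3 ∧ j ≠ 4)
    (hi : u = τ i) (hj : v = τ j) (h2 : a = τ 2) (h3 : x = τ 3) (h4 : b = τ 4) :
    ∃ D : List (P × P × P), D.length ≤ 12 ∧ (∀ t ∈ D, TriOK Lk dim τ t.1 t.2.1 t.2.2) ∧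
      ∀ f : P → P → Γ, Anti Lk f → (∀ t ∈ D, ¬ BadT f t.1 t.2.1 t.2.2) →
        FF f u v = FF f u b * (FF f v a * FF f a b)⁻¹ := by
  obtain ⟨n1, n2, n3, n4, n5, n6, n7⟩ := hij
  have huv : Cmp u v := hkey u v hu hv (by rw [hvb]; exact hub)
  have hva : Cmp v a := hkey v a hv ha (by rw [hvb]; exact hab.symm)
  have hvx : Cmp v x := hkey v x hv hx (by rw [hvb]; exact hxb.symm)
  have cub := hkey u b hu hb hub
  have cab := hkey a b ha hb hab
  by_cases hua : key u = key a
  · have cux : Cmp u x := hkey u x hu hx (by rw [hua]; exact hax)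
    have cxb := hkey x b hx hb hxb
    have cxa := hkey x a hx ha hax.symm
    have s1 : TriOK Lk dim τ u x b := triOK_mk' hu hx hb cux cxb cub i 3 4
      ⟨n3, by decide, n4⟩ hi h3 h4
    have s2 : TriOK Lk dim τ x a b := triOK_mk' hx ha hb cxa cab cxb 3 2 4 (by decide) h3 h2 h4
    have s3 : TriOK Lk dim τ u v x := triOK_mk' hu hv hx huv hvx cux i j 3 ⟨n1, n6, n3⟩ hi hj h3
    have s4 : TriOK Lk dim τ v x a := triOK_mk' hv hx ha hvx cxa hva j 3 2
      ⟨n6, by decide, n5⟩ hj h3 h2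
    refine ⟨[(u, x, b), (x, a, b), (u, v, x), (v, x, a)], by simp, ?_⟩
    simp only [List.forall_mem_cons, List.not_mem_nil, IsEmpty.forall_iff, implies_true, and_true]
    refine ⟨⟨s1, s2, s3, s4⟩, ?_⟩
    rintro f hf ⟨b1, b2, b3, b4⟩
    have e1 := s1.comp hf b1
    have e2 := s2.comp hf b2
    have e3 := s3.comp hf b3
    have e4 := s4.comp hf b4
    rw [← e4, ← e1, ← e2, ← e3]
    group
  · have cua := hkey u a hu ha hua
    have s1 : TriOK Lk dim τ u a b := triOK_mk' hu ha hb cua cab cub i 2 4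
      ⟨n2, by decide, n4⟩ hi h2 h4
    have s2 : TriOK Lk dim τ u v a := triOK_mk' hu hv ha huv hva cua i j 2 ⟨n1, n5, n2⟩ hi hj h2
    refine ⟨[(u, a, b), (u, v, a)], by simp, ?_⟩
    simp only [List.forall_mem_cons, List.not_mem_nil, IsEmpty.forall_iff, implies_true, and_true]
    refine ⟨⟨s1, s2⟩, ?_⟩
    rintro f hf ⟨b1, b2⟩
    have e1 := s1.comp hf b1
    have e2 := s2.comp hf b2
    rw [← e1, ← e2]
    group

theorem caseTwo (Γ : Type*) [Group Γ] (key : P → ℕ)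
    (hkey : ∀ x y, Lk x → Lk y → key x ≠ key y → Cmp x y) {θ : Fin 5 → P} (ha : Lk (θ 0))
    (hx : Lk (θ 1)) (hb : Lk (θ 2)) (hax : key (θ 0) ≠ key (θ 1)) (hxb : key (θ 1) ≠ key (θ 2))
    (hab : key (θ 0) ≠ key (θ 2)) : IsCone Lk dim Γ θ := by
  refine ⟨fun f u => if key u = key (θ 2) then FF f u (θ 0) * FF f (θ 0) (θ 2) else FF f u (θ 2),
    fun u v hu hv huv => ?_⟩
  by_cases ku : key u = key (θ 2) <;> by_cases kv : key v = key (θ 2)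
  · have c1 := hkey u (θ 0) hu ha (by rw [ku]; exact hab.symm)
    have c2 := hkey v (θ 0) hv ha (by rw [kv]; exact hab.symm)
    have s1 : TriOK Lk dim (Matrix.vecCons u (Matrix.vecCons v θ)) u v (θ 0) :=
      triOK_mk' hu hv ha (Or.inl huv.le) c2 c1 0 1 2 (by decide) rfl rfl rfl
    refine ⟨[(u, v, θ 0)], by simp, ?_⟩
    simp only [List.forall_mem_cons, List.not_mem_nil, IsEmpty.forall_iff, implies_true, and_true,
      if_pos ku, if_pos kv]
    refine ⟨s1, fun f hf b1 => ?_⟩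
    rw [← FF_of_ne (f := f) huv.ne, ← s1.comp hf b1]
    group
  · obtain ⟨D, hD1, hD2, hD3⟩ := caseTwo_mixed (dim := dim) Γ key hkey ha hx hb hv hu hax hxb hab kv
      ku (Matrix.vecCons u (Matrix.vecCons v θ)) 1 0 (by decide) rfl rfl rfl rfl rfl
    refine ⟨D, hD1, hD2, fun f hf hbad => ?_⟩
    simp only [if_pos ku, if_neg kv]
    rw [← FF_of_ne (f := f) huv.ne, FF_anti hf hu hv (Or.inl huv.le), hD3 f hf hbad]
    group
  · obtain ⟨D, hD1, hD2, hD3⟩ := caseTwo_mixed (dim := dim) Γ key hkey ha hx hb hu hv hax hxb hab ku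
      kv (Matrix.vecCons u (Matrix.vecCons v θ)) 0 1 (by decide) rfl rfl rfl rfl rfl
    refine ⟨D, hD1, hD2, fun f hf hbad => ?_⟩
    simp only [if_pos kv, if_neg ku]
    rw [← FF_of_ne (f := f) huv.ne, hD3 f hf hbad]
  · have c1 := hkey u (θ 2) hu hb ku
    have c2 := hkey v (θ 2) hv hb kv
    have s1 : TriOK Lk dim (Matrix.vecCons u (Matrix.vecCons v θ)) u v (θ 2) :=
      triOK_mk' hu hv hb (Or.inl huv.le) c2 c1 0 1 4 (by decide) rfl rfl rfl
    refine ⟨[(u, v, θ 2)], by simp, ?_⟩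
    simp only [List.forall_mem_cons, List.not_mem_nil, IsEmpty.forall_iff, implies_true, and_true,
      if_neg ku, if_neg kv]
    refine ⟨s1, fun f hf b1 => ?_⟩
    rw [← FF_of_ne (f := f) huv.ne, ← s1.comp hf b1]
    group

end CaseTwo

section PartGood

/-- All that is needed about a part of size `m`. -/
def PartGood {P : Type*} [PartialOrder P] (Lk : P → Prop) (dim : P → ℕ) (Γ : Type*) [Group Γ]
    (m : ℕ) (E Fb : P → Prop) : Prop :=
  ∃ ρ : P → ℕ, (∀ i, 1 ≤ i → i ≤ m → ∃ e, Fb e ∧ ρ e = i) ∧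
    (∀ e, Fb e → 1 ≤ ρ e ∧ ρ e ≤ m) ∧ (∀ e e', Fb e → Fb e' → ρ e = ρ e' → e = e') ∧
    (∀ (θ : Fin 5 → P) (x : ℕ), (∀ i, Fb (θ i)) → ρ (θ 0) ≤ x → ρ (θ 1) ≤ x →
      2 * x ≤ ρ (θ 2) → ρ (θ 2) ≤ 3 * x → 2 * x ≤ ρ (θ 3) → ρ (θ 3) ≤ 3 * x → 9 * x ≤ ρ (θ 4) →
      IsCone Lk dim Γ θ) ∧
    (∀ (θ : Fin 5 → P), (∀ i, Fb (θ i)) → ρ (θ 0) = 1 → ρ (θ 1) = 1 → ρ (θ 2) = 2 →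
      ρ (θ 3) = 2 → ρ (θ 4) = 3 → IsCone Lk dim Γ θ) ∧
    (∀ (θ : Fin 5 → P), Fb (θ 0) → Fb (θ 1) → Fb (θ 2) → ρ (θ 0) = 1 → ρ (θ 1) = 1 → ρ (θ 2) = 2 →
      E (θ 3) → ¬ Fb (θ 3) → IsCone Lk dim Γ θ)

theorem RPart.good {P : Type*} [Lattice P] {Lk : P → Prop} {dim : P → ℕ} {Z Y : P} {ρ : P → ℕ}
    {m : ℕ} (h : RPart Lk dim Z Y ρ m) (Γ : Type*) [Group Γ] (E : P → Prop)
    (hE : ∀ e, E e → Lk e) (hE' : ∀ e e', E e → E e' → Cmp e e')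
    (hsurj : ∀ i, 1 ≤ i → i ≤ m → ∃ e, (E e ∧ Mv Z Y ρ m e) ∧ ρ e = i) :
    PartGood Lk dim Γ m E (fun e => E e ∧ Mv Z Y ρ m e) := by
  refine ⟨ρ, hsurj, fun e he => he.2.2.2, ?_, ?_, ?_, ?_⟩
  · rintro e e' ⟨h1, h2⟩ ⟨h3, h4⟩ he
    rcases hE' e e' h1 h3 with h' | h'
    · exact h.eq e e' h2.1 h' h4.2.1 he
    · exact (h.eq e' e h4.1 h' h2.2.1 he.symm).symm
  · intro θ x hθ r0 r1 r2 r2' r3 r3' r4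
    exact coneI_large Γ h x (hθ 0).2 (hθ 1).2 (hθ 2).2 (hθ 3).2 (hθ 4).2 r0 r1 r2 r2' r3 r3' r4
  · intro θ hθ r0 r1 r2 r3 r4
    exact coneI_small Γ h (hθ 0).2 (hθ 1).2 (hθ 2).2 (hθ 3).2 (hθ 4).2 r0 r1 r2 r3 r4
  · intro θ h0 h1 h2 r0 r1 r2 h3 h3'
    exact coneIb Γ h h0.2 h1.2 h2.2 (by omega) (hE _ h3) (fun h' => h3' ⟨h3, h'⟩)

theorem PartGood.of_dual {P : Type*} [PartialOrder P] {Lk : P → Prop} {dim : P → ℕ} {Γ : Type*}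
    [Group Γ] {m : ℕ} {E Fb : P → Prop}
    (h : PartGood (P := Pᵒᵈ) (fun x => Lk (OrderDual.ofDual x)) (fun x => dim (OrderDual.ofDual x))
      Γ m (fun x => E (OrderDual.ofDual x)) (fun x => Fb (OrderDual.ofDual x))) :
    PartGood Lk dim Γ m E Fb := by
  obtain ⟨ρ, h1, h2, h3, h4, h5, h6⟩ := h
  refine ⟨fun x => ρ (OrderDual.toDual x), h1, h2, h3, ?_, ?_, ?_⟩
  · intro θ x hθ r0 r1 r2 r2' r3 r3' r4
    exact IsCone.of_dual (h4 (fun i => OrderDual.toDual (θ i)) x hθ r0 r1 r2 r2' r3 r3' r4)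
  · intro θ hθ r0 r1 r2 r3 r4
    exact IsCone.of_dual (h5 (fun i => OrderDual.toDual (θ i)) hθ r0 r1 r2 r3 r4)
  · intro θ h0 h1 h2 r0 r1 r2 h3 h3'
    exact IsCone.of_dual (h6 (fun i => OrderDual.toDual (θ i)) h0 h1 h2 r0 r1 r2 h3 h3')

end PartGood


set_option linter.unusedSectionVars false
section Parts

variable {F : Type} [Field F] [Fintype F] {n : ℕ}

theorem dm_mono {x y : Submodule F (Fin n → F)} (h : x ≤ y) : dm x ≤ dm y :=
  Submodule.finrank_mono h

theorem le_of_cmp {x y : Submodule F (Fin n → F)} (h : Cmp x y) (hd : dm x ≤ dm y) : x ≤ y := by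
  rcases h with h | h
  · exact h
  · exact (cmp_eq_of_dm_eq (Or.inr h) (le_antisymm hd (dm_mono h))).le

theorem dm_sup_inf (x y : Submodule F (Fin n → F)) : dm (x ⊔ y) + dm (x ⊓ y) = dm x + dm y :=
  Submodule.finrank_sup_add_finrank_inf_eq x y

/-- Number of elements of `s` of smaller dimension. -/
noncomputable def key (s : Finset (Submodule F (Fin n → F))) (x : Submodule F (Fin n → F)) : ℕ :=
  (s.filter fun W => dm W < dm x).card

theorem key_lt {s : Finset (Submodule F (Fin n → F))} {x y W : Submodule F (Fin n → F)}
    (hW : W ∈ s) (h1 : dm x ≤ dm W) (h2 : dm W < dm y) : key s x < key s y := by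
  unfold key
  apply Finset.card_lt_card
  rw [Finset.ssubset_iff_of_subset]
  · exact ⟨W, by simp [hW, h2], by simp [h1]⟩
  · intro V hV
    rw [Finset.mem_filter] at hV ⊢
    exact ⟨hV.1, by omega⟩

theorem link_dm_ne {S : Finset ℕ} {s : Finset (Submodule F (Fin n → F))}
    {x W : Submodule F (Fin n → F)} (hx : LinkV S s x) (hW : W ∈ s) : dm x ≠ dm W := by
  intro h
  have := cmp_eq_of_dm_eq (hx.2.2 W hW) h
  exact hx.1 (this ▸ hW)

theorem key_cmp_aux {S : Finset ℕ} {s : Finset (Submodule F (Fin n → F))}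
    {x y : Submodule F (Fin n → F)} (hx : LinkV S s x) (hy : LinkV S s y)
    (h : key s x < key s y) : Cmp x y := by
  have : ∃ W ∈ s, dm W < dm y ∧ ¬ dm W < dm x := by
    by_contra hne
    push Not at hne
    refine absurd h (not_lt.2 (Finset.card_le_card ?_))
    intro W hW
    rw [Finset.mem_filter] at hW ⊢
    exact ⟨hW.1, hne W hW.1 hW.2⟩
  obtain ⟨W, hW, h1, h2⟩ := this
  exact Or.inl ((le_of_cmp (hx.2.2 W hW) (by omega)).trans
    (le_of_cmp (hy.2.2 W hW).symm (by omega)))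

theorem key_cmp {S : Finset ℕ} {s : Finset (Submodule F (Fin n → F))}
    (x y : Submodule F (Fin n → F)) (hx : LinkV S s x) (hy : LinkV S s y)
    (h : key s x ≠ key s y) : Cmp x y := by
  rcases lt_or_gt_of_ne h with h | h
  · exact key_cmp_aux hx hy h
  · exact (key_cmp_aux hy hx h).symm

theorem rpart_primal {l t : ℕ} {s : Finset (Submodule F (Fin n → F))}
    (hsS : ∀ W ∈ s, dm W ∈ Finset.Icc l t)
    {Z Y : Submodule F (Fin n → F)} {m : ℕ} (hZ : Z ∈ s) (hZY : Z ≤ Y) (hm : dm Z + m ≤ dm Y)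
    (hdich : ∀ W ∈ s, W ≤ Z ∨ (Y ≤ W ∧ dm Z + m < dm W)) (hmt : dm Z + m ≤ t)
    (hY : (Y ∈ s ∧ dm Y = dm Z + m + 1) ∨ (Y = ⊤ ∧ dm Z + m = t)) :
    RPart (LinkV (Finset.Icc l t) s) dm Z Y (fun x => dm x - dm Z) m where
  zero := by simp
  ZY := hZY
  top := by omega
  interp := by
    intro x y i h1 h2 h3 h4 h5
    have d1 := dm_mono h1
    have d2 := dm_mono h2
    obtain ⟨w, hw1, hw2, hw3⟩ := exists_subspace_between x y h2 (i + dm Z)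
      (by change dm x ≤ _; omega) (by change _ ≤ dm y; omega)
    refine ⟨w, hw1, hw2, ?_⟩
    change dm w = _ at hw3
    omega
  sub := by
    intro c x y h1 h2 h3 h4 h5
    have d1 := dm_mono h1
    have d2 := dm_mono (le_inf h2 h3)
    have d3 := dm_sup_inf x y
    have d4 := dm_mono h2
    have d5 := dm_mono h3
    have d6 := dm_mono (le_sup_left : x ≤ x ⊔ y)
    try dsimp only
    omega
  mono := by
    intro x y h1 h2 h3
    have d2 := dm_mono h2
    try dsimp only
    omega
  eq := by
    intro x y h1 h2 h3 h4
    have d1 := dm_mono h1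
    have d2 := dm_mono h2
    try dsimp only at h4
    exact cmp_eq_of_dm_eq (Or.inl h2) (by omega)
  dimEq := by
    intro x y h1 h2 h3 h4 h5
    have d1 := dm_mono h1
    have d2 := dm_mono h3
    try dsimp only at h5
    omega
  lk := by
    intro x h1 h2 h3 h4
    have hZS := Finset.mem_Icc.1 (hsS Z hZ)
    refine ⟨fun hx => ?_, ?_, fun W hW => ?_⟩
    · rcases hdich x hx with h | ⟨-, h⟩
      · have := dm_mono h
        omega
      · omega
    · change dm x ∈ _
      rw [Finset.mem_Icc]
      omega
    · rcases hdich W hW with h | ⟨h, -⟩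
      · exact Or.inr (h.trans h1)
      · exact Or.inl (h2.trans h)
  other := by
    intro x hx hnot y h1 h2 h3 h4
    rcases hx.2.2 Z hZ with h | h
    · exact Or.inl (h.trans h1)
    · have d1 := dm_mono h
      have d2 := link_dm_ne hx hZ
      rcases hY with ⟨hYs, hYd⟩ | ⟨rfl, hYt⟩
      · rcases hx.2.2 Y hYs with h' | h'
        · exfalso
          have d3 := dm_mono h'
          have d4 := link_dm_ne hx hYs
          exact hnot ⟨h, h', by omega, by omega⟩
        · exact Or.inr (h2.trans h')
      · exfalso
        have d5 : dm x ∈ _ := hx.2.1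
        rw [Finset.mem_Icc] at d5
        exact hnot ⟨h, le_top, by omega, by omega⟩

theorem rpart_dual {l t : ℕ} {s : Finset (Submodule F (Fin n → F))}
    (hsS : ∀ W ∈ s, dm W ∈ Finset.Icc l t)
    {Z : Submodule F (Fin n → F)} (hZ : Z ∈ s) (hmin : ∀ W ∈ s, Z ≤ W) :
    RPart (P := (Submodule F (Fin n → F))ᵒᵈ)
      (fun x => LinkV (Finset.Icc l t) s (OrderDual.ofDual x)) (fun x => dm (OrderDual.ofDual x))
      (OrderDual.toDual Z) (OrderDual.toDual ⊥) (fun x => dm Z - dm (OrderDual.ofDual x))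
      (dm Z - l) where
  zero := by simp
  ZY := OrderDual.toDual_le_toDual.2 bot_le
  top := by
    have : dm (⊥ : Submodule F (Fin n → F)) = 0 := finrank_bot F _
    simp only [OrderDual.ofDual_toDual, this]
    omega
  interp := by
    intro x y i h1 h2 h3 h4 h5
    have h1' : OrderDual.ofDual x ≤ Z := h1
    have h2' : OrderDual.ofDual y ≤ OrderDual.ofDual x := h2
    have d1 := dm_mono h1'
    have d2 := dm_mono h2'
    obtain ⟨w, hw1, hw2, hw3⟩ := exists_subspace_between _ _ h2' (dm Z - i)
      (by change dm _ ≤ _; omega) (by change _ ≤ dm _; omega)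
    refine ⟨OrderDual.toDual w, hw2, hw1, ?_⟩
    change dm w = _ at hw3
    change dm Z - dm w = i
    omega
  sub := by
    intro c x y h1 h2 h3 h4 h5
    have h1' : OrderDual.ofDual c ≤ Z := h1
    have h2' : OrderDual.ofDual x ≤ OrderDual.ofDual c := h2
    have h3' : OrderDual.ofDual y ≤ OrderDual.ofDual c := h3
    have d1 := dm_mono h1'
    have d2 := dm_mono (sup_le h2' h3')
    have d3 := dm_sup_inf (OrderDual.ofDual x) (OrderDual.ofDual y)
    have d4 := dm_mono h2'
    have d5 := dm_mono h3'
    have d6 := dm_mono (inf_le_left : OrderDual.ofDual x ⊓ OrderDual.ofDual y ≤ OrderDual.ofDual x)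
    change dm Z - dm (OrderDual.ofDual x ⊓ OrderDual.ofDual y) + (dm Z - dm (OrderDual.ofDual c)) ≤
      (dm Z - dm (OrderDual.ofDual x)) + (dm Z - dm (OrderDual.ofDual y))
    omega
  mono := by
    intro x y h1 h2 h3
    have h2' : OrderDual.ofDual y ≤ OrderDual.ofDual x := h2
    have d2 := dm_mono h2'
    try dsimp only
    omega
  eq := by
    intro x y h1 h2 h3 h4
    have h1' : OrderDual.ofDual x ≤ Z := h1
    have h2' : OrderDual.ofDual y ≤ OrderDual.ofDual x := h2
    have d1 := dm_mono h1'
    have d2 := dm_mono h2'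
    try dsimp only at h4
    exact cmp_eq_of_dm_eq (x := OrderDual.ofDual x) (y := OrderDual.ofDual y) (Or.inr h2')
      (by omega)
  dimEq := by
    intro x y h1 h2 h3 h4 h5
    have h1' : OrderDual.ofDual x ≤ Z := h1
    have h3' : OrderDual.ofDual y ≤ Z := h3
    have d1 := dm_mono h1'
    have d2 := dm_mono h3'
    try dsimp only at h5 ⊢
    omega
  lk := by
    intro x h1 h2 h3 h4
    have h1' : OrderDual.ofDual x ≤ Z := h1
    have d1 := dm_mono h1'
    have hZS := Finset.mem_Icc.1 (hsS Z hZ)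
    refine ⟨fun hx => ?_, ?_, fun W hW => ?_⟩
    · have := dm_mono (hmin _ hx)
      omega
    · change dm (OrderDual.ofDual x) ∈ _
      rw [Finset.mem_Icc]
      omega
    · exact Or.inl (h1'.trans (hmin W hW))
  other := by
    intro x hx hnot y h1 h2 h3 h4
    have h1' : OrderDual.ofDual y ≤ Z := h1
    rcases hx.2.2 Z hZ with h | h
    · exfalso
      have d1 := dm_mono h
      have d2 := link_dm_ne hx hZ
      have d5 : dm (OrderDual.ofDual x) ∈ _ := hx.2.1
      rw [Finset.mem_Icc] at d5
      exact hnot ⟨h, OrderDual.le_toDual.2 bot_le, by omega, by omega⟩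
    · exact Or.inl (h1'.trans h)

theorem T0_facts {S : Finset ℕ} {s T0 : Finset (Submodule F (Fin n → F))}
    (hT0 : T0 ∈ maxFacesAbove F n S s) :
    (∀ x ∈ T0, ∀ y ∈ T0, Cmp x y) ∧ (∀ x ∈ T0, dm x ∈ S) ∧ (∀ i ∈ S, ∃ W ∈ T0, dm W = i) ∧
      s ⊆ T0 := by
  simp only [maxFacesAbove, Finset.mem_filter, Finset.mem_univ, true_and] at hT0
  exact ⟨fun x hx y hy => hT0.1.1.1.total hx hy, hT0.1.1.2, hT0.1.2, hT0.2⟩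

theorem part_primal {l t : ℕ} {s T0 : Finset (Submodule F (Fin n → F))}
    (hT0 : T0 ∈ maxFacesAbove F n (Finset.Icc l t) s) (Γ : Type) [Group Γ]
    {Z Y e0 : Submodule F (Fin n → F)} {m : ℕ} (hZ : Z ∈ s) (hZY : Z ≤ Y) (hm : dm Z + m ≤ dm Y)
    (hdich : ∀ W ∈ s, W ≤ Z ∨ (Y ≤ W ∧ dm Z + m < dm W)) (hmt : dm Z + m ≤ t)
    (hY : (Y ∈ s ∧ dm Y = dm Z + m + 1) ∨ (Y = ⊤ ∧ dm Z + m = t))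
    (h0 : e0 ∈ T0 \ s) (h0Z : Z ≤ e0) (h0Y : e0 ≤ Y) :
    PartGood (LinkV (Finset.Icc l t) s) dm Γ m (fun e => e ∈ T0 \ s)
      (fun e => e ∈ T0 \ s ∧ key s e = key s e0) := by
  obtain ⟨f1, f2, f3, f4⟩ := T0_facts hT0
  have hR := rpart_primal (l := l) (t := t) (fun W hW => f2 W (f4 hW)) hZ hZY hm hdich hmt hY
  have hZS := Finset.mem_Icc.1 (f2 Z (f4 hZ))
  have hiff : ∀ e ∈ T0 \ s, (Mv Z Y (fun x => dm x - dm Z) m e ↔ dm Z < dm e ∧ dm e ≤ dm Z + m) := by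
    intro e he
    have he' := (Finset.mem_sdiff.1 he).1
    constructor
    · rintro ⟨h1, h2, h3, h4⟩
      try dsimp only at h3 h4
      omega
    · rintro ⟨h1, h2⟩
      refine ⟨le_of_cmp (f1 Z (f4 hZ) e he') h1.le, ?_, ?_, ?_⟩
      · rcases hY with ⟨hYs, hYd⟩ | ⟨rfl, -⟩
        · exact le_of_cmp (f1 e he' Y (f4 hYs)) (by omega)
        · exact le_top
      · dsimp only; omega
      · dsimp only; omega
  have hd0 : dm Z < dm e0 ∧ dm e0 ≤ dm Z + m := by
    have d1 := dm_mono h0Z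
    have d2 := dm_mono h0Y
    have L0 := mem_link hT0 h0
    have d3 := link_dm_ne L0 hZ
    refine ⟨by omega, ?_⟩
    rcases hY with ⟨hYs, hYd⟩ | ⟨-, ht⟩
    · have d4 := link_dm_ne L0 hYs
      omega
    · have := Finset.mem_Icc.1 (f2 e0 (Finset.mem_sdiff.1 h0).1)
      omega
  have hkey : ∀ e ∈ T0 \ s, (key s e = key s e0 ↔ Mv Z Y (fun x => dm x - dm Z) m e) := by
    intro e he
    rw [hiff e he]
    have Le := mem_link hT0 he
    constructor
    · intro hk
      by_contra hne
      have d3 := link_dm_ne Le hZ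
      by_cases hlt : dm e < dm Z
      · have := key_lt hZ hlt.le hd0.1
        omega
      · rcases hY with ⟨hYs, hYd⟩ | ⟨-, ht⟩
        · have d4 := link_dm_ne Le hYs
          have := key_lt (x := e0) (y := e) hYs (by omega) (by omega)
          omega
        · have := Finset.mem_Icc.1 (f2 e (Finset.mem_sdiff.1 he).1)
          omega
    · intro hd
      unfold key
      congr 1
      apply Finset.filter_congr
      intro W hW
      rcases hdich W hW with h | ⟨-, h⟩
      · have := dm_mono h
        omega
      · omega
  have hgood := hR.good Γ (fun e => e ∈ T0 \ s) (fun e he => mem_link hT0 he)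
    (fun e e' he he' => mem_cmp hT0 he he') (by
      intro i hi1 hi2
      obtain ⟨e, he, hd⟩ := f3 (dm Z + i) (Finset.mem_Icc.2 ⟨by omega, by omega⟩)
      have hes : e ∉ s := by
        intro hes
        rcases hdich e hes with h | ⟨-, h⟩
        · have := dm_mono h
          omega
        · omega
      have heE := Finset.mem_sdiff.2 ⟨he, hes⟩
      refine ⟨e, ⟨heE, (hiff e heE).2 ⟨by omega, by omega⟩⟩, ?_⟩
      try dsimp only
      omega)
  have heq : (fun e => e ∈ T0 \ s ∧ key s e = key s e0) =
      (fun e => e ∈ T0 \ s ∧ Mv Z Y (fun x => dm x - dm Z) m e) := by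
    funext e
    exact propext (and_congr_right fun he => hkey e he)
  rw [heq]
  exact hgood

theorem part_dual {l t : ℕ} {s T0 : Finset (Submodule F (Fin n → F))}
    (hT0 : T0 ∈ maxFacesAbove F n (Finset.Icc l t) s) (Γ : Type) [Group Γ]
    {Z e0 : Submodule F (Fin n → F)} (hZ : Z ∈ s) (hmin : ∀ W ∈ s, Z ≤ W)
    (h0 : e0 ∈ T0 \ s) (h0Z : e0 ≤ Z) :
    PartGood (LinkV (Finset.Icc l t) s) dm Γ (dm Z - l) (fun e => e ∈ T0 \ s)
      (fun e => e ∈ T0 \ s ∧ key s e = key s e0) := by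
  obtain ⟨f1, f2, f3, f4⟩ := T0_facts hT0
  have hR := rpart_dual (l := l) (t := t) (fun W hW => f2 W (f4 hW)) hZ hmin
  have hZS := Finset.mem_Icc.1 (f2 Z (f4 hZ))
  have hd0 : dm e0 < dm Z := by
    have d1 := dm_mono h0Z
    have d3 := link_dm_ne (mem_link hT0 h0) hZ
    omega
  have hiff : ∀ e ∈ T0 \ s, (Mv (P := (Submodule F (Fin n → F))ᵒᵈ) (OrderDual.toDual Z)
      (OrderDual.toDual ⊥) (fun x => dm Z - dm (OrderDual.ofDual x)) (dm Z - l)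
      (OrderDual.toDual e) ↔ dm e < dm Z) := by
    intro e he
    have he' := (Finset.mem_sdiff.1 he).1
    have heS := Finset.mem_Icc.1 (f2 e he')
    constructor
    · rintro ⟨h1, h2, h3, h4⟩
      change 1 ≤ dm Z - dm e at h3
      omega
    · intro h1
      refine ⟨le_of_cmp (f1 e he' Z (f4 hZ)) h1.le, OrderDual.toDual_le_toDual.2 bot_le, ?_, ?_⟩
      · change 1 ≤ dm Z - dm e
        omega
      · change dm Z - dm e ≤ _
        omega
  have hkey : ∀ e ∈ T0 \ s, (key s e = key s e0 ↔ dm e < dm Z) := by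
    intro e he
    have Le := mem_link hT0 he
    constructor
    · intro hk
      by_contra hne
      have d3 := link_dm_ne Le hZ
      have := key_lt (x := e0) (y := e) hZ (by omega) (by omega)
      omega
    · intro hd
      unfold key
      congr 1
      apply Finset.filter_congr
      intro W hW
      have := dm_mono (hmin W hW)
      omega
  have hgood := hR.good Γ (fun e => OrderDual.ofDual e ∈ T0 \ s) (fun e he => mem_link hT0 he)
    (fun e e' he he' => (mem_cmp hT0 he he').symm) (by
      intro i hi1 hi2
      obtain ⟨e, he, hd⟩ := f3 (dm Z - i) (Finset.mem_Icc.2 ⟨by omega, by omega⟩)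
      have hes : e ∉ s := by
        intro hes
        have := dm_mono (hmin e hes)
        omega
      have heE := Finset.mem_sdiff.2 ⟨he, hes⟩
      refine ⟨OrderDual.toDual e, ⟨heE, (hiff e heE).2 (by omega)⟩, ?_⟩
      change dm Z - dm e = i
      omega)
  have heq : (fun e : (Submodule F (Fin n → F))ᵒᵈ => OrderDual.ofDual e ∈ T0 \ s ∧
      key s (OrderDual.ofDual e) = key s e0) =
      (fun e => OrderDual.ofDual e ∈ T0 \ s ∧ Mv (P := (Submodule F (Fin n → F))ᵒᵈ)
        (OrderDual.toDual Z)
        (OrderDual.toDual ⊥) (fun x => dm Z - dm (OrderDual.ofDual x)) (dm Z - l) e) := by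
    funext e
    exact propext (and_congr_right fun he => (hkey _ he).trans (hiff _ he).symm)
  apply PartGood.of_dual
  rw [heq]
  exact hgood

theorem part_exists {l t : ℕ} (htn : t ≤ n) {s T0 : Finset (Submodule F (Fin n → F))}
    (hT0 : T0 ∈ maxFacesAbove F n (Finset.Icc l t) s) (hs : s.Nonempty) (Γ : Type) [Group Γ]
    {e0 : Submodule F (Fin n → F)} (h0 : e0 ∈ T0 \ s) :
    ∃ m, PartGood (LinkV (Finset.Icc l t) s) dm Γ m (fun e => e ∈ T0 \ s)
      (fun e => e ∈ T0 \ s ∧ key s e = key s e0) := by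
  obtain ⟨f1, f2, f3, f4⟩ := T0_facts hT0
  have h0' := (Finset.mem_sdiff.1 h0).1
  have L0 := mem_link hT0 h0
  have h0S := Finset.mem_Icc.1 (f2 e0 h0')
  by_cases hA : (s.filter fun W => dm W < dm e0).Nonempty
  · obtain ⟨Z, hZ, hZmax⟩ := Finset.exists_max_image _ dm hA
    rw [Finset.mem_filter] at hZ
    have hZe : Z ≤ e0 := le_of_cmp (f1 Z (f4 hZ.1) e0 h0') hZ.2.le
    have hbelow : ∀ W ∈ s, dm W < dm e0 → W ≤ Z := fun W hW hd =>
      le_of_cmp (f1 W (f4 hW) Z (f4 hZ.1)) (hZmax W (Finset.mem_filter.2 ⟨hW, hd⟩))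
    by_cases hB : (s.filter fun W => dm e0 < dm W).Nonempty
    · obtain ⟨Y, hY, hYmin⟩ := Finset.exists_min_image _ dm hB
      rw [Finset.mem_filter] at hY
      have hYe : e0 ≤ Y := le_of_cmp (f1 e0 h0' Y (f4 hY.1)) hY.2.le
      have hYS := Finset.mem_Icc.1 (f2 Y (f4 hY.1))
      refine ⟨dm Y - dm Z - 1, part_primal hT0 Γ hZ.1 (hZe.trans hYe) (by omega) ?_ (by omega)
        (Or.inl ⟨hY.1, by omega⟩) h0 hZe hYe⟩
      intro W hW
      by_cases hd : dm W < dm e0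
      · exact Or.inl (hbelow W hW hd)
      · have := link_dm_ne L0 hW
        have h2 := hYmin W (Finset.mem_filter.2 ⟨hW, by omega⟩)
        exact Or.inr ⟨le_of_cmp (f1 Y (f4 hY.1) W (f4 hW)) h2, by omega⟩
    · have htop : dm (⊤ : Submodule F (Fin n → F)) = n := by
        unfold dm
        rw [finrank_top, Module.finrank_fin_fun]
      refine ⟨t - dm Z, part_primal hT0 Γ hZ.1 le_top (by omega) ?_ (by omega)
        (Or.inr ⟨rfl, by omega⟩) h0 hZe le_top⟩
      intro W hW
      by_cases hd : dm W < dm e0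
      · exact Or.inl (hbelow W hW hd)
      · have := link_dm_ne L0 hW
        exact absurd ⟨W, Finset.mem_filter.2 ⟨hW, by omega⟩⟩ hB
  · obtain ⟨Z, hZ, hZmin⟩ := Finset.exists_min_image s dm hs
    refine ⟨dm Z - l, part_dual hT0 Γ hZ
      (fun W hW => le_of_cmp (f1 Z (f4 hZ) W (f4 hW)) (hZmin W hW)) h0 ?_⟩
    refine le_of_cmp (f1 e0 h0' Z (f4 hZ)) ?_
    by_contra hne
    exact hA ⟨Z, Finset.mem_filter.2 ⟨hZ, by omega⟩⟩

end Parts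


section Choice

theorem bad_count {P : Type*} (E : Finset P) (key : P → ℕ) (m : ℕ)
    (hm : ∀ e0 ∈ E, (E.filter fun e => key e = key e0).card ≤ m) (i j : Fin 5) (hij : i ≠ j) :
    ((Fintype.piFinset fun _ : Fin 5 => E).filter fun θ => key (θ i) = key (θ j)).card ≤
      m * E.card ^ 4 := by
  have h1 := Finset.card_le_mul_card_image (f := fun θ : Fin 5 → P => Fin.removeNth j θ)
    ((Fintype.piFinset fun _ : Fin 5 => E).filter fun θ => key (θ i) = key (θ j)) m ?_
  · refine h1.trans (Nat.mul_le_mul_left _ ?_)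
    have : E.card ^ 4 = (Fintype.piFinset fun _ : Fin 4 => E).card := by
      simp [Fintype.card_piFinset]
    rw [this]
    apply Finset.card_le_card
    intro p hp
    obtain ⟨θ, hθ, rfl⟩ := Finset.mem_image.1 hp
    rw [Finset.mem_filter, Fintype.mem_piFinset] at hθ
    rw [Fintype.mem_piFinset]
    intro k
    exact hθ.1 _
  · intro p hp
    obtain ⟨θ, hθ, rfl⟩ := Finset.mem_image.1 hp
    rw [Finset.mem_filter, Fintype.mem_piFinset] at hθ
    refine le_trans ?_ (hm (θ i) (hθ.1 i))
    apply Finset.card_le_card_of_injOn (fun η => η j)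
    · intro η hη
      simp only [Finset.coe_filter, Finset.mem_filter, Set.mem_ofPred_eq,
        Fintype.mem_piFinset] at hη ⊢
      refine ⟨hη.1.1 j, ?_⟩
      rw [← hη.1.2]
      obtain ⟨k, hk⟩ := Fin.exists_succAbove_eq hij
      have := congrFun hη.2 k
      simp only [Fin.removeNth, hk] at this
      rw [this]
    · intro η hη η' hη' he
      simp only [Finset.coe_filter, Finset.mem_filter, Set.mem_ofPred_eq] at hη hη'
      have h2 := hη.2.trans hη'.2.symm
      rw [← Fin.insertNth_self_removeNth j η, ← Fin.insertNth_self_removeNth j η', h2]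
      simp only at he
      rw [he]

theorem rank_count {P : Type*} (Fib : Finset P) (ρ : P → ℕ) (m a b : ℕ)
    (hs : ∀ i, 1 ≤ i → i ≤ m → ∃ e, e ∈ Fib ∧ ρ e = i) (ha : 1 ≤ a) (hb : b ≤ m) :
    b + 1 - a ≤ (Fib.filter fun e => a ≤ ρ e ∧ ρ e ≤ b).card := by
  rw [← Nat.card_Icc]
  refine le_trans (Finset.card_le_card ?_) (Finset.card_image_le (f := ρ))
  intro i hi
  rw [Finset.mem_Icc] at hi
  obtain ⟨e, he, rfl⟩ := hs i (by omega) (by omega)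
  exact Finset.mem_image_of_mem _ (Finset.mem_filter.2 ⟨he, hi⟩)

theorem choose_cones {P : Type*} [PartialOrder P] (Lk : P → Prop) (dim : P → ℕ) (Γ : Type*)
    [Group Γ] (E : Finset P) (key : P → ℕ) (hr : 3 ≤ E.card) (hL : ∀ e ∈ E, Lk e)
    (hkey : ∀ x y, Lk x → Lk y → key x ≠ key y → Cmp x y)
    (hpart : ∀ e0 ∈ E, ∃ m, PartGood Lk dim Γ m (fun e => e ∈ E)
      (fun e => e ∈ E ∧ key e = key e0)) :
    ∃ Θ : Finset (Fin 5 → P), Θ.Nonempty ∧ (∀ θ ∈ Θ, ∀ i, θ i ∈ E) ∧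
      (∀ θ ∈ Θ, IsCone Lk dim Γ θ) ∧ (E.card : ℝ) ^ 5 ≤ 100 ^ 5 * Θ.card := by
  have hne : E.Nonempty := Finset.card_pos.1 (by omega)
  obtain ⟨e0, he0, hmax⟩ := Finset.exists_max_image E
    (fun e0 => (E.filter fun e => key e = key e0).card) hne
  obtain ⟨m, ρ, hs, hle, hinj, hlarge, hsmall, hIb⟩ := hpart e0 he0
  have hmc : (E.filter fun e => key e = key e0).card = m := by
    have : (E.filter fun e => key e = key e0).image ρ = Finset.Icc 1 m := by
      ext i
      simp only [Finset.mem_image, Finset.mem_filter, Finset.mem_Icc]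
      constructor
      · rintro ⟨e, he, rfl⟩
        exact hle e he
      · rintro ⟨h1, h2⟩
        exact hs i h1 h2
    have hI : (Finset.Icc 1 m).card = m := by simp
    rw [← this, Finset.card_image_of_injOn] at hI
    · exact hI
    intro x hx y hy h
    simp only [Finset.coe_filter, Set.mem_ofPred_eq] at hx hy
    exact hinj x y hx hy h
  simp only [hmc] at hmax
  have hsingle : ∀ θ : Fin 5 → P, (∀ i, θ i ∈ E) → IsCone Lk dim Γ θ → E.card ≤ 45 →
      ∃ Θ : Finset (Fin 5 → P), Θ.Nonempty ∧ (∀ θ ∈ Θ, ∀ i, θ i ∈ E) ∧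
      (∀ θ ∈ Θ, IsCone Lk dim Γ θ) ∧ (E.card : ℝ) ^ 5 ≤ 100 ^ 5 * Θ.card := by
    intro θ h1 h2 h3
    refine ⟨{θ}, Finset.singleton_nonempty _, by simpa using h1, by simpa using h2, ?_⟩
    rw [Finset.card_singleton, Nat.cast_one, mul_one]
    have : (E.card : ℝ) ≤ 100 := by exact_mod_cast h3.trans (by norm_num)
    gcongr
  have hm1 : 1 ≤ m := by
    rw [← hmc]
    exact Finset.card_pos.2 ⟨e0, Finset.mem_filter.2 ⟨he0, rfl⟩⟩
  by_cases h5 : 5 * m < E.card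
  · -- many parts
    set A := Fintype.piFinset fun _ : Fin 5 => E with hA
    set Θ := A.filter fun θ => key (θ 0) ≠ key (θ 1) ∧ key (θ 1) ≠ key (θ 2) ∧
      key (θ 0) ≠ key (θ 2) with hΘ
    have c01 := bad_count E key m hmax 0 1 (by decide)
    have c12 := bad_count E key m hmax 1 2 (by decide)
    have c02 := bad_count E key m hmax 0 2 (by decide)
    rw [← hA] at c01 c12 c02
    have hAc : A.card = E.card ^ 5 := by simp [hA, Fintype.card_piFinset]
    have hsub : A ⊆ Θ ∪ ((A.filter fun θ => key (θ 0) = key (θ 1)) ∪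
        ((A.filter fun θ => key (θ 1) = key (θ 2)) ∪
        (A.filter fun θ => key (θ 0) = key (θ 2)))) := by
      intro θ hθ
      simp only [hΘ, Finset.mem_union, Finset.mem_filter, hθ, true_and]
      tauto
    have hc := Finset.card_le_card hsub
    have u1 := Finset.card_union_le Θ ((A.filter fun θ => key (θ 0) = key (θ 1)) ∪
        ((A.filter fun θ => key (θ 1) = key (θ 2)) ∪
        (A.filter fun θ => key (θ 0) = key (θ 2))))
    have u2 := Finset.card_union_le (A.filter fun θ => key (θ 0) = key (θ 1))
        ((A.filter fun θ => key (θ 1) = key (θ 2)) ∪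
        (A.filter fun θ => key (θ 0) = key (θ 2)))
    have u3 := Finset.card_union_le (A.filter fun θ => key (θ 1) = key (θ 2))
        (A.filter fun θ => key (θ 0) = key (θ 2))
    have hb : 5 * (m * E.card ^ 4) ≤ E.card ^ 5 := by
      calc 5 * (m * E.card ^ 4) = (5 * m) * E.card ^ 4 := by ring
        _ ≤ E.card * E.card ^ 4 := Nat.mul_le_mul_right _ h5.le
        _ = E.card ^ 5 := by ring
    have hfin : E.card ^ 5 ≤ 5 * Θ.card := by omega
    have hpos : 0 < E.card ^ 5 := by positivity
    refine ⟨Θ, Finset.card_pos.1 (by omega), ?_, ?_, ?_⟩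
    · intro θ hθ
      exact Fintype.mem_piFinset.1 (Finset.mem_filter.1 hθ).1
    · intro θ hθ
      obtain ⟨h1, h2, h3, h4⟩ := Finset.mem_filter.1 hθ
      have h1 := Fintype.mem_piFinset.1 h1
      exact caseTwo Γ key hkey (hL _ (h1 0)) (hL _ (h1 1)) (hL _ (h1 2)) h2 h3 h4
    · have : (E.card : ℝ) ^ 5 ≤ 5 * Θ.card := by exact_mod_cast hfin
      have h0 : (0 : ℝ) ≤ Θ.card := Nat.cast_nonneg _
      nlinarith
  · by_cases h10 : 10 ≤ m
    · -- a large part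
      set Fib := E.filter fun e => key e = key e0 with hFib
      have hs' : ∀ i, 1 ≤ i → i ≤ m → ∃ e, e ∈ Fib ∧ ρ e = i := by
        intro i h1 h2
        obtain ⟨e, he, h⟩ := hs i h1 h2
        exact ⟨e, Finset.mem_filter.2 he, h⟩
      obtain ⟨x, hx⟩ : ∃ x, x = m / 10 := ⟨_, rfl⟩
      have hx1 : 1 ≤ x := by omega
      let lo : Fin 5 → ℕ := ![1, 1, 2 * x, 2 * x, 9 * x]
      let hi : Fin 5 → ℕ := ![x, x, 3 * x, 3 * x, 10 * x]
      have hcnt : ∀ i, x ≤ (Fib.filter fun e => lo i ≤ ρ e ∧ ρ e ≤ hi i).card := by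
        intro i
        have h1 : 1 ≤ lo i ∧ hi i ≤ m ∧ x ≤ hi i + 1 - lo i := by
          fin_cases i <;> simp [lo, hi] <;> omega
        exact h1.2.2.trans (rank_count Fib ρ m _ _ hs' h1.1 h1.2.1)
      set Θ := Fintype.piFinset fun i => Fib.filter fun e => lo i ≤ ρ e ∧ ρ e ≤ hi i with hΘ
      have hΘc : x ^ 5 ≤ Θ.card := by
        rw [hΘ, Fintype.card_piFinset]
        calc x ^ 5 = ∏ _i : Fin 5, x := by simp
          _ ≤ _ := Finset.prod_le_prod' fun i _ => hcnt i
      have hpos : 0 < x ^ 5 := by positivity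
      have hmem : ∀ θ ∈ Θ, ∀ i, (θ i ∈ E ∧ key (θ i) = key e0) ∧ lo i ≤ ρ (θ i) ∧
          ρ (θ i) ≤ hi i := by
        intro θ hθ i
        have := Finset.mem_filter.1 (Fintype.mem_piFinset.1 hθ i)
        exact ⟨Finset.mem_filter.1 this.1, this.2⟩
      refine ⟨Θ, Finset.card_pos.1 (by omega), fun θ hθ i => (hmem θ hθ i).1.1, ?_, ?_⟩
      · intro θ hθ
        have h := hmem θ hθ
        exact hlarge θ x (fun i => (h i).1) (h 0).2.2 (h 1).2.2 (h 2).2.1 (h 2).2.2 (h 3).2.1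
          (h 3).2.2 (h 4).2.1
      · have h1 : E.card ≤ 100 * x := by omega
        have h2 : (E.card : ℝ) ≤ 100 * x := by exact_mod_cast h1
        have h3 : (x : ℝ) ^ 5 ≤ Θ.card := by exact_mod_cast hΘc
        calc (E.card : ℝ) ^ 5 ≤ (100 * x) ^ 5 := by gcongr
          _ = 100 ^ 5 * (x : ℝ) ^ 5 := by ring
          _ ≤ _ := by gcongr
    · obtain ⟨p1, q1, r1⟩ := hs 1 le_rfl hm1
      by_cases h3 : 3 ≤ m
      · obtain ⟨p2, q2, r2⟩ := hs 2 (by omega) (by omega)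
        obtain ⟨p3, q3, r3⟩ := hs 3 (by omega) (by omega)
        have hF : ∀ i, (![p1, p1, p2, p2, p3] : Fin 5 → P) i ∈ E ∧
            key ((![p1, p1, p2, p2, p3] : Fin 5 → P) i) = key e0 := by
          intro i
          fin_cases i
          exacts [q1, q1, q2, q2, q3]
        exact hsingle ![p1, p1, p2, p2, p3] (fun i => (hF i).1)
          (hsmall _ hF r1 r1 r2 r2 r3) (by omega)
      · by_cases h2 : 2 ≤ m
        · obtain ⟨p2, q2, r2⟩ := hs 2 (by omega) (by omega)
          obtain ⟨b, hb, hb'⟩ : ∃ b ∈ E, ¬ key b = key e0 := by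
            by_contra hcon
            push Not at hcon
            rw [Finset.filter_true_of_mem hcon] at hmc
            omega
          refine hsingle ![p1, p1, p2, b, b] ?_ (hIb _ q1 q1 q2 r1 r1 r2 hb fun h => hb' h.2)
            (by omega)
          intro i
          fin_cases i
          exacts [q1.1, q1.1, q2.1, hb, hb]
        · have hinjk : ∀ a ∈ E, ∀ b ∈ E, a ≠ b → key a ≠ key b := by
            intro a ha b hb hab hk
            have h1 := hmax a ha
            have : 1 < (E.filter fun e => key e = key a).card :=
              Finset.one_lt_card.2 ⟨a, Finset.mem_filter.2 ⟨ha, rfl⟩, b,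
                Finset.mem_filter.2 ⟨hb, hk.symm⟩, hab⟩
            omega
          obtain ⟨a, b, c, ha, hb, hc, hab, hac, hbc⟩ := Finset.two_lt_card_iff.1
            (show 2 < E.card by omega)
          refine hsingle ![a, b, c, a, a] ?_ (caseTwo Γ key hkey (hL a ha) (hL b hb) (hL c hc)
            (hinjk a ha b hb hab) (hinjk b hb c hc hbc) (hinjk a ha c hc hac)) (by omega)
          intro i
          fin_cases i
          exacts [ha, hb, hc, ha, ha]

end Choice

/-- There is a universal constant `c > 0` such that for every group `Γ`,
all integers `d > k ≥ 2`, every prime power `q ≥ 25`, and every nonempty face `s` of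
`B(2d, S_k, q)` of codimension at least `3`, every `Γ`-valued 1-cochain `f` on the link of
`s` admits `g` with `c · dist(f, δg) ≤ wt(δf)`. -/
theorem stmt_9 :
    ∃ c : ℝ, 0 < c ∧
      ∀ (Γ : Type) [Group Γ], ∀ d k : ℕ, k < d → 2 ≤ k →
      ∀ q : ℕ, 25 ≤ q → IsPrimePow q →
      ∀ (F : Type) [Field F] [Fintype F], Fintype.card F = q →
      ∀ s : Finset (Submodule F (Fin (2 * d) → F)),
        IsFlagFace F (2 * d) (Finset.Icc (d - k) (d + k)) s → s.Nonempty →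
        s.card + 3 ≤ 2 * k + 1 →
        ∀ f : Submodule F (Fin (2 * d) → F) → Submodule F (Fin (2 * d) → F) → Γ,
          (∀ U V : Submodule F (Fin (2 * d) → F), U ≠ V → U ∉ s → V ∉ s →
            IsFlagFace F (2 * d) (Finset.Icc (d - k) (d + k)) (insert U (insert V s)) →
            f U V = (f V U)⁻¹) →
          ∃ g : Submodule F (Fin (2 * d) → F) → Γ,
            c * linkDist F (2 * d) (Finset.Icc (d - k) (d + k)) s Γ f g ≤
              linkWt F (2 * d) (Finset.Icc (d - k) (d + k)) s Γ f := by
  refine ⟨1 / (12 * 343 * 27 * 4 * 100 ^ 5), by norm_num, ?_⟩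
  intro Γ _ d k hkd hk q _ _ F _ _ _ s hs hne hcard f hf
  rcases (maxFacesAbove F (2 * d) (Finset.Icc (d - k) (d + k)) s).eq_empty_or_nonempty with
    hem | ⟨T0, hT0⟩
  · refine ⟨fun _ => 1, ?_⟩
    simp [linkDist, linkWt, hem]
  · obtain ⟨f1, f2, f3, f4⟩ := T0_facts hT0
    have hanti : Anti (LinkV (Finset.Icc (d - k) (d + k)) s) f := by
      intro x y hx hy hxy hc
      refine hf x y hxy hx.1 hy.1 ⟨?_, ?_⟩
      · rw [Finset.coe_insert, Finset.coe_insert]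
        refine (hs.1.insert fun b hb _ => hy.2.2 b hb).insert ?_
        rintro b (rfl | hb) _
        · exact hc
        · exact hx.2.2 b hb
      · intro W hW
        rw [Finset.mem_insert, Finset.mem_insert] at hW
        rcases hW with rfl | rfl | hW
        · exact hx.2.1
        · exact hy.2.1
        · exact hs.2 W hW
    have hTc : T0.card = 2 * k + 1 := by
      have himg : T0.image dm = Finset.Icc (d - k) (d + k) := by
        ext i
        rw [Finset.mem_image]
        constructor
        · rintro ⟨x, hx, rfl⟩
          exact f2 x hx
        · exact f3 i
      have : (T0.image dm).card = T0.card :=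
        Finset.card_image_of_injOn fun x hx y hy h => cmp_eq_of_dm_eq (f1 x hx y hy) h
      rw [← this, himg, Nat.card_Icc]
      omega
    have hr : 3 ≤ (T0 \ s).card := by
      rw [Finset.card_sdiff_of_subset f4]
      omega
    obtain ⟨Θ, hΘ, hΘE, hcone, hC⟩ := choose_cones
      (LinkV (Finset.Icc (d - k) (d + k)) s) dm Γ (T0 \ s) (key s) hr
      (fun e he => mem_link hT0 he) key_cmp
      (fun e0 he0 => part_exists (by omega) hT0 hne Γ he0)
    obtain ⟨g, hg⟩ := link_main hT0 f hanti Θ hΘ hΘE hcone hr (100 ^ 5) hC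
    refine ⟨g, ?_⟩
    rw [div_mul_eq_mul_div, one_mul, div_le_iff₀ (by norm_num)]
    linarith
end
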